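/- For every r in (1,∞) there is a constant C_r > 0 such that for every integer y ≥ 1 there is an integer N_{r,y} > 0 with: for every b with gcd(b,y) = 1 and every f ∈ ℓ^r(ℤ), ‖ sup_{N > N_{r,y}} |A_{N,y,b} f| ‖_{ℓ^r} ≤ C_r ‖f‖_{ℓ^r}; the constant C_r is independent of y and b. -/

import Mathlib

open scoped ENNReal

noncomputable section

/-- The prime-progression average `A_{N,y,b} f`. -/
def pavg (N y : ℕ) (b : ℤ) (f : ℤ → ℂ) (x : ℤ) : ℂ :=
  ((Nat.totient y : ℂ) / (N : ℂ)) *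
    ∑ n ∈ (Finset.range N).filter (fun n : ℕ => (n : ℤ) % (y : ℤ) = b % (y : ℤ)),
      ((ArithmeticFunction.vonMangoldt n : ℝ) : ℂ) * f (x - n)

/-!
The prime `n = c + y * m` of the progression is majorized by Selberg's sieve: sifting by the primes
`p ≤ R = 2 ^ k` that do not divide `y` yields a nonnegative function of `m`, the normalized square
of a truncated sum of Ramanujan sums, which at primes `n > R` is at least `(φ(y) / y) log R`. For
`n ≤ R ^ 17` this is `Λ(n) φ(y) / y` up to a factor `17`, and here the uniformity in `y` arises. The
integers that the sieve misses, namely prime powers and primes `≤ R`, are so few that their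
contributions can be summed over all scales.

The square of the sieve sum expands into Ramanujan sums `c_q` with coefficients of size
`16 ^ ω(q) / (q d(q))`, where `d` is the divisor function and `q ≤ R ^ 2` is a small power of the
length of the average. On a dyadic block `q ~ 2 ^ s`, writing `c_q` as a divisor sum bounds the
maximal function on every `ℓ^p` by Birkhoff averages along progressions, with a loss `2 ^ (ε s)`,
while the approximate orthogonality of the `c_q` and a `TT*` argument for the linearized maximal
function give a gain `2 ^ (-s / 4)` on `ℓ^2`. Interpolation makes the bounds on `ℓ^r` summable in
`s`.
-/

namespace PrimeAverage

open scoped NNReal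

open Finset MeasureTheory

/-! ### Norms, interpolation and the maximal ergodic theorem -/

section EllNorm

variable {α : Type*}

/-- The `ℓ^p` norm of a nonnegative function, as an extended nonnegative number. Finite values are
required pointwise so that truncated maximal functions stay in the same type. -/
def ellNorm (p : ℝ) (g : α → ℝ≥0) : ℝ≥0∞ := (∑' x, (g x : ℝ≥0∞) ^ p) ^ (1 / p)

theorem ellNorm_rpow {p : ℝ} (hp : 0 < p) (g : α → ℝ≥0) :
    ellNorm p g ^ p = ∑' x, (g x : ℝ≥0∞) ^ p := by
  rw [ellNorm, ← ENNReal.rpow_mul, one_div, inv_mul_cancel₀ hp.ne', ENNReal.rpow_one]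

theorem ellNorm_mono {p : ℝ} (hp : 0 < p) {g h : α → ℝ≥0} (hgh : g ≤ h) :
    ellNorm p g ≤ ellNorm p h := by
  unfold ellNorm
  gcongr with x
  exact hgh x

theorem ellNorm_le_of_tsum_rpow_le {p : ℝ} (hp : 0 < p) {A : ℝ≥0∞} {g h : α → ℝ≥0}
    (H : ∑' x, (g x : ℝ≥0∞) ^ p ≤ A * ∑' x, (h x : ℝ≥0∞) ^ p) :
    ellNorm p g ≤ A ^ (1 / p) * ellNorm p h := by
  unfold ellNorm
  rw [← ENNReal.mul_rpow_of_nonneg _ _ (by positivity)]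
  gcongr

theorem ellNorm_add_le {p : ℝ} (hp : 1 ≤ p) (g h : α → ℝ≥0) :
    ellNorm p (fun x => g x + h x) ≤ ellNorm p g + ellNorm p h := by
  let _ : MeasurableSpace α := ⊤
  have minkowski := ENNReal.lintegral_Lp_add_le (μ := Measure.count) (p := p)
    (f := fun x : α => (g x : ℝ≥0∞)) (g := fun x => (h x : ℝ≥0∞))
    measurable_from_top.aemeasurable measurable_from_top.aemeasurable hp
  simpa only [ellNorm, lintegral_count, Pi.add_apply, ← ENNReal.coe_add] using minkowski

theorem ellNorm_zero {p : ℝ} (hp : 0 < p) : ellNorm p (fun _ : α => 0) = 0 := by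
  simp [ellNorm, hp]

theorem ellNorm_sum_le {ι : Type*} {p : ℝ} (hp : 1 ≤ p) (s : Finset ι) (g : ι → α → ℝ≥0) :
    ellNorm p (fun x => ∑ i ∈ s, g i x) ≤ ∑ i ∈ s, ellNorm p (g i) := by
  classical
  induction s using Finset.induction_on with
  | empty => simp [ellNorm_zero (zero_lt_one.trans_le hp)]
  | insert i s hi ih =>
    simp only [sum_insert hi]
    exact (ellNorm_add_le hp _ _).trans (by gcongr)

theorem ellNorm_const_mul {p : ℝ} (hp : 0 < p) (c : ℝ≥0) (g : α → ℝ≥0) :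
    ellNorm p (fun x => c * g x) = c * ellNorm p g := by
  unfold ellNorm
  simp_rw [ENNReal.coe_mul, ENNReal.mul_rpow_of_nonneg _ _ hp.le]
  rw [ENNReal.tsum_mul_left, ENNReal.mul_rpow_of_nonneg _ _ (by positivity), ← ENNReal.rpow_mul,
    mul_one_div_cancel hp.ne', ENNReal.rpow_one]

theorem ellNorm_comp_equiv {β : Type*} (p : ℝ) (e : α ≃ β) (g : β → ℝ≥0) :
    ellNorm p (g ∘ e) = ellNorm p g :=
  congrArg (· ^ (1 / p)) (e.tsum_eq fun x => (g x : ℝ≥0∞) ^ p)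

theorem encard_lt_le_rpow_mul_ellNorm_rpow {p t : ℝ} (hp : 0 < p) (ht : 0 < t) (g : α → ℝ≥0) :
    ({x | t < g x}.encard : ℝ≥0∞) ≤ ENNReal.ofReal (t ^ (-p)) * ellNorm p g ^ p := by
  let _ : MeasurableSpace α := ⊤
  rw [← Measure.count_apply (MeasurableSet.of_discrete), ellNorm_rpow hp, Real.rpow_neg ht.le,
    ENNReal.ofReal_inv_of_pos (by positivity), mul_comm, ← div_eq_mul_inv, ← lintegral_count]
  refine (measure_mono fun x (hx : t < g x) => ?_).trans
    (meas_ge_le_lintegral_div (measurable_from_top (f := fun x => (g x : ℝ≥0∞) ^ p)).aemeasurable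
      (by positivity) ENNReal.ofReal_ne_top)
  rw [Set.mem_ofPred_eq, ← ENNReal.ofReal_rpow_of_nonneg ht.le hp.le, ← ENNReal.ofReal_coe_nnreal]
  gcongr

end EllNorm

section LayerCake

variable {α : Type*} [MeasurableSpace α] {μ : Measure α}

theorem setLIntegral_Ioo_rpow {s b : ℝ} (hs : 0 < s) (hb : 0 ≤ b) :
    ∫⁻ t in Set.Ioo 0 b, ENNReal.ofReal (t ^ (s - 1)) = ENNReal.ofReal (b ^ s / s) := by
  have hint : IntervalIntegrable (fun t : ℝ => t ^ (s - 1)) volume 0 b :=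
    intervalIntegral.intervalIntegrable_rpow' (by linarith)
  rw [setLIntegral_congr Ioo_ae_eq_Ioc, ← ofReal_integral_eq_lintegral_ofReal,
    ← intervalIntegral.integral_of_le hb, integral_rpow (Or.inl (by linarith)), sub_add_cancel,
    Real.zero_rpow hs.ne', sub_zero]
  · exact (intervalIntegrable_iff_integrableOn_Ioc_of_le hb).1 hint
  · filter_upwards [ae_restrict_mem measurableSet_Ioc] with t ht
    exact Real.rpow_nonneg ht.1.le _

theorem setLIntegral_Ici_rpow {s b : ℝ} (hs : s < 0) (hb : 0 < b) :
    ∫⁻ t in Set.Ici b, ENNReal.ofReal (t ^ (s - 1)) = ENNReal.ofReal (b ^ s / -s) := by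
  rw [setLIntegral_congr Ioi_ae_eq_Ici.symm, ← ofReal_integral_eq_lintegral_ofReal,
    integral_Ioi_rpow_of_lt (by linarith) hb, sub_add_cancel, neg_div, div_neg]
  · exact integrableOn_Ioi_rpow_of_lt (by linarith) hb
  · filter_upwards [ae_restrict_mem measurableSet_Ioi] with t ht
    exact Real.rpow_nonneg (hb.trans ht).le _

theorem setLIntegral_section_eq_lintegral_indicator (F : α → ℝ≥0∞) {S : Set (ℝ × α)}
    (hS : MeasurableSet S) (t : ℝ) :
    ∫⁻ x in {x | (t, x) ∈ S}, F x ∂μ = ∫⁻ x, S.indicator (fun z => F z.2) (t, x) ∂μ :=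
  (lintegral_indicator (measurable_prodMk_left hS) F).symm

theorem measurable_setLIntegral_section [SFinite μ] {F : α → ℝ≥0∞} (hF : Measurable F)
    {S : Set (ℝ × α)} (hS : MeasurableSet S) :
    Measurable fun t => ∫⁻ x in {x | (t, x) ∈ S}, F x ∂μ := by
  simp_rw [setLIntegral_section_eq_lintegral_indicator F hS]
  exact ((hF.comp measurable_snd).indicator hS).lintegral_prod_right'

theorem lintegral_mul_setLIntegral_section_swap [SFinite μ] {p r : ℝ} {F : α → ℝ≥0∞}
    (hF : Measurable F) {S : Set (ℝ × α)} (hS : MeasurableSet S) :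
    ∫⁻ t in Set.Ioi (0 : ℝ), ENNReal.ofReal (t ^ (-p)) *
        (∫⁻ x in {x | (t, x) ∈ S}, F x ∂μ) * ENNReal.ofReal (t ^ (r - 1)) =
      ∫⁻ x, (F x * ∫⁻ t in {t | (t, x) ∈ S} ∩ Set.Ioi 0, ENNReal.ofReal (t ^ (r - p - 1))) ∂μ := by
  have hind : Measurable (S.indicator fun z => F z.2) := (hF.comp measurable_snd).indicator hS
  have hleft : ∀ t ∈ Set.Ioi (0 : ℝ), ENNReal.ofReal (t ^ (-p)) *
      (∫⁻ x in {x | (t, x) ∈ S}, F x ∂μ) * ENNReal.ofReal (t ^ (r - 1)) =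
      ∫⁻ x, ENNReal.ofReal (t ^ (r - p - 1)) * S.indicator (fun z => F z.2) (t, x) ∂μ := by
    intro t (ht : 0 < t)
    rw [mul_right_comm, ← ENNReal.ofReal_mul (by positivity), ← Real.rpow_add ht,
      show -p + (r - 1) = r - p - 1 by ring, setLIntegral_section_eq_lintegral_indicator F hS]
    exact (lintegral_const_mul _ (hind.comp measurable_prodMk_left)).symm
  rw [setLIntegral_congr_fun measurableSet_Ioi hleft, lintegral_lintegral_swap
    ((by fun_prop : Measurable fun z : ℝ × α => ENNReal.ofReal (z.1 ^ (r - p - 1))).mul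
      hind).aemeasurable]
  refine lintegral_congr fun x => ?_
  have hSx : MeasurableSet {t | (t, x) ∈ S} := measurable_prodMk_right hS
  rw [← setLIntegral_indicator hSx, ← lintegral_const_mul _
    ((by fun_prop : Measurable fun t : ℝ => ENNReal.ofReal (t ^ (r - p - 1))).indicator hSx)]
  refine lintegral_congr fun t => ?_
  by_cases h : (t, x) ∈ S <;> simp [Set.indicator, h, mul_comm]

theorem rpow_mul_div_rpow_sub {p r a F : ℝ} (ha : 0 < a) (hF : 0 < F) (D : ℝ) :
    F ^ p * ((F / a) ^ (r - p) / D) = a ^ (p - r) / D * F ^ r := by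
  rw [Real.div_rpow hF.le ha.le, show r = p + (r - p) by ring, Real.rpow_add hF,
    show p - (p + (r - p)) = -(r - p) by ring, Real.rpow_neg ha.le, add_sub_cancel]
  field_simp

theorem lintegral_mul_setLIntegral_lt [SFinite μ] {p r a : ℝ} (hp : 0 < p) (hpr : p < r)
    (ha : 0 < a) {f : α → ℝ≥0} (hf : Measurable f) :
    ∫⁻ t in Set.Ioi (0 : ℝ), ENNReal.ofReal (t ^ (-p)) *
        (∫⁻ x in {x | a * t < f x}, (f x : ℝ≥0∞) ^ p ∂μ) * ENNReal.ofReal (t ^ (r - 1)) =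
      ENNReal.ofReal (a ^ (p - r) / (r - p)) * ∫⁻ x, (f x : ℝ≥0∞) ^ r ∂μ := by
  rw [← lintegral_const_mul _ (by fun_prop)]
  refine (lintegral_mul_setLIntegral_section_swap (F := fun x => (f x : ℝ≥0∞) ^ p)
    (S := {z | a * z.1 < f z.2}) (by fun_prop)
    (measurableSet_lt (by fun_prop) (by fun_prop))).trans (lintegral_congr fun x => ?_)
  rcases eq_or_ne (f x) 0 with h0 | h0
  · simp [h0, hp, hp.trans hpr]
  have hpos : 0 < (f x : ℝ) := by positivity
  have hset : {t | (t, x) ∈ {z : ℝ × α | a * z.1 < f z.2}} ∩ Set.Ioi 0 = Set.Ioo 0 (f x / a) := by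
    ext t
    simp only [Set.mem_inter_iff, Set.mem_ofPred_eq, Set.mem_Ioi, Set.mem_Ioo, lt_div_iff₀' ha,
      and_comm]
  rw [hset, setLIntegral_Ioo_rpow (by linarith) (by positivity), ← ENNReal.ofReal_coe_nnreal,
    ENNReal.ofReal_rpow_of_pos hpos, ENNReal.ofReal_rpow_of_pos hpos,
    ← ENNReal.ofReal_mul (by positivity), rpow_mul_div_rpow_sub ha hpos,
    ENNReal.ofReal_mul (div_nonneg (by positivity) (by linarith))]

theorem lintegral_mul_setLIntegral_ge [SFinite μ] {p r a : ℝ} (hr : 0 < r) (hrp : r < p)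
    (ha : 0 < a) {f : α → ℝ≥0} (hf : Measurable f) :
    ∫⁻ t in Set.Ioi (0 : ℝ), ENNReal.ofReal (t ^ (-p)) *
        (∫⁻ x in {x | a * t < f x}ᶜ, (f x : ℝ≥0∞) ^ p ∂μ) * ENNReal.ofReal (t ^ (r - 1)) =
      ENNReal.ofReal (a ^ (p - r) / (p - r)) * ∫⁻ x, (f x : ℝ≥0∞) ^ r ∂μ := by
  rw [← lintegral_const_mul _ (by fun_prop)]
  refine (lintegral_mul_setLIntegral_section_swap (F := fun x => (f x : ℝ≥0∞) ^ p)
    (S := {z | a * z.1 < f z.2}ᶜ) (by fun_prop)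
    (measurableSet_lt (by fun_prop) (by fun_prop)).compl).trans (lintegral_congr fun x => ?_)
  rcases eq_or_ne (f x) 0 with h0 | h0
  · simp [h0, hr, hr.trans hrp]
  have hpos : 0 < (f x : ℝ) := by positivity
  have hset : {t | (t, x) ∈ {z : ℝ × α | a * z.1 < f z.2}ᶜ} ∩ Set.Ioi 0 = Set.Ici (f x / a) := by
    ext t
    simp only [Set.mem_inter_iff, Set.mem_compl_iff, Set.mem_ofPred_eq, Set.mem_Ioi, Set.mem_Ici,
      not_lt, ← div_le_iff₀' ha, and_iff_left_iff_imp]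
    exact (div_pos hpos ha).trans_le
  rw [hset, setLIntegral_Ici_rpow (by linarith) (by positivity), ← ENNReal.ofReal_coe_nnreal,
    ENNReal.ofReal_rpow_of_pos hpos, ENNReal.ofReal_rpow_of_pos hpos,
    ← ENNReal.ofReal_mul (by positivity), neg_sub, rpow_mul_div_rpow_sub ha hpos,
    ENNReal.ofReal_mul (div_nonneg (by positivity) (by linarith))]

/-- The constant produced by splitting a function at height `a * t` in Marcinkiewicz interpolation,
when the two pieces satisfy weak-type bounds with constants `A` and `B`. -/
def marcinkiewiczConst (p₀ p₁ r a : ℝ) (A B : ℝ≥0∞) : ℝ≥0∞ :=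
  ENNReal.ofReal r * (A * ENNReal.ofReal (a ^ (p₀ - r) / (r - p₀)) +
    B * ENNReal.ofReal (a ^ (p₁ - r) / (p₁ - r)))

theorem marcinkiewiczConst_ne_top (p₀ p₁ r a : ℝ) {A B : ℝ≥0∞} (hA : A ≠ ∞) (hB : B ≠ ∞) :
    marcinkiewiczConst p₀ p₁ r a A B ≠ ∞ :=
  ENNReal.mul_ne_top ENNReal.ofReal_ne_top (ENNReal.add_ne_top.2
    ⟨ENNReal.mul_ne_top hA ENNReal.ofReal_ne_top, ENNReal.mul_ne_top hB ENNReal.ofReal_ne_top⟩)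

/-- The real-variable core of Marcinkiewicz interpolation. -/
theorem lintegral_rpow_le_of_distribution [SFinite μ] {p₀ p₁ r a : ℝ} (hp₀ : 0 < p₀)
    (h₀ : p₀ < r) (h₁ : r < p₁) (ha : 0 < a) (A B : ℝ≥0∞) {f g : α → ℝ≥0} (hf : Measurable f)
    (hg : Measurable g)
    (H : ∀ t : ℝ, 0 < t → μ {x | t < g x} ≤
      A * (ENNReal.ofReal (t ^ (-p₀)) * ∫⁻ x in {x | a * t < f x}, (f x : ℝ≥0∞) ^ p₀ ∂μ) +
      B * (ENNReal.ofReal (t ^ (-p₁)) * ∫⁻ x in {x | a * t < f x}ᶜ, (f x : ℝ≥0∞) ^ p₁ ∂μ)) :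
    ∫⁻ x, (g x : ℝ≥0∞) ^ r ∂μ ≤
      marcinkiewiczConst p₀ p₁ r a A B * ∫⁻ x, (f x : ℝ≥0∞) ^ r ∂μ := by
  have hr : 0 < r := hp₀.trans h₀
  have hS : MeasurableSet {z : ℝ × α | a * z.1 < f z.2} :=
    measurableSet_lt (by fun_prop) (by fun_prop)
  have hhigh : Measurable fun t : ℝ => ∫⁻ x in {x | a * t < f x}, (f x : ℝ≥0∞) ^ p₀ ∂μ :=
    measurable_setLIntegral_section (by fun_prop) hS
  have hlow : Measurable fun t : ℝ => ∫⁻ x in {x | a * t < f x}ᶜ, (f x : ℝ≥0∞) ^ p₁ ∂μ :=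
    measurable_setLIntegral_section (by fun_prop) hS.compl
  have layerCake := lintegral_rpow_eq_lintegral_meas_lt_mul μ
    (f := fun x => (g x : ℝ)) (ae_of_all _ fun x => by positivity) (by fun_prop) hr
  simp_rw [← ENNReal.ofReal_rpow_of_nonneg (NNReal.coe_nonneg _) hr.le,
    ENNReal.ofReal_coe_nnreal] at layerCake
  rw [layerCake, marcinkiewiczConst, mul_assoc]
  gcongr
  calc ∫⁻ t in Set.Ioi (0 : ℝ), μ {x | t < g x} * ENNReal.ofReal (t ^ (r - 1))
      ≤ ∫⁻ t in Set.Ioi (0 : ℝ),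
          (A * (ENNReal.ofReal (t ^ (-p₀)) * (∫⁻ x in {x | a * t < f x}, (f x : ℝ≥0∞) ^ p₀ ∂μ) *
            ENNReal.ofReal (t ^ (r - 1))) +
          B * (ENNReal.ofReal (t ^ (-p₁)) * (∫⁻ x in {x | a * t < f x}ᶜ, (f x : ℝ≥0∞) ^ p₁ ∂μ) *
            ENNReal.ofReal (t ^ (r - 1)))) :=
        setLIntegral_mono' measurableSet_Ioi fun t ht =>
          (mul_le_mul_left (H t ht) _).trans_eq (by ring)
    _ = A * (ENNReal.ofReal (a ^ (p₀ - r) / (r - p₀)) * ∫⁻ x, (f x : ℝ≥0∞) ^ r ∂μ) +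
        B * (ENNReal.ofReal (a ^ (p₁ - r) / (p₁ - r)) * ∫⁻ x, (f x : ℝ≥0∞) ^ r ∂μ) := by
      rw [lintegral_add_left (by fun_prop), lintegral_const_mul _ (by fun_prop),
        lintegral_const_mul _ (by fun_prop),
        lintegral_mul_setLIntegral_lt hp₀ h₀ ha hf, lintegral_mul_setLIntegral_ge hr h₁ ha hf]
    _ = _ := by ring

end LayerCake

section Interpolation

variable {α : Type*}

theorem ellNorm_indicator_rpow [MeasurableSpace α] [DiscreteMeasurableSpace α] {p : ℝ} (hp : 0 < p)
    (f : α → ℝ≥0) (S : Set α) :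
    ellNorm p (S.indicator f) ^ p = ∫⁻ x in S, (f x : ℝ≥0∞) ^ p ∂Measure.count := by
  classical
  rw [ellNorm_rpow hp, ← lintegral_indicator (MeasurableSet.of_discrete), lintegral_count]
  refine tsum_congr fun x => ?_
  by_cases hx : x ∈ S <;> simp [hx, hp]

theorem ellNorm_le_of_encard_lt_le [Countable α] {p₀ p₁ r a : ℝ} (hp₀ : 0 < p₀) (h₀ : p₀ < r)
    (h₁ : r < p₁) (ha : 0 < a) (A B : ℝ≥0∞) {f g : α → ℝ≥0}
    (H : ∀ t : ℝ, 0 < t → ({x | t < g x}.encard : ℝ≥0∞) ≤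
      A * (ENNReal.ofReal (t ^ (-p₀)) * ellNorm p₀ ({x | a * t < f x}.indicator f) ^ p₀) +
      B * (ENNReal.ofReal (t ^ (-p₁)) * ellNorm p₁ ({x | a * t < f x}ᶜ.indicator f) ^ p₁)) :
    ellNorm r g ≤ marcinkiewiczConst p₀ p₁ r a A B ^ (1 / r) * ellNorm r f := by
  let _ : MeasurableSpace α := ⊤
  have hr : 0 < r := hp₀.trans h₀
  refine ellNorm_le_of_tsum_rpow_le hr ?_
  simp_rw [← lintegral_count]
  refine lintegral_rpow_le_of_distribution hp₀ h₀ h₁ ha A B measurable_from_top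
    measurable_from_top fun t ht => ?_
  rw [Measure.count_apply MeasurableSet.of_discrete, ← ellNorm_indicator_rpow hp₀,
    ← ellNorm_indicator_rpow (hr.trans h₁)]
  exact H t ht

/-- Boundedness of `T` on `ℓ^p` with constant `A`, tested only on finitely supported functions. -/
def StrongType (T : (α → ℝ≥0) → α → ℝ≥0) (p : ℝ) (A : ℝ≥0∞) : Prop :=
  ∀ f : α → ℝ≥0, f.support.Finite → ellNorm p (T f) ≤ A * ellNorm p f

theorem StrongType.encard_half_lt_le {T : (α → ℝ≥0) → α → ℝ≥0} {p : ℝ} {A : ℝ≥0∞} (hp : 0 < p)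
    (hT : StrongType T p A) {f : α → ℝ≥0} (hf : f.support.Finite) {t : ℝ} (ht : 0 < t) :
    ({x | t / 2 < T f x}.encard : ℝ≥0∞) ≤
      (2 * A) ^ p * (ENNReal.ofReal (t ^ (-p)) * ellNorm p f ^ p) :=
  calc ({x | t / 2 < T f x}.encard : ℝ≥0∞)
      ≤ ENNReal.ofReal ((t / 2) ^ (-p)) * ellNorm p (T f) ^ p :=
        encard_lt_le_rpow_mul_ellNorm_rpow hp (by positivity) _
    _ ≤ ENNReal.ofReal ((t / 2) ^ (-p)) * (A * ellNorm p f) ^ p := by gcongr; exact hT f hf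
    _ = _ := by
      rw [ENNReal.mul_rpow_of_nonneg _ _ hp.le, ENNReal.mul_rpow_of_nonneg _ _ hp.le,
        Real.div_rpow ht.le (by norm_num), div_eq_mul_inv, ENNReal.ofReal_mul (by positivity),
        Real.rpow_neg (by norm_num : (0 : ℝ) ≤ 2), inv_inv,
        ← ENNReal.ofReal_rpow_of_nonneg (by norm_num) hp.le, ENNReal.ofReal_ofNat]
      ring

/-- Marcinkiewicz interpolation. The free splitting parameter `a` is what later turns a growing
and a decaying endpoint bound into a decaying intermediate one. -/
theorem StrongType.interpolate [Countable α] {T : (α → ℝ≥0) → α → ℝ≥0} {p₀ p₁ r a : ℝ}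
    {A₀ A₁ : ℝ≥0∞} (hT : ∀ f₁ f₂, T (f₁ + f₂) ≤ T f₁ + T f₂) (h0 : StrongType T p₀ A₀)
    (h1 : StrongType T p₁ A₁) (hp₀ : 0 < p₀) (hr₀ : p₀ < r) (hr₁ : r < p₁) (ha : 0 < a) :
    StrongType T r
      (marcinkiewiczConst p₀ p₁ r a ((2 * A₀) ^ p₀) ((2 * A₁) ^ p₁) ^ (1 / r)) := by
  intro f hf
  refine ellNorm_le_of_encard_lt_le hp₀ hr₀ hr₁ ha _ _ fun t ht => ?_
  set S := {x | a * t < f x}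
  have hfin (U : Set α) : (U.indicator f).support.Finite := by
    rw [Set.support_indicator]
    exact hf.inter_of_right U
  have hsub : {x | t < T f x} ⊆
      {x | t / 2 < T (S.indicator f) x} ∪ {x | t / 2 < T (Sᶜ.indicator f) x} := by
    intro x (hx : t < T f x)
    have hsplit := hT (S.indicator f) (Sᶜ.indicator f) x
    rw [Set.indicator_self_add_compl, Pi.add_apply, ← NNReal.coe_le_coe, NNReal.coe_add] at hsplit
    rw [Set.mem_union, Set.mem_ofPred_eq, Set.mem_ofPred_eq]
    by_contra! h
    linarith
  calc ({x | t < T f x}.encard : ℝ≥0∞)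
      ≤ ({x | t / 2 < T (S.indicator f) x}.encard + {x | t / 2 < T (Sᶜ.indicator f) x}.encard :
          ℕ∞) := by
        gcongr
        exact (Set.encard_le_encard hsub).trans (Set.encard_union_le _ _)
    _ ≤ _ := by
        rw [ENat.toENNReal_add]
        exact add_le_add (h0.encard_half_lt_le hp₀ (hfin S) ht)
          (h1.encard_half_lt_le (hp₀.trans (hr₀.trans hr₁)) (hfin Sᶜ) ht)

theorem rpow_mul_ofReal_two_rpow_le {C D e p r η m : ℝ} (hC : 0 ≤ C) (hp : 0 < p) (hD : 0 < D)
    (hm : e * p + η * (p - r) ≤ m) (s : ℕ) :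
    (2 * ENNReal.ofReal (C * 2 ^ (e * s))) ^ p *
        ENNReal.ofReal (((2 : ℝ) ^ (η * s)) ^ (p - r) / D) ≤
      ENNReal.ofReal ((2 * C) ^ p / D * 2 ^ (m * s)) := by
  rw [← ENNReal.ofReal_ofNat, ← ENNReal.ofReal_mul (by norm_num),
    ENNReal.ofReal_rpow_of_nonneg (by positivity) hp.le, ← ENNReal.ofReal_mul (by positivity)]
  refine ENNReal.ofReal_le_ofReal ?_
  calc (2 * (C * 2 ^ (e * s))) ^ p * (((2 : ℝ) ^ (η * s)) ^ (p - r) / D)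
      = (2 * C) ^ p / D * 2 ^ ((e * p + η * (p - r)) * s) := by
        rw [← mul_assoc 2 C, Real.mul_rpow (by positivity) (by positivity),
          ← Real.rpow_mul (by norm_num), ← Real.rpow_mul (by norm_num),
          show (e * p + η * (p - r)) * s = e * s * p + η * s * (p - r) by ring,
          Real.rpow_add (by norm_num)]
        ring
    _ ≤ _ := by gcongr; norm_num

/-- Interpolating endpoint bounds of sizes `2^(e₀ s)` and `2^(e₁ s)` with a splitting height
proportional to `2^(η s)`: the two balance conditions give geometric decay. -/
theorem exists_geometric_interpolation (α : Type*) [Countable α] {p₀ p₁ r C₀ C₁ e₀ e₁ η : ℝ}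
    (hp₀ : 0 < p₀) (hr₀ : p₀ < r) (hr₁ : r < p₁) (hC₀ : 0 ≤ C₀) (hC₁ : 0 ≤ C₁)
    (he₀ : e₀ * p₀ + η * (p₀ - r) < 0) (he₁ : e₁ * p₁ + η * (p₁ - r) < 0) :
    ∃ C c : ℝ, 0 ≤ C ∧ 0 < c ∧ ∀ (s : ℕ) (T : (α → ℝ≥0) → α → ℝ≥0),
      (∀ f₁ f₂, T (f₁ + f₂) ≤ T f₁ + T f₂) →
      StrongType T p₀ (ENNReal.ofReal (C₀ * 2 ^ (e₀ * s))) →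
      StrongType T p₁ (ENNReal.ofReal (C₁ * 2 ^ (e₁ * s))) →
      StrongType T r (ENNReal.ofReal (C * 2 ^ (-c * s))) := by
  have hr : 0 < r := hp₀.trans hr₀
  have hp₁ : 0 < p₁ := hr.trans hr₁
  have d0 : 0 < r - p₀ := sub_pos.2 hr₀
  have d1 : 0 < p₁ - r := sub_pos.2 hr₁
  set K : ℝ := r * ((2 * C₀) ^ p₀ / (r - p₀) + (2 * C₁) ^ p₁ / (p₁ - r)) with hK
  set m : ℝ := max (e₀ * p₀ + η * (p₀ - r)) (e₁ * p₁ + η * (p₁ - r))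
  have hm : 0 < -m := neg_pos.2 (max_lt he₀ he₁)
  refine ⟨K ^ (1 / r), -m / r, by positivity, by positivity, fun s T hT h0 h1 f hf => ?_⟩
  refine (StrongType.interpolate hT h0 h1 hp₀ hr₀ hr₁ (a := 2 ^ (η * s)) (by positivity)
    f hf).trans ?_
  gcongr
  calc marcinkiewiczConst p₀ p₁ r (2 ^ (η * s)) ((2 * ENNReal.ofReal (C₀ * 2 ^ (e₀ * s))) ^ p₀)
        ((2 * ENNReal.ofReal (C₁ * 2 ^ (e₁ * s))) ^ p₁) ^ (1 / r)
      ≤ (ENNReal.ofReal r * (ENNReal.ofReal ((2 * C₀) ^ p₀ / (r - p₀) * 2 ^ (m * s)) +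
          ENNReal.ofReal ((2 * C₁) ^ p₁ / (p₁ - r) * 2 ^ (m * s)))) ^ (1 / r) := by
        unfold marcinkiewiczConst
        gcongr
        · exact rpow_mul_ofReal_two_rpow_le hC₀ hp₀ d0 (le_max_left _ _) s
        · exact rpow_mul_ofReal_two_rpow_le hC₁ hp₁ d1 (le_max_right _ _) s
    _ = ENNReal.ofReal (K * 2 ^ (m * s)) ^ (1 / r) := by
        rw [← ENNReal.ofReal_add (by positivity) (by positivity), ← ENNReal.ofReal_mul hr.le, hK]
        congr 2
        ring
    _ = ENNReal.ofReal (K ^ (1 / r) * 2 ^ (-(-m / r) * s)) := by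
        rw [ENNReal.ofReal_rpow_of_nonneg (by positivity) (by positivity),
          Real.mul_rpow (by positivity) (by positivity), ← Real.rpow_mul (by norm_num)]
        congr 3
        field_simp

end Interpolation

section MaximalFunction

variable {α : Type*} {T : α → α}

/-- The truncated maximal function of `f` along the orbits of `T`: the largest Birkhoff average of
length at most `L`. -/
def maxAvg (T : α → α) (L : ℕ) (f : α → ℝ≥0) (x : α) : ℝ≥0 :=
  (range (L + 1)).sup fun n => birkhoffAverage ℝ≥0 T f n x

theorem birkhoffAverage_le_maxAvg {L n : ℕ} (hn : n ≤ L) (f : α → ℝ≥0) (x : α) :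
    birkhoffAverage ℝ≥0 T f n x ≤ maxAvg T L f x :=
  Finset.le_sup (f := fun n => birkhoffAverage ℝ≥0 T f n x) (mem_range_succ_iff.2 hn)

theorem birkhoffSum_le_mul_maxAvg {L n : ℕ} (hn : n ≤ L) (f : α → ℝ≥0) (x : α) :
    birkhoffSum T f n x ≤ n * maxAvg T L f x := by
  rcases n.eq_zero_or_pos with rfl | hpos
  · simp
  have h := birkhoffAverage_le_maxAvg (T := T) hn f x
  rwa [birkhoffAverage, smul_eq_mul, inv_mul_le_iff₀ (by positivity)] at h

theorem maxAvg_add_le (L : ℕ) (f₁ f₂ : α → ℝ≥0) (x : α) :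
    maxAvg T L (f₁ + f₂) x ≤ maxAvg T L f₁ x + maxAvg T L f₂ x :=
  Finset.sup_le fun n hn => by
    rw [birkhoffAverage_add, Pi.add_apply, Pi.add_apply]
    have hnL := mem_range_succ_iff.1 hn
    gcongr <;> exact birkhoffAverage_le_maxAvg hnL _ x

theorem maxAvg_le_of_le (L : ℕ) {f : α → ℝ≥0} {c : ℝ≥0} (hf : ∀ x, f x ≤ c) (x : α) :
    maxAvg T L f x ≤ c :=
  Finset.sup_le fun n _ => by
    rw [birkhoffAverage, birkhoffSum, smul_eq_mul]
    rcases n.eq_zero_or_pos with rfl | hn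
    · simp
    rw [inv_mul_le_iff₀ (by positivity)]
    exact (sum_le_card_nsmul _ _ _ fun i _ => hf _).trans_eq (by simp)

theorem lt_maxAvg_iff {L : ℕ} {f : α → ℝ≥0} {t : ℝ} (ht : 0 < t) (x : α) :
    t < maxAvg T L f x ↔ ∃ n ∈ range (L + 1), 0 < birkhoffSum T (fun y => (f y : ℝ) - t) n x := by
  rw [← Real.toNNReal_lt_iff_lt_coe ht.le, maxAvg, Finset.lt_sup_iff]
  refine exists_congr fun n => and_congr_right fun _ => ?_
  rw [Real.toNNReal_lt_iff_lt_coe ht.le, birkhoffAverage, smul_eq_mul]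
  rcases n.eq_zero_or_pos with rfl | hn
  · simp [ht.le]
  · rw [NNReal.coe_mul, NNReal.coe_inv, NNReal.coe_natCast, lt_inv_mul_iff₀ (by positivity)]
    simp [birkhoffSum]

theorem finite_setOf_lt_maxAvg (hT : T.Injective) (L : ℕ) {f : α → ℝ≥0} (hf : f.support.Finite)
    {t : ℝ} (ht : 0 < t) : {x | t < maxAvg T L f x}.Finite := by
  refine ((range L).finite_toSet.biUnion fun i _ =>
    hf.preimage (hT.iterate i).injOn).subset fun x hx => ?_
  obtain ⟨n, hn, hpos⟩ := (lt_maxAvg_iff ht x).1 hx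
  obtain ⟨i, hi, hfi⟩ := exists_lt_of_sum_lt (by simpa [birkhoffSum] using hpos :
    ∑ _i ∈ range n, t < ∑ i ∈ range n, (f (T^[i] x) : ℝ))
  have hiL : i < L := (mem_range.1 hi).trans_le (mem_range_succ_iff.1 hn)
  refine Set.mem_biUnion (mem_coe.2 (mem_range.2 hiL)) ?_
  simpa using (NNReal.coe_pos.1 (ht.trans hfi)).ne'

/-- The maximal ergodic theorem for counting measure, with Garsia's proof: on `E` the maximal
function `M` satisfies `M ≤ g + M ∘ T`, and injectivity of `T` gives `∑_E M ∘ T ≤ ∑_E M`. -/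
theorem sum_nonneg_of_birkhoffSum_pos (hT : T.Injective) (L : ℕ) (g : α → ℝ) (E : Finset α)
    (hE : ∀ x, x ∈ E ↔ ∃ n ∈ range (L + 1), 0 < birkhoffSum T g n x) : 0 ≤ ∑ x ∈ E, g x := by
  classical
  let M (x : α) : ℝ := (range (L + 1)).sup' nonempty_range_add_one fun n => birkhoffSum T g n x
  have hM {n : ℕ} (hn : n ≤ L) (x : α) : birkhoffSum T g n x ≤ M x :=
    le_sup' (fun n => birkhoffSum T g n x) (mem_range_succ_iff.2 hn)
  have hM0 (x : α) : 0 ≤ M x := hM (Nat.zero_le L) x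
  have hME (x : α) : 0 < M x ↔ x ∈ E := by rw [hE]; exact lt_sup'_iff _
  have hstep : ∀ x ∈ E, M x - M (T x) ≤ g x := by
    intro x hx
    obtain ⟨n, hn, hMn⟩ := exists_mem_eq_sup' nonempty_range_add_one
      (fun n => birkhoffSum T g n x)
    obtain ⟨k, rfl⟩ := Nat.exists_eq_succ_of_ne_zero (n := n) (by
      rintro rfl
      exact ((hME x).2 hx).ne' hMn)
    have hk : k ≤ L := by have := mem_range.1 hn; omega
    have := hM hk (T x)
    rw [birkhoffSum_succ'] at hMn
    change M x = _ at hMn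
    linarith
  have hshift : ∑ x ∈ E, M (T x) ≤ ∑ x ∈ E, M x := by
    rw [← sum_image (f := M) hT.injOn, ← sum_filter_ne_zero]
    refine sum_le_sum_of_subset_of_nonneg (fun x hx => ?_) fun x _ _ => hM0 x
    exact (hME x).1 ((hM0 x).lt_of_ne' (mem_filter.1 hx).2)
  calc (0 : ℝ) ≤ ∑ x ∈ E, (M x - M (T x)) := by rw [sum_sub_distrib]; linarith
    _ ≤ _ := sum_le_sum hstep

theorem encard_lt_maxAvg_le (hT : T.Injective) (L : ℕ) {f : α → ℝ≥0} (hf : f.support.Finite)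
    {t : ℝ} (ht : 0 < t) :
    ({x | t < maxAvg T L f x}.encard : ℝ≥0∞) ≤ ENNReal.ofReal t⁻¹ * ∑' x, (f x : ℝ≥0∞) := by
  have hfin := finite_setOf_lt_maxAvg hT L hf ht
  set E := hfin.toFinset
  have hsum := sum_nonneg_of_birkhoffSum_pos hT L (fun x => (f x : ℝ) - t) E fun x => by
    rw [← lt_maxAvg_iff ht, hfin.mem_toFinset, Set.mem_ofPred_eq]
  have hcard : (#E : ℝ) ≤ t⁻¹ * ∑ x ∈ E, (f x : ℝ) := by
    rw [sum_sub_distrib, sum_const, nsmul_eq_mul, sub_nonneg] at hsum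
    rwa [inv_mul_eq_div, le_div_iff₀ ht]
  calc ({x | t < maxAvg T L f x}.encard : ℝ≥0∞) = ENNReal.ofReal #E := by
        rw [hfin.encard_eq_coe_toFinset_card]; simp [E]
    _ ≤ ENNReal.ofReal (t⁻¹ * ∑ x ∈ E, (f x : ℝ)) := by gcongr
    _ = ENNReal.ofReal t⁻¹ * ∑ x ∈ E, (f x : ℝ≥0∞) := by
        rw [ENNReal.ofReal_mul (by positivity), ENNReal.ofReal_sum_of_nonneg (by simp)]
        simp
    _ ≤ _ := by gcongr; exact ENNReal.sum_le_tsum E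

theorem exists_strongType_maxAvg (α : Type*) [Countable α] {p : ℝ} (hp : 1 < p) :
    ∃ C : ℝ≥0, ∀ (T : α → α), T.Injective → ∀ L, StrongType (maxAvg T L) p C := by
  refine ⟨(marcinkiewiczConst 1 (p + 1) p (1 / 2) 2 0 ^ (1 / p)).toNNReal, fun T hT L f hf => ?_⟩
  rw [ENNReal.coe_toNNReal (ENNReal.rpow_ne_top_of_nonneg
    (one_div_nonneg.2 (zero_le_one.trans hp.le))
    (marcinkiewiczConst_ne_top _ _ _ _ (by simp) (by simp)))]
  refine ellNorm_le_of_encard_lt_le one_pos hp (by linarith) (by norm_num) 2 0 fun t ht => ?_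
  set S := {x | 1 / 2 * t < f x}
  have hsub : {x | t < maxAvg T L f x} ⊆ {x | t / 2 < maxAvg T L (S.indicator f) x} := by
    intro x (hx : t < maxAvg T L f x)
    have hbound (y : α) : Sᶜ.indicator f y ≤ Real.toNNReal (t / 2) :=
      Set.indicator_apply_le' (fun hy => NNReal.le_toNNReal_of_coe_le (by
        have : f y ≤ 1 / 2 * t := not_lt.1 hy
        linarith)) fun _ => zero_le
    have hlow := maxAvg_le_of_le (T := T) L hbound x
    have hsplit := (maxAvg_add_le (T := T) L (S.indicator f) (Sᶜ.indicator f) x).trans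
      (add_le_add_right hlow _)
    rw [Set.indicator_self_add_compl, ← NNReal.coe_le_coe, NNReal.coe_add,
      Real.coe_toNNReal _ (by positivity)] at hsplit
    rw [Set.mem_ofPred_eq]
    linarith
  have hfin : (S.indicator f).support.Finite := by
    rw [Set.support_indicator]
    exact hf.inter_of_right S
  calc ({x | t < maxAvg T L f x}.encard : ℝ≥0∞)
      ≤ ({x | t / 2 < maxAvg T L (S.indicator f) x}.encard : ℝ≥0∞) := by gcongr
    _ ≤ ENNReal.ofReal (t / 2)⁻¹ * ∑' x, ((S.indicator f x : ℝ≥0) : ℝ≥0∞) :=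
        encard_lt_maxAvg_le hT L hfin (by positivity)
    _ = _ := by
        rw [zero_mul, add_zero, ellNorm_rpow one_pos, Real.rpow_neg_one, inv_div, div_eq_mul_inv,
          ENNReal.ofReal_mul (by norm_num), ENNReal.ofReal_ofNat, mul_assoc]
        simp_rw [ENNReal.rpow_one]

end MaximalFunction

/-! ### Ramanujan sums -/

open scoped ArithmeticFunction.Moebius ArithmeticFunction.zeta

section RamanujanSum

/-- The weight `d · 1_{d ∣ n}` as an arithmetic function of `d`: the divisor sum of the Ramanujan
sums `c_q(n)`. -/
def dvdWeight (n : ℤ) : ArithmeticFunction ℝ :=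
  ⟨fun d => if (d : ℤ) ∣ n then (d : ℝ) else 0, by simp⟩

theorem dvdWeight_apply (n : ℤ) (d : ℕ) :
    dvdWeight n d = if (d : ℤ) ∣ n then (d : ℝ) else 0 := rfl

theorem dvdWeight_nonneg (n : ℤ) (d : ℕ) : 0 ≤ dvdWeight n d := by
  rw [dvdWeight_apply]; split_ifs <;> positivity

theorem dvdWeight_mul_dvdWeight (m n : ℤ) (d d' : ℕ) :
    dvdWeight m d * dvdWeight n d' = if (d : ℤ) ∣ m ∧ (d' : ℤ) ∣ n then (d : ℝ) * d' else 0 := by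
  rw [dvdWeight_apply, dvdWeight_apply, ite_zero_mul_ite_zero]

theorem isMultiplicative_dvdWeight (n : ℤ) : (dvdWeight n).IsMultiplicative := by
  refine ⟨by simp [dvdWeight_apply], fun {a b} hab => ?_⟩
  have hdvd : ((a * b : ℕ) : ℤ) ∣ n ↔ (a : ℤ) ∣ n ∧ (b : ℤ) ∣ n := by
    push_cast
    exact ⟨fun h => ⟨(dvd_mul_right _ _).trans h, (dvd_mul_left _ _).trans h⟩,
      fun h => (Nat.isCoprime_iff_coprime.2 hab).mul_dvd h.1 h.2⟩
  rw [dvdWeight_mul_dvdWeight, dvdWeight_apply, Nat.cast_mul]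
  simp only [← hdvd, Nat.cast_mul]

/-- The Ramanujan sum `c_q(n)` as an arithmetic function of `q`, in the closed form
`∑_{d ∣ gcd(q, n)} μ(q / d) d` instead of the exponential sum. -/
def ramanujanSum (n : ℤ) : ArithmeticFunction ℝ := (μ : ArithmeticFunction ℝ) * dvdWeight n

theorem ramanujanSum_apply (n : ℤ) (q : ℕ) :
    ramanujanSum n q = ∑ x ∈ q.divisorsAntidiagonal, (μ x.1 : ℝ) * dvdWeight n x.2 := by
  simp [ramanujanSum, ArithmeticFunction.mul_apply]

theorem isMultiplicative_ramanujanSum (n : ℤ) : (ramanujanSum n).IsMultiplicative :=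
  ArithmeticFunction.isMultiplicative_moebius.intCast.mul (isMultiplicative_dvdWeight n)

theorem sum_divisors_ramanujanSum (n : ℤ) {q : ℕ} (hq : 0 < q) :
    ∑ d ∈ q.divisors, ramanujanSum n d = dvdWeight n q :=
  (ArithmeticFunction.sum_eq_iff_sum_mul_moebius_eq (f := ramanujanSum n) (g := dvdWeight n)).2
    (fun m _ => (ramanujanSum_apply n m).symm) q hq

theorem ramanujanSum_prime (n : ℤ) {p : ℕ} (hp : p.Prime) :
    ramanujanSum n p = (if (p : ℤ) ∣ n then (p : ℝ) else 0) - 1 := by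
  have h := sum_divisors_ramanujanSum n hp.pos
  rw [hp.sum_divisors, (isMultiplicative_ramanujanSum n).map_one, dvdWeight_apply] at h
  linarith

theorem abs_moebius_cast_le_one (n : ℕ) : |(μ n : ℝ)| ≤ 1 := by
  exact_mod_cast ArithmeticFunction.abs_moebius_le_one (n := n)

theorem abs_ramanujanSum_le (n : ℤ) (q : ℕ) :
    |ramanujanSum n q| ≤ ∑ d ∈ q.divisors, dvdWeight n d := by
  rw [ramanujanSum_apply, ← Nat.sum_divisorsAntidiagonal' (f := fun _ d => dvdWeight n d)]
  refine (abs_sum_le_sum_abs _ _).trans (sum_le_sum fun x _ => ?_)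
  rw [abs_mul, abs_of_nonneg (dvdWeight_nonneg _ _)]
  exact mul_le_of_le_one_left (dvdWeight_nonneg _ _) (abs_moebius_cast_le_one _)

theorem sum_moebius_mul_dvdWeight_gcd (h : ℤ) {q d' : ℕ} (hq : 0 < q) :
    ∑ x ∈ q.divisorsAntidiagonal, (μ x.1 : ℝ) * dvdWeight h (x.2.gcd d') =
      if q ∣ d' then ramanujanSum h q else 0 := by
  refine (ArithmeticFunction.sum_eq_iff_sum_mul_moebius_eq
    (f := fun e => if e ∣ d' then ramanujanSum h e else 0)
    (g := fun d => dvdWeight h (d.gcd d'))).1 (fun d hd => ?_) q hq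
  rw [← sum_divisors_ramanujanSum h (Nat.gcd_pos_of_pos_left d' hd), ← sum_filter]
  congr 1
  ext e
  simp only [mem_filter, Nat.mem_divisors, Nat.dvd_gcd_iff, Nat.gcd_ne_zero_left hd.ne', ne_eq,
    not_false_eq_true, and_true, hd.ne']

theorem sum_moebius_mul_ite_dvd (q : ℕ) {q' : ℕ} (hq' : 0 < q') :
    ∑ x ∈ q'.divisorsAntidiagonal, (μ x.1 : ℝ) * (if q ∣ x.2 then (1 : ℝ) else 0) =
      if q' = q then (1 : ℝ) else 0 := by
  refine (ArithmeticFunction.sum_eq_iff_sum_mul_moebius_eq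
    (f := fun e => if e = q then (1 : ℝ) else 0)
    (g := fun d => if q ∣ d then (1 : ℝ) else 0)).1 (fun d hd => ?_) q' hq'
  simp [sum_ite_eq', hd.ne']

-- `dvdWeight (t - s) (d.gcd d')` is the mean of `dvdWeight (s - ·) d * dvdWeight (t - ·) d'`, so
-- this is the orthogonality of the Ramanujan sums `c_q` and `c_{q'}`.
theorem sum_moebius_mul_moebius_mul_dvdWeight_gcd (h : ℤ) {q q' : ℕ} (hq : 0 < q) (hq' : 0 < q') :
    ∑ x ∈ q.divisorsAntidiagonal, ∑ x' ∈ q'.divisorsAntidiagonal,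
      (μ x.1 : ℝ) * μ x'.1 * dvdWeight h (x.2.gcd x'.2) =
        if q = q' then ramanujanSum h q else 0 :=
  calc _ = ∑ x' ∈ q'.divisorsAntidiagonal, (μ x'.1 : ℝ) *
        ∑ x ∈ q.divisorsAntidiagonal, (μ x.1 : ℝ) * dvdWeight h (x.2.gcd x'.2) := by
        rw [sum_comm]
        simp only [mul_sum]
        exact sum_congr rfl fun _ _ => sum_congr rfl fun _ _ => by ring
    _ = (∑ x' ∈ q'.divisorsAntidiagonal, (μ x'.1 : ℝ) * (if q ∣ x'.2 then (1 : ℝ) else 0)) *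
        ramanujanSum h q := by
        simp only [sum_moebius_mul_dvdWeight_gcd h hq, sum_mul, mul_assoc, ite_mul, one_mul,
          zero_mul]
    _ = _ := by simp only [sum_moebius_mul_ite_dvd q hq', ite_mul, one_mul, zero_mul, eq_comm]

end RamanujanSum

section ApproximateOrthogonality

theorem abs_card_filter_modEq_sub_le (a b v : ℤ) {r : ℕ} (hr : 0 < r) :
    |(#{x ∈ Ioc a b | x ≡ v [ZMOD r]} : ℝ) - (#(Ioc a b) : ℝ) / r| ≤ 1 := by
  have hr' : (0 : ℤ) < r := by exact_mod_cast hr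
  rcases lt_or_ge b a with hab | hab
  · simp [Ioc_eq_empty_of_le hab.le]
  set A := ((a : ℚ) - v) / ((r : ℤ) : ℚ) with hA
  set B := ((b : ℚ) - v) / ((r : ℤ) : ℚ) with hB
  have hAB : ⌊A⌋ ≤ ⌊B⌋ := by
    rw [hA, hB]; gcongr
  have hcount : (#{x ∈ Ioc a b | x ≡ v [ZMOD r]} : ℚ) = ⌊B⌋ - ⌊A⌋ := by
    have h := Int.Ioc_filter_modEq_card a b hr' v
    rw [max_eq_left (sub_nonneg.2 hAB)] at h
    exact_mod_cast h
  have hmean : (#(Ioc a b) : ℚ) / r = B - A := by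
    have hcard : ((#(Ioc a b) : ℤ) : ℚ) = b - a := by
      rw [Int.card_Ioc, Int.toNat_of_nonneg (sub_nonneg.2 hab), Int.cast_sub]
    rw [hB, hA, ← sub_div, sub_sub_sub_cancel_right, ← hcard, Int.cast_natCast,
      Int.cast_natCast]
  have hQ : |(#{x ∈ Ioc a b | x ≡ v [ZMOD r]} : ℚ) - (#(Ioc a b) : ℚ) / r| ≤ 1 := by
    rw [hcount, hmean, abs_le]
    constructor <;>
      linarith [Int.floor_le A, Int.lt_floor_add_one A, Int.floor_le B, Int.lt_floor_add_one B]
  simpa using (Rat.cast_le (K := ℝ)).2 hQ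

theorem dvd_sub_and_dvd_sub_iff_modEq {s t u w : ℤ} {d d' : ℕ} (h : t - s = d * u + d' * w)
    (y : ℤ) :
    ((d : ℤ) ∣ s - y ∧ (d' : ℤ) ∣ t - y) ↔ y ≡ s + d * u [ZMOD (d.lcm d' : ℕ)] := by
  have hd : s + d * u - y = (s - y) + d * u := by ring
  have hd' : s + d * u - y = (t - y) - d' * w := by linarith
  rw [Int.modEq_iff_dvd, show ((d.lcm d' : ℕ) : ℤ) = lcm (d : ℤ) d' from rfl,
    _root_.lcm_dvd_iff]
  refine and_congr ?_ ?_
  · rw [hd, Int.dvd_add_left (dvd_mul_right _ _)]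
  · rw [hd', dvd_sub_left (dvd_mul_right _ _)]

theorem abs_sum_dvdWeight_mul_sub_le (a b s t : ℤ) {d d' : ℕ} (hd : 0 < d) (hd' : 0 < d') :
    |∑ y ∈ Ioc a b, dvdWeight (s - y) d * dvdWeight (t - y) d' -
      #(Ioc a b) * dvdWeight (t - s) (d.gcd d')| ≤ d * d' := by
  have hsum : ∑ y ∈ Ioc a b, dvdWeight (s - y) d * dvdWeight (t - y) d' =
      d * d' * (#{y ∈ Ioc a b | (d : ℤ) ∣ s - y ∧ (d' : ℤ) ∣ t - y} : ℝ) := by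
    simp only [dvdWeight_mul_dvdWeight, ← sum_filter, sum_const, nsmul_eq_mul, mul_comm]
  rw [hsum, dvdWeight_apply]
  split_ifs with hg
  · obtain ⟨u, w, huw⟩ : ∃ u w : ℤ, t - s = d * u + d' * w := by
      obtain ⟨c, hc⟩ := hg
      refine ⟨d.gcdA d' * c, d.gcdB d' * c, ?_⟩
      rw [hc, Nat.gcd_eq_gcd_ab]
      ring
    simp_rw [dvd_sub_and_dvd_sub_iff_modEq huw]
    have hl : 0 < d.lcm d' := Nat.lcm_pos hd hd'
    have hgl : (d : ℝ) * d' = (d.gcd d' : ℕ) * (d.lcm d' : ℕ) := by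
      exact_mod_cast (Nat.gcd_mul_lcm d d').symm
    calc _ = |(d : ℝ) * d' * (#{x ∈ Ioc a b | x ≡ s + d * u [ZMOD (d.lcm d' : ℕ)]} -
          #(Ioc a b) / (d.lcm d' : ℕ))| := by
          rw [hgl]; congr 1; field_simp
      _ ≤ d * d' := by
          rw [abs_mul, abs_of_nonneg (by positivity : (0 : ℝ) ≤ d * d')]
          exact mul_le_of_le_one_right (by positivity)
            (abs_card_filter_modEq_sub_le a b (s + d * u) hl)
  · rw [mul_zero, sub_zero, filter_eq_empty_iff.2]
    · simp only [card_empty, Nat.cast_zero, mul_zero, abs_zero]; positivity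
    · rintro y - ⟨h, h'⟩
      rw [← sub_sub_sub_cancel_right t s y] at hg
      exact hg (dvd_sub ((Int.natCast_dvd_natCast.2 (Nat.gcd_dvd_right _ _)).trans h')
        ((Int.natCast_dvd_natCast.2 (Nat.gcd_dvd_left _ _)).trans h))

theorem sum_ramanujanSum_mul_eq (I : Finset ℤ) (s t : ℤ) (q q' : ℕ) :
    ∑ y ∈ I, ramanujanSum (s - y) q * ramanujanSum (t - y) q' =
      ∑ x ∈ q.divisorsAntidiagonal, ∑ x' ∈ q'.divisorsAntidiagonal, (μ x.1 : ℝ) * μ x'.1 *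
        ∑ y ∈ I, dvdWeight (s - y) x.2 * dvdWeight (t - y) x'.2 := by
  simp_rw [ramanujanSum_apply, sum_mul_sum, mul_sum]
  rw [sum_comm]
  refine sum_congr rfl fun x _ => ?_
  rw [sum_comm]
  exact sum_congr rfl fun x' _ => sum_congr rfl fun y _ => by ring

theorem abs_sum_ramanujanSum_mul_sub_le (a b s t : ℤ) {q q' : ℕ} (hq : 0 < q) (hq' : 0 < q') :
    |∑ y ∈ Ioc a b, ramanujanSum (s - y) q * ramanujanSum (t - y) q' -
      #(Ioc a b) * (if q = q' then ramanujanSum (t - s) q else 0)| ≤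
      (∑ d ∈ q.divisors, (d : ℝ)) * ∑ d ∈ q'.divisors, (d : ℝ) := by
  rw [sum_ramanujanSum_mul_eq, ← sum_moebius_mul_moebius_mul_dvdWeight_gcd (t - s) hq hq', mul_sum,
    ← sum_sub_distrib, ← Nat.sum_divisorsAntidiagonal' (f := fun _ d => (d : ℝ)),
    ← Nat.sum_divisorsAntidiagonal' (f := fun _ d => (d : ℝ)), sum_mul_sum]
  refine (abs_sum_le_sum_abs _ _).trans (sum_le_sum fun x hx => ?_)
  rw [mul_sum, ← sum_sub_distrib]
  refine (abs_sum_le_sum_abs _ _).trans (sum_le_sum fun x' hx' => ?_)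
  have hpos {n : ℕ} {x : ℕ × ℕ} (hx : x ∈ n.divisorsAntidiagonal) : 0 < x.2 :=
    Nat.pos_of_ne_zero (Nat.ne_zero_of_mem_divisorsAntidiagonal hx).2
  calc _ = |(μ x.1 : ℝ)| * |(μ x'.1 : ℝ)| *
        |∑ y ∈ Ioc a b, dvdWeight (s - y) x.2 * dvdWeight (t - y) x'.2 -
          #(Ioc a b) * dvdWeight (t - s) (x.2.gcd x'.2)| := by
        rw [← abs_mul, ← abs_mul]; congr 1; ring
    _ ≤ 1 * 1 * (x.2 * x'.2) := by
        gcongr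
        · exact abs_moebius_cast_le_one _
        · exact abs_moebius_cast_le_one _
        · exact abs_sum_dvdWeight_mul_sub_le a b s t (hpos hx) (hpos hx')
    _ = _ := by ring

end ApproximateOrthogonality

section CoefficientBound

theorem exists_pow_card_primeFactors_le {A ε : ℝ} (hA : 1 ≤ A) (hε : 0 < ε) :
    ∃ C : ℝ, 0 ≤ C ∧ ∀ q : ℕ, q ≠ 0 → A ^ #q.primeFactors ≤ C * (q : ℝ) ^ ε := by
  obtain ⟨P, hP⟩ := exists_nat_ge (A ^ (1 / ε))
  -- Primes beyond `A ^ (1 / ε)` pay for their factor `A` themselves; there are at most `P + 1`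
  -- others.
  have hprime (p : ℕ) (hp : 1 ≤ p) : A ≤ (if p ≤ P then A else 1) * (p : ℝ) ^ ε := by
    split_ifs with h
    · exact le_mul_of_one_le_right (by positivity) (Real.one_le_rpow (by exact_mod_cast hp) hε.le)
    · rw [one_mul, ← Real.rpow_inv_le_iff_of_pos (by positivity) (by positivity) hε, ← one_div]
      exact hP.trans (by exact_mod_cast (not_le.1 h).le)
  refine ⟨A ^ (P + 1), by positivity, fun q hq => ?_⟩
  calc A ^ #q.primeFactors = ∏ _p ∈ q.primeFactors, A := by simp
    _ ≤ ∏ p ∈ q.primeFactors, ((if p ≤ P then A else 1) * (p : ℝ) ^ ε) :=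
        prod_le_prod (fun _ _ => by positivity) fun p hp =>
          hprime p (Nat.prime_of_mem_primeFactors hp).one_le
    _ = A ^ #{p ∈ q.primeFactors | p ≤ P} * ((∏ p ∈ q.primeFactors, p : ℕ) : ℝ) ^ ε := by
        rw [prod_mul_distrib, Nat.cast_prod, Real.finsetProd_rpow _ _ (by simp), prod_ite]
        simp only [prod_const, one_pow, mul_one]
    _ ≤ A ^ (P + 1) * (q : ℝ) ^ ε := by
        gcongr
        · rw [← card_range (P + 1)]
          exact card_le_card fun p hp => mem_range_succ_iff.2 (mem_filter.1 hp).2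
        · exact Nat.le_of_dvd (Nat.pos_of_ne_zero hq) (Nat.prod_primeFactors_dvd q)

/-- The bound `16 ^ ω(q) / q` for the coefficients, times the number of divisors of `q`, of the
Ramanujan sums of modulus `q`. -/
def coeffBound (q : ℕ) : ℝ := 16 ^ #q.primeFactors / q

theorem coeffBound_nonneg (q : ℕ) : 0 ≤ coeffBound q := by unfold coeffBound; positivity

/-- The moduli in `[2 ^ s, 2 ^ (s + 1))`. -/
def dyadicBlock (s : ℕ) : Finset ℕ := Ico (2 ^ s) (2 ^ (s + 1))

theorem pos_of_mem_dyadicBlock {s q : ℕ} (hq : q ∈ dyadicBlock s) : 0 < q :=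
  (Nat.two_pow_pos s).trans_le (mem_Ico.1 hq).1

theorem two_pow_le_of_mem_dyadicBlock {s q : ℕ} (hq : q ∈ dyadicBlock s) : (2 : ℝ) ^ s ≤ q := by
  exact_mod_cast (mem_Ico.1 hq).1

theorem cast_le_of_mem_dyadicBlock {s q : ℕ} (hq : q ∈ dyadicBlock s) :
    (q : ℝ) ≤ 2 ^ (s + 1) := by
  exact_mod_cast (mem_Ico.1 hq).2.le

theorem card_dyadicBlock (s : ℕ) : #(dyadicBlock s) = 2 ^ s := by
  rw [dyadicBlock, Nat.card_Ico, pow_succ, Nat.mul_two, Nat.add_sub_cancel]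

theorem sum_dyadicBlock_le {f : ℕ → ℝ} {C e : ℝ} {s : ℕ}
    (h : ∀ q ∈ dyadicBlock s, f q ≤ C * 2 ^ (e * s)) :
    ∑ q ∈ dyadicBlock s, f q ≤ C * 2 ^ ((1 + e) * s) := by
  refine (sum_le_card_nsmul _ _ _ h).trans_eq ?_
  rw [card_dyadicBlock, nsmul_eq_mul, Nat.cast_pow, Nat.cast_ofNat, add_mul, one_mul,
    Real.rpow_add two_pos, Real.rpow_natCast]
  ring

theorem exists_coeffBound_le {ε : ℝ} (hε : 0 < ε) :
    ∃ C : ℝ, 0 ≤ C ∧ ∀ s, ∀ q ∈ dyadicBlock s, coeffBound q ≤ C * 2 ^ ((ε - 1) * s) := by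
  obtain ⟨C, hC, h⟩ := exists_pow_card_primeFactors_le (A := 16) (by norm_num) hε
  refine ⟨C * 2 ^ ε, by positivity, fun s q hq => ?_⟩
  calc coeffBound q ≤ C * (2 ^ (s + 1) : ℝ) ^ ε / 2 ^ s := by
        unfold coeffBound
        gcongr
        · exact (h q (pos_of_mem_dyadicBlock hq).ne').trans
            (by gcongr; exact cast_le_of_mem_dyadicBlock hq)
        · exact two_pow_le_of_mem_dyadicBlock hq
    _ = C * 2 ^ ε * (2 : ℝ) ^ ((ε - 1) * s) := by
        rw [← Real.rpow_natCast, ← Real.rpow_natCast, ← Real.rpow_mul (by norm_num),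
          mul_div_assoc, ← Real.rpow_sub (by norm_num), mul_assoc, ← Real.rpow_add (by norm_num)]
        congr 2
        push_cast
        ring

theorem exists_sum_coeffBound_le {ε : ℝ} (hε : 0 < ε) :
    ∃ C : ℝ, 0 ≤ C ∧ ∀ s, ∑ q ∈ dyadicBlock s, coeffBound q ≤ C * 2 ^ (ε * s) := by
  obtain ⟨C, hC, h⟩ := exists_coeffBound_le hε
  exact ⟨C, hC, fun s => by simpa using sum_dyadicBlock_le (h s)⟩

theorem exists_sum_coeffBound_sq_le {ε : ℝ} (hε : 0 < ε) :
    ∃ C : ℝ, 0 ≤ C ∧ ∀ s, ∑ q ∈ dyadicBlock s, coeffBound q ^ 2 ≤ C * 2 ^ ((ε - 1) * s) := by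
  obtain ⟨C, -, h⟩ := exists_coeffBound_le (half_pos hε)
  refine ⟨C ^ 2, by positivity, fun s =>
    (sum_dyadicBlock_le (C := C ^ 2) (e := ε - 2) fun q hq => ?_).trans_eq (by ring_nf)⟩
  calc coeffBound q ^ 2 ≤ (C * 2 ^ ((ε / 2 - 1) * s)) ^ 2 :=
        pow_le_pow_left₀ (coeffBound_nonneg q) (h s q hq) 2
    _ = C ^ 2 * 2 ^ ((ε - 2) * s) := by
        rw [mul_pow, ← Real.rpow_mul_natCast (by norm_num)]; congr 2; push_cast; ring

theorem exists_sum_coeffBound_mul_le {ε : ℝ} (hε : 0 < ε) :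
    ∃ C : ℝ, 0 ≤ C ∧ ∀ s, ∑ q ∈ dyadicBlock s, coeffBound q * q ≤ C * 2 ^ ((1 + ε) * s) := by
  obtain ⟨C, hC, h⟩ := exists_coeffBound_le hε
  refine ⟨C * 2, by positivity, fun s => sum_dyadicBlock_le fun q hq => ?_⟩
  calc coeffBound q * q ≤ C * 2 ^ ((ε - 1) * s) * 2 ^ (s + 1) := by
        gcongr
        · exact h s q hq
        · exact cast_le_of_mem_dyadicBlock hq
    _ = C * 2 * (2 ^ ((ε - 1) * s) * 2 ^ (s : ℝ)) := by rw [Real.rpow_natCast]; ring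
    _ = C * 2 * 2 ^ (ε * s) := by rw [← Real.rpow_add two_pos]; congr 2; ring

/-- The error in the approximate orthogonality of the Ramanujan sums with moduli in the block `s`,
over an interval of length at least `2 ^ (8 * s)`. -/
def orthogonalityError (s : ℕ) : ℝ :=
  (∑ q ∈ dyadicBlock s, coeffBound q * q) ^ 2 / 2 ^ (8 * s)

theorem exists_sum_coeffBound_sq_add_orthogonalityError_le :
    ∃ C : ℝ, 0 ≤ C ∧ ∀ s, ∑ q ∈ dyadicBlock s, coeffBound q ^ 2 + orthogonalityError s ≤
      C * 2 ^ (-(1 / 2 : ℝ) * s) := by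
  obtain ⟨C₁, hC₁, h₁⟩ := exists_sum_coeffBound_sq_le one_half_pos
  obtain ⟨C₂, -, h₂⟩ := exists_sum_coeffBound_mul_le one_pos
  refine ⟨C₁ + C₂ ^ 2, by positivity, fun s => ?_⟩
  have herr : orthogonalityError s ≤ C₂ ^ 2 * 2 ^ (-(1 / 2 : ℝ) * s) :=
    calc orthogonalityError s ≤ (C₂ * 2 ^ ((1 + 1 : ℝ) * s)) ^ 2 / 2 ^ (8 * s) := by
          unfold orthogonalityError
          gcongr
          · exact sum_nonneg fun q _ => mul_nonneg (coeffBound_nonneg q) (by positivity)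
          · exact h₂ s
      _ = C₂ ^ 2 * 2 ^ (-4 * s : ℝ) := by
          rw [mul_pow, ← Real.rpow_mul_natCast (by norm_num), ← Real.rpow_natCast 2 (8 * s),
            mul_div_assoc, ← Real.rpow_sub two_pos]
          congr 2
          push_cast
          ring
      _ ≤ _ := by
          gcongr
          · exact one_le_two
          · norm_num
  rw [add_mul]
  refine add_le_add ((h₁ s).trans_eq ?_) herr
  norm_num

end CoefficientBound

section ArithmeticProgression

theorem birkhoffSum_sub_right {M : Type*} [AddCommMonoid M] (f : ℤ → M) (c : ℤ) (n : ℕ) (x : ℤ) :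
    birkhoffSum (· - c) f n x = ∑ i ∈ range n, f (x - i * c) :=
  sum_congr rfl fun i _ => congrArg f <| by
    clear * -
    induction i with
    | zero => simp
    | succ i ih => rw [Function.iterate_succ_apply', ih]; push_cast; ring

theorem range_filter_dvd_add_subset (M d : ℕ) (β : ℤ) :
    (range M).filter (fun m : ℕ => (d : ℤ) ∣ m + β) ⊆
      (range (M / d + 1)).image fun i : ℕ => ((-β) % d).toNat + d * i := by
  intro m hm
  obtain ⟨hmM, hdvd⟩ := mem_filter.1 hm
  have hmod : (m : ℤ) % d = (-β) % d :=
    (Int.ModEq.symm (Int.modEq_iff_dvd.2 (by simpa using hdvd)))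
  refine mem_image.2 ⟨m / d, mem_range_succ_iff.2 (Nat.div_le_div_right (mem_range.1 hmM).le), ?_⟩
  rw [← hmod, ← Int.natCast_emod, Int.toNat_natCast, Nat.mod_add_div]

theorem sum_dvdWeight_mul_le {L M d : ℕ} (hd : 0 < d) (hdM : d ≤ M) (hL : M < L) (β e x : ℤ)
    (f : ℤ → ℝ≥0) :
    ∑ m ∈ range M, dvdWeight (m + β) d * (f (x - e * m) : ℝ) ≤
      2 * M * maxAvg (· - e * d) L f (x - e * ((-β) % d)) := by
  set r := (-β) % d
  have hr : (r.toNat : ℤ) = r := Int.toNat_of_nonneg (Int.emod_nonneg _ (by exact_mod_cast hd.ne'))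
  have hlen : d * (M / d + 1) ≤ 2 * M := by
    rw [mul_add_one, two_mul]; exact add_le_add (Nat.mul_div_le M d) hdM
  have hL' : M / d + 1 ≤ L := by have := Nat.div_le_self M d; omega
  have hmax : ((birkhoffSum (· - e * d) f (M / d + 1) (x - e * r) : ℝ≥0) : ℝ) ≤
      (M / d + 1 : ℕ) * maxAvg (· - e * d) L f (x - e * r) := by
    exact_mod_cast birkhoffSum_le_mul_maxAvg hL' f (x - e * r)
  calc ∑ m ∈ range M, dvdWeight (m + β) d * (f (x - e * m) : ℝ)
      = d * ∑ m ∈ (range M).filter (fun m : ℕ => (d : ℤ) ∣ m + β), (f (x - e * m) : ℝ) := by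
        simp only [dvdWeight_apply, ite_mul, zero_mul, ← sum_filter, ← mul_sum]
    _ ≤ d * ∑ m ∈ (range (M / d + 1)).image fun i : ℕ => r.toNat + d * i, (f (x - e * m) : ℝ) := by
        gcongr
        exact range_filter_dvd_add_subset M d β
    _ = d * (birkhoffSum (· - e * d) f (M / d + 1) (x - e * r) : ℝ≥0) := by
        rw [birkhoffSum_sub_right, sum_image fun i _ j _ h => by
          exact Nat.eq_of_mul_eq_mul_left hd (Nat.add_left_cancel h), NNReal.coe_sum]
        congr 1
        refine sum_congr rfl fun i _ => ?_
        congr 2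
        push_cast
        rw [hr]
        ring
    _ ≤ d * ((M / d + 1 : ℕ) * maxAvg (· - e * d) L f (x - e * r)) := by gcongr
    _ = (d * (M / d + 1) : ℕ) * maxAvg (· - e * d) L f (x - e * r) := by
        rw [Nat.cast_mul, mul_assoc]
    _ ≤ 2 * M * maxAvg (· - e * d) L f (x - e * r) := by
        gcongr
        exact_mod_cast hlen

end ArithmeticProgression

/-! ### Maximal functions of combinations of Ramanujan sums -/

section RamanujanMax

variable {w : ℕ → ℕ → ℝ}

/-- The sparse sequence of scales `2 ^ (16 k)` at which averages are compared. -/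
def scale (k : ℕ) : ℕ := 2 ^ (16 * k)

theorem scale_pos (k : ℕ) : 0 < scale k := Nat.two_pow_pos _

theorem cast_scale_pos (k : ℕ) : (0 : ℝ) < scale k := Nat.cast_pos.2 (scale_pos k)

theorem scale_mono : Monotone scale := fun _ _ h =>
  Nat.pow_le_pow_right two_pos (Nat.mul_le_mul_left 16 h)

theorem scale_eq_four_pow (k : ℕ) : scale k = (4 ^ k) ^ 8 := by
  rw [scale, show 4 = 2 ^ 2 by norm_num, ← pow_mul, ← pow_mul]
  congr 1
  ring

theorem four_pow_le_scale (k : ℕ) : 4 ^ k ≤ scale k := by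
  rw [scale_eq_four_pow]
  exact Nat.le_self_pow (by norm_num) _

/-- Size and support conditions on weights `w k q` under which the maximal function of the
combinations `∑ q, w k q * c_q` over all scales `scale k` is bounded. -/
structure Admissible (w : ℕ → ℕ → ℝ) : Prop where
  abs_mul_card_divisors_le (k q : ℕ) : |w k q| * #q.divisors ≤ coeffBound q
  le_four_pow {k q : ℕ} : w k q ≠ 0 → q ≤ 4 ^ k

/-- The pointwise majorant of the values `|w k q|` of admissible weights. -/
def coeffMajorant (q : ℕ) : ℝ≥0 :=
  ⟨coeffBound q / #q.divisors, div_nonneg (coeffBound_nonneg q) (by positivity)⟩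

theorem card_divisors_pos {q : ℕ} (hq : 0 < q) : (0 : ℝ) < #q.divisors := by
  exact_mod_cast card_pos.2 ⟨1, by simpa using hq.ne'⟩

theorem coeffMajorant_mul_card {q : ℕ} (hq : 0 < q) :
    (coeffMajorant q : ℝ) * #q.divisors = coeffBound q :=
  div_mul_cancel₀ _ (card_divisors_pos hq).ne'

theorem Admissible.abs_le (hw : Admissible w) (k : ℕ) {q : ℕ} (hq : 0 < q) :
    |w k q| ≤ coeffMajorant q :=
  (le_div_iff₀ (card_divisors_pos hq)).2 (hw.abs_mul_card_divisors_le k q)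

/-- The combination `n ↦ ∑ q ∈ B, w q * c_q(n + β)` of shifted Ramanujan sums. -/
def ramanujanKernel (w : ℕ → ℝ) (β : ℤ) (B : Finset ℕ) (n : ℤ) : ℝ :=
  ∑ q ∈ B, w q * ramanujanSum (n + β) q

/-- The average of `f` over `[0, M)` weighted by `ramanujanKernel w β B`. -/
def ramanujanAvg (w : ℕ → ℝ) (β : ℤ) (B : Finset ℕ) (M : ℕ) (f : ℤ → ℝ≥0) (x : ℤ) : ℝ :=
  (∑ m ∈ range M, ramanujanKernel w β B m * f (x - m)) / M

/-- The maximal function of `ramanujanAvg` over the scales `scale k` with `k < K`. -/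
def ramanujanMax (w : ℕ → ℕ → ℝ) (β : ℤ) (B : Finset ℕ) (K : ℕ) (f : ℤ → ℝ≥0) (x : ℤ) : ℝ≥0 :=
  (range K).sup fun k => ‖ramanujanAvg (w k) β B (scale k) f x‖₊

theorem nnnorm_ramanujanAvg_le_ramanujanMax (w : ℕ → ℕ → ℝ) (β : ℤ) (B : Finset ℕ) {K k : ℕ}
    (hk : k < K) (f : ℤ → ℝ≥0) (x : ℤ) :
    ‖ramanujanAvg (w k) β B (scale k) f x‖₊ ≤ ramanujanMax w β B K f x :=
  le_sup (f := fun k => ‖ramanujanAvg (w k) β B (scale k) f x‖₊) (mem_range.2 hk)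

theorem ramanujanAvg_add (w : ℕ → ℝ) (β : ℤ) (B : Finset ℕ) (M : ℕ) (f g : ℤ → ℝ≥0) (x : ℤ) :
    ramanujanAvg w β B M (f + g) x = ramanujanAvg w β B M f x + ramanujanAvg w β B M g x := by
  simp only [ramanujanAvg, Pi.add_apply, NNReal.coe_add, mul_add, sum_add_distrib, add_div]

theorem ramanujanMax_add_le (w : ℕ → ℕ → ℝ) (β : ℤ) (B : Finset ℕ) (K : ℕ) (f g : ℤ → ℝ≥0) :
    ramanujanMax w β B K (f + g) ≤ ramanujanMax w β B K f + ramanujanMax w β B K g := fun x =>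
  Finset.sup_le fun k hk => by
    rw [ramanujanAvg_add]
    exact (nnnorm_add_le _ _).trans (add_le_add
      (nnnorm_ramanujanAvg_le_ramanujanMax w β B (mem_range.1 hk) f x)
      (nnnorm_ramanujanAvg_le_ramanujanMax w β B (mem_range.1 hk) g x))

theorem sum_abs_ramanujanSum_mul_le {q M L : ℕ} (hqM : q ≤ M) (hL : M < L) (β x : ℤ)
    (f : ℤ → ℝ≥0) :
    ∑ m ∈ range M, |ramanujanSum (m + β) q| * (f (x - m) : ℝ) ≤
      2 * M * ∑ d ∈ q.divisors, (maxAvg (· - (d : ℤ)) L f (x - (-β) % d) : ℝ) := by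
  calc ∑ m ∈ range M, |ramanujanSum (m + β) q| * (f (x - m) : ℝ)
      ≤ ∑ m ∈ range M, ∑ d ∈ q.divisors, dvdWeight (m + β) d * (f (x - m) : ℝ) := by
        gcongr with m
        rw [← sum_mul]
        gcongr
        exact abs_ramanujanSum_le _ _
    _ = ∑ d ∈ q.divisors, ∑ m ∈ range M, dvdWeight (m + β) d * (f (x - m) : ℝ) := sum_comm
    _ ≤ ∑ d ∈ q.divisors, 2 * M * (maxAvg (· - (d : ℤ)) L f (x - (-β) % d) : ℝ) := by
        refine sum_le_sum fun d hd => ?_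
        simpa only [one_mul] using sum_dvdWeight_mul_le (Nat.pos_of_mem_divisors hd)
          ((Nat.divisor_le hd).trans hqM) hL β 1 x f
    _ = _ := by rw [mul_sum]

theorem abs_sum_ramanujanKernel_mul_le (w : ℕ → ℝ) (β : ℤ) (B : Finset ℕ) (M : ℕ)
    (f : ℤ → ℝ≥0) (x : ℤ) :
    |∑ m ∈ range M, ramanujanKernel w β B m * (f (x - m) : ℝ)| ≤
      ∑ q ∈ B, |w q| * ∑ m ∈ range M, |ramanujanSum (m + β) q| * (f (x - m) : ℝ) := by
  calc |∑ m ∈ range M, ramanujanKernel w β B m * (f (x - m) : ℝ)|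
      ≤ ∑ m ∈ range M, ∑ q ∈ B, |w q| * |ramanujanSum (m + β) q| * (f (x - m) : ℝ) := by
        refine (abs_sum_le_sum_abs _ _).trans (sum_le_sum fun m _ => ?_)
        rw [abs_mul, NNReal.abs_eq, ← sum_mul]
        gcongr
        exact (abs_sum_le_sum_abs _ _).trans_eq (sum_congr rfl fun q _ => abs_mul _ _)
    _ = _ := by
        rw [sum_comm]
        simp only [mul_sum, mul_assoc]

theorem Admissible.nnnorm_ramanujanAvg_le (hw : Admissible w) (β : ℤ) {B : Finset ℕ}
    (hB : ∀ q ∈ B, 0 < q) {k L : ℕ} (hL : scale k < L) (f : ℤ → ℝ≥0) (x : ℤ) :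
    ‖ramanujanAvg (w k) β B (scale k) f x‖₊ ≤
      ∑ q ∈ B, ∑ d ∈ q.divisors,
        2 * coeffMajorant q * maxAvg (· - (d : ℤ)) L f (x - (-β) % d) := by
  rw [← NNReal.coe_le_coe, coe_nnnorm, Real.norm_eq_abs, ramanujanAvg, abs_div, Nat.abs_cast,
    div_le_iff₀ (cast_scale_pos k)]
  refine (abs_sum_ramanujanKernel_mul_le _ _ _ _ _ _).trans ?_
  rw [NNReal.coe_sum, sum_mul]
  refine sum_le_sum fun q hq => ?_
  by_cases h0 : w k q = 0
  · rw [h0, abs_zero, zero_mul]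
    positivity
  · calc |w k q| * ∑ m ∈ range (scale k), |ramanujanSum (m + β) q| * (f (x - m) : ℝ)
        ≤ coeffMajorant q * (2 * scale k *
            ∑ d ∈ q.divisors, (maxAvg (· - (d : ℤ)) L f (x - (-β) % d) : ℝ)) := by
          gcongr
          · exact hw.abs_le k (hB q hq)
          · exact sum_abs_ramanujanSum_mul_le
              ((hw.le_four_pow h0).trans (four_pow_le_scale k)) hL β x f
      _ = _ := by
          rw [← mul_sum]
          push_cast
          ring

theorem exists_strongType_ramanujanMax {p : ℝ} (hp : 1 < p) :
    ∃ C : ℝ, 0 ≤ C ∧ ∀ w, Admissible w → ∀ β K (B : Finset ℕ), (∀ q ∈ B, 0 < q) →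
      StrongType (ramanujanMax w β B K) p (ENNReal.ofReal (C * ∑ q ∈ B, coeffBound q)) := by
  obtain ⟨C, hC⟩ := exists_strongType_maxAvg ℤ hp
  refine ⟨2 * C, by positivity, fun w hw β K B hB f hf => ?_⟩
  have hp0 : 0 < p := by linarith
  set L := scale K + 1
  have hshift : ∀ d : ℕ, ellNorm p (fun x => maxAvg (· - (d : ℤ)) L f (x - (-β) % d)) ≤
      C * ellNorm p f := fun d =>
    (ellNorm_comp_equiv p (Equiv.subRight ((-β) % (d : ℤ))) _).trans_le
      (hC _ (sub_left_injective) L f hf)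
  calc ellNorm p (ramanujanMax w β B K f)
      ≤ ellNorm p fun x => ∑ q ∈ B, ∑ d ∈ q.divisors,
          2 * coeffMajorant q * maxAvg (· - (d : ℤ)) L f (x - (-β) % d) :=
        ellNorm_mono hp0 fun x => Finset.sup_le fun k hk => hw.nnnorm_ramanujanAvg_le β hB
          (Nat.lt_succ_of_le (scale_mono (mem_range.1 hk).le)) f x
    _ ≤ ∑ q ∈ B, ∑ _ ∈ q.divisors,
          ((2 * coeffMajorant q : ℝ≥0) : ℝ≥0∞) * (C * ellNorm p f) := by
        refine (ellNorm_sum_le hp.le _ _).trans (sum_le_sum fun q _ => ?_)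
        refine (ellNorm_sum_le hp.le _ _).trans (sum_le_sum fun d _ => ?_)
        rw [ellNorm_const_mul hp0]
        gcongr
        exact hshift d
    _ = ((∑ q ∈ B, 2 * C * (coeffMajorant q * #q.divisors) : ℝ≥0) : ℝ≥0∞) * ellNorm p f := by
        simp only [sum_const, nsmul_eq_mul]
        push_cast
        rw [sum_mul]
        exact sum_congr rfl fun q _ => by ring
    _ = ENNReal.ofReal (2 * C * ∑ q ∈ B, coeffBound q) * ellNorm p f := by
        rw [← ENNReal.ofReal_coe_nnreal, mul_sum]
        push_cast
        congr 2
        exact sum_congr rfl fun q hq => by rw [coeffMajorant_mul_card (hB q hq)]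

end RamanujanMax

section Correlation

variable {w : ℕ → ℕ → ℝ}

theorem sum_ramanujanKernel_mul_eq (w w' : ℕ → ℝ) (β : ℤ) (B : Finset ℕ) (I : Finset ℤ)
    (x x' : ℤ) :
    ∑ y ∈ I, ramanujanKernel w β B (x - y) * ramanujanKernel w' β B (x' - y) =
      ∑ q ∈ B, ∑ q' ∈ B, w q * w' q' *
        ∑ y ∈ I, ramanujanSum (x + β - y) q * ramanujanSum (x' + β - y) q' := by
  simp_rw [ramanujanKernel, sum_mul_sum, mul_sum]
  rw [sum_comm]
  refine sum_congr rfl fun q _ => ?_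
  rw [sum_comm]
  refine sum_congr rfl fun q' _ => sum_congr rfl fun y _ => ?_
  rw [sub_add_eq_add_sub, sub_add_eq_add_sub]
  ring

theorem abs_sum_ramanujanKernel_mul_sub_le (w w' : ℕ → ℝ) (β : ℤ) {B : Finset ℕ}
    (hB : ∀ q ∈ B, 0 < q) (a b x x' : ℤ) :
    |∑ y ∈ Ioc a b, ramanujanKernel w β B (x - y) * ramanujanKernel w' β B (x' - y) -
        #(Ioc a b) * ∑ q ∈ B, w q * w' q * ramanujanSum (x' - x) q| ≤
      (∑ q ∈ B, |w q| * ∑ d ∈ q.divisors, (d : ℝ)) *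
        ∑ q ∈ B, |w' q| * ∑ d ∈ q.divisors, (d : ℝ) := by
  have hdiag : #(Ioc a b) * ∑ q ∈ B, w q * w' q * ramanujanSum (x' - x) q =
      ∑ q ∈ B, ∑ q' ∈ B, w q * w' q' *
        (#(Ioc a b) * if q = q' then ramanujanSum (x' - x) q else 0) := by
    simp only [mul_ite, mul_zero, sum_ite_eq, mul_sum]
    exact sum_congr rfl fun q hq => by rw [if_pos hq]; ring
  rw [sum_ramanujanKernel_mul_eq, hdiag, ← sum_sub_distrib, sum_mul_sum]
  refine (abs_sum_le_sum_abs _ _).trans (sum_le_sum fun q hq => ?_)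
  rw [← sum_sub_distrib]
  refine (abs_sum_le_sum_abs _ _).trans (sum_le_sum fun q' hq' => ?_)
  rw [← mul_sub, abs_mul, abs_mul, mul_mul_mul_comm]
  gcongr
  simpa only [add_sub_add_right_eq_sub] using
    abs_sum_ramanujanSum_mul_sub_le a b (x + β) (x' + β) (hB q hq) (hB q' hq')

/-- A majorant at distance `h` of the main term in the correlation of two admissible kernels
supported on the frequencies of the dyadic block `s`. -/
def blockCorrelation (s : ℕ) (h : ℤ) : ℝ :=
  ∑ q ∈ dyadicBlock s, ∑ d ∈ q.divisors, (coeffMajorant q : ℝ) ^ 2 * dvdWeight h d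

theorem blockCorrelation_nonneg (s : ℕ) (h : ℤ) : 0 ≤ blockCorrelation s h :=
  sum_nonneg fun _ _ => sum_nonneg fun d _ => mul_nonneg (by positivity) (dvdWeight_nonneg h d)

theorem orthogonalityError_nonneg (s : ℕ) : 0 ≤ orthogonalityError s := by
  unfold orthogonalityError
  positivity

theorem Admissible.abs_sum_mul_ramanujanSum_le (hw : Admissible w) (s j k : ℕ) (h : ℤ) :
    |∑ q ∈ dyadicBlock s, w k q * w j q * ramanujanSum h q| ≤ blockCorrelation s h := by
  refine (abs_sum_le_sum_abs _ _).trans (sum_le_sum fun q hq => ?_)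
  have hq0 := pos_of_mem_dyadicBlock hq
  rw [abs_mul, abs_mul, ← mul_sum, sq]
  gcongr
  · exact hw.abs_le k hq0
  · exact hw.abs_le j hq0
  · exact abs_ramanujanSum_le h q

theorem Admissible.sum_abs_mul_sum_divisors_le (hw : Admissible w) (s k : ℕ) :
    ∑ q ∈ dyadicBlock s, |w k q| * ∑ d ∈ q.divisors, (d : ℝ) ≤
      ∑ q ∈ dyadicBlock s, coeffBound q * q := by
  refine sum_le_sum fun q hq => ?_
  have hq0 := pos_of_mem_dyadicBlock hq
  calc |w k q| * ∑ d ∈ q.divisors, (d : ℝ) ≤ coeffMajorant q * ∑ _ ∈ q.divisors, (q : ℝ) := by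
        gcongr with d hd
        · exact hw.abs_le k hq0
        · exact Nat.divisor_le hd
    _ = _ := by rw [sum_const, nsmul_eq_mul, ← coeffMajorant_mul_card hq0]; ring

theorem Admissible.abs_sum_ramanujanKernel_mul_le (hw : Admissible w) (β : ℤ) (s j k : ℕ)
    (a b x x' : ℤ) :
    |∑ y ∈ Ioc a b, ramanujanKernel (w k) β (dyadicBlock s) (x - y) *
        ramanujanKernel (w j) β (dyadicBlock s) (x' - y)| ≤
      #(Ioc a b) * blockCorrelation s (x' - x) + (∑ q ∈ dyadicBlock s, coeffBound q * q) ^ 2 := by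
  have hdiff := abs_sum_ramanujanKernel_mul_sub_le (w k) (w j) β
    (fun q hq => pos_of_mem_dyadicBlock (s := s) hq) a b x x'
  have hmain : |(#(Ioc a b) : ℝ) * ∑ q ∈ dyadicBlock s, w k q * w j q * ramanujanSum (x' - x) q| ≤
      #(Ioc a b) * blockCorrelation s (x' - x) := by
    rw [abs_mul, Nat.abs_cast]
    gcongr
    exact hw.abs_sum_mul_ramanujanSum_le s j k _
  have herror : (∑ q ∈ dyadicBlock s, |w k q| * ∑ d ∈ q.divisors, (d : ℝ)) *
      ∑ q ∈ dyadicBlock s, |w j q| * ∑ d ∈ q.divisors, (d : ℝ) ≤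
      (∑ q ∈ dyadicBlock s, coeffBound q * q) ^ 2 := by
    rw [sq]
    exact mul_le_mul (hw.sum_abs_mul_sum_divisors_le s k) (hw.sum_abs_mul_sum_divisors_le s j)
      (by positivity) (sum_nonneg fun q _ => mul_nonneg (coeffBound_nonneg q) q.cast_nonneg)
  linarith [abs_sub_abs_le_abs_sub
    (∑ y ∈ Ioc a b, ramanujanKernel (w k) β (dyadicBlock s) (x - y) *
      ramanujanKernel (w j) β (dyadicBlock s) (x' - y))
    (#(Ioc a b) * ∑ q ∈ dyadicBlock s, w k q * w j q * ramanujanSum (x' - x) q)]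

/-- The kernel of `ramanujanAvg` as a function of two variables. -/
def avgKernel (w : ℕ → ℝ) (β : ℤ) (B : Finset ℕ) (M : ℕ) (x y : ℤ) : ℝ :=
  (if y ∈ Ioc (x - M) x then ramanujanKernel w β B (x - y) else 0) / M

theorem sum_Ioc_sub_eq_sum_range (g : ℤ → ℝ) (M : ℕ) (x : ℤ) :
    ∑ y ∈ Ioc (x - M) x, g y = ∑ m ∈ range M, g (x - m) := by
  refine (sum_bij' (fun (m : ℕ) _ => x - (m : ℤ)) (fun y _ => (x - y).toNat)
    ?_ ?_ ?_ ?_ ?_).symm <;> intro _ h <;> simp only [mem_Ioc, mem_range] at * <;> omega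

theorem ramanujanAvg_eq_sum_avgKernel (w : ℕ → ℝ) (β : ℤ) (B : Finset ℕ) (M : ℕ) (x : ℤ)
    (f : ℤ → ℝ≥0) {Y : Finset ℤ} (hY : Ioc (x - M) x ⊆ Y) :
    ramanujanAvg w β B M f x = ∑ y ∈ Y, avgKernel w β B M x y * f y := by
  simp only [ramanujanAvg, avgKernel, div_mul_eq_mul_div, ite_mul, zero_mul]
  rw [← sum_div, ← sum_filter, filter_mem_eq_inter, inter_eq_right.2 hY,
    sum_Ioc_sub_eq_sum_range]
  simp only [sub_sub_cancel]

theorem sum_avgKernel_mul_eq (w w' : ℕ → ℝ) (β : ℤ) (B : Finset ℕ) (M M' : ℕ) {x x' : ℤ}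
    {Y : Finset ℤ} (hY : Ioc (x - M) x ⊆ Y) :
    ∑ y ∈ Y, avgKernel w β B M x y * avgKernel w' β B M' x' y =
      (∑ y ∈ Ioc (max (x - M) (x' - M')) (min x x'),
        ramanujanKernel w β B (x - y) * ramanujanKernel w' β B (x' - y)) / (M * M') := by
  simp only [avgKernel, div_mul_div_comm, ite_zero_mul_ite_zero, ← mem_inter, Ioc_inter_Ioc]
  rw [← sum_div, ← sum_filter, filter_mem_eq_inter,
    inter_eq_right.2 ((Ioc_subset_Ioc le_sup_left inf_le_left).trans hY)]

/-- A majorant of the correlation at distance `h` of the averaging kernels of the dyadic block `s`,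
the larger of the two scales being `scale k`. -/
def correlationMajorant (s k : ℕ) (h : ℤ) : ℝ :=
  if |h| < scale k ∧ 2 ^ s ≤ 4 ^ k then
    (blockCorrelation s h + orthogonalityError s) / scale k
  else 0

theorem correlationMajorant_nonneg (s k : ℕ) (h : ℤ) : 0 ≤ correlationMajorant s k h := by
  unfold correlationMajorant
  have := blockCorrelation_nonneg s h
  have := orthogonalityError_nonneg s
  split_ifs <;> positivity

theorem Admissible.ramanujanKernel_eq_zero (hw : Admissible w) (β : ℤ) {s k : ℕ}
    (h : ¬2 ^ s ≤ 4 ^ k) (n : ℤ) : ramanujanKernel (w k) β (dyadicBlock s) n = 0 :=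
  sum_eq_zero fun q hq => by
    have h0 : w k q = 0 := not_ne_iff.1 fun h0 =>
      h ((mem_Ico.1 hq).1.trans (hw.le_four_pow h0))
    rw [h0, zero_mul]

theorem two_pow_mul_le_scale {s k : ℕ} (h : 2 ^ s ≤ 4 ^ k) : 2 ^ (8 * s) ≤ scale k := by
  rw [scale_eq_four_pow, mul_comm, pow_mul]
  exact Nat.pow_le_pow_left h 8

theorem sq_sum_le_orthogonalityError_mul_scale {s k : ℕ} (h : 2 ^ s ≤ 4 ^ k) :
    (∑ q ∈ dyadicBlock s, coeffBound q * q) ^ 2 ≤ orthogonalityError s * scale k := by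
  rw [orthogonalityError, div_mul_eq_mul_div, le_div_iff₀ (by positivity)]
  gcongr
  exact_mod_cast two_pow_mul_le_scale h

theorem Admissible.abs_sum_avgKernel_mul_le_of_le (hw : Admissible w) (β : ℤ) (s : ℕ) {j k : ℕ}
    (hjk : j ≤ k) {x x' : ℤ} {Y : Finset ℤ} (hx : Ioc (x - scale k) x ⊆ Y) :
    |∑ y ∈ Y, avgKernel (w k) β (dyadicBlock s) (scale k) x y *
        avgKernel (w j) β (dyadicBlock s) (scale j) x' y| ≤ correlationMajorant s k (x' - x) := by
  by_cases hs : 2 ^ s ≤ 4 ^ j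
  swap
  · rw [sum_eq_zero fun y _ => by simp [avgKernel, hw.ramanujanKernel_eq_zero β hs], abs_zero]
    exact correlationMajorant_nonneg _ _ _
  rw [sum_avgKernel_mul_eq _ _ _ _ _ _ hx]
  set a := max (x - scale k) (x' - scale j)
  set b := min x x'
  rcases (Ioc a b).eq_empty_or_nonempty with hab | ⟨y, hy⟩
  · rw [hab]
    simpa using correlationMajorant_nonneg _ _ _
  have hdist : |x' - x| < scale k := by
    have := scale_mono hjk
    simp only [a, b, mem_Ioc, max_lt_iff, le_min_iff] at hy
    rw [abs_lt]
    omega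
  have hcard : (#(Ioc a b) : ℝ) ≤ scale j := by
    have : #(Ioc a b) ≤ #(Ioc (x' - scale j) x') :=
      card_le_card (Ioc_subset_Ioc (le_max_right _ _) (min_le_right _ _))
    rw [Int.card_Ioc (_ - _), sub_sub_cancel, Int.toNat_natCast] at this
    exact_mod_cast this
  have hj := cast_scale_pos j
  rw [correlationMajorant, if_pos ⟨hdist, hs.trans (Nat.pow_le_pow_right (by norm_num) hjk)⟩,
    abs_div, abs_mul, Nat.abs_cast, Nat.abs_cast, mul_comm (scale k : ℝ), ← div_div]
  gcongr
  rw [div_le_iff₀ hj, add_mul, mul_comm (blockCorrelation _ _)]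
  refine (hw.abs_sum_ramanujanKernel_mul_le β s j k a b x x').trans (add_le_add ?_
    (sq_sum_le_orthogonalityError_mul_scale hs))
  exact mul_le_mul_of_nonneg_right hcard (blockCorrelation_nonneg _ _)

theorem Admissible.abs_sum_avgKernel_mul_le (hw : Admissible w) (β : ℤ) (s j k : ℕ)
    {x x' : ℤ} {Y : Finset ℤ} (hx : Ioc (x - scale k) x ⊆ Y) (hx' : Ioc (x' - scale j) x' ⊆ Y) :
    |∑ y ∈ Y, avgKernel (w k) β (dyadicBlock s) (scale k) x y *
        avgKernel (w j) β (dyadicBlock s) (scale j) x' y| ≤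
      correlationMajorant s k (x' - x) + correlationMajorant s j (x - x') := by
  rcases le_total j k with h | h
  · exact (hw.abs_sum_avgKernel_mul_le_of_le β s h hx).trans
      (le_add_of_nonneg_right (correlationMajorant_nonneg _ _ _))
  · simp_rw [mul_comm (avgKernel (w k) _ _ _ _ _)]
    exact (hw.abs_sum_avgKernel_mul_le_of_le β s h hx').trans
      (le_add_of_nonneg_left (correlationMajorant_nonneg _ _ _))

end Correlation

/-- The `TT*` method for a finite linear operator, tested on its own output. -/
theorem sum_sq_le_of_correlation {ι κ : Type*} (X : Finset ι) (Y : Finset κ) (Φ : ι → κ → ℝ)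
    (f : κ → ℝ) {D : ℝ} (hD : 0 ≤ D)
    (h : ∑ x ∈ X, ∑ x' ∈ X, |∑ y ∈ Y, Φ x y * f y| * |∑ y ∈ Y, Φ x' y * f y| *
      |∑ y ∈ Y, Φ x y * Φ x' y| ≤ D * ∑ x ∈ X, (∑ y ∈ Y, Φ x y * f y) ^ 2) :
    ∑ x ∈ X, (∑ y ∈ Y, Φ x y * f y) ^ 2 ≤ D * ∑ y ∈ Y, f y ^ 2 := by
  set u : ι → ℝ := fun x => ∑ y ∈ Y, Φ x y * f y
  set S := ∑ x ∈ X, u x ^ 2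
  set F := ∑ y ∈ Y, f y ^ 2
  have hadjoint : S = ∑ y ∈ Y, f y * ∑ x ∈ X, u x * Φ x y := by
    simp_rw [S, sq, mul_sum]
    rw [sum_comm]
    refine sum_congr rfl fun x _ => ?_
    rw [show u x * u x = u x * ∑ y ∈ Y, Φ x y * f y from rfl, mul_sum]
    exact sum_congr rfl fun y _ => by ring
  have hdual : ∑ y ∈ Y, (∑ x ∈ X, u x * Φ x y) ^ 2 ≤ D * S := by
    calc ∑ y ∈ Y, (∑ x ∈ X, u x * Φ x y) ^ 2
        = ∑ x ∈ X, ∑ x' ∈ X, u x * u x' * ∑ y ∈ Y, Φ x y * Φ x' y := by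
          simp_rw [sq, sum_mul_sum, mul_sum]
          rw [sum_comm]
          refine sum_congr rfl fun x _ => ?_
          rw [sum_comm]
          exact sum_congr rfl fun x' _ => sum_congr rfl fun y _ => by ring
      _ ≤ ∑ x ∈ X, ∑ x' ∈ X, |u x| * |u x'| * |∑ y ∈ Y, Φ x y * Φ x' y| := by
          refine sum_le_sum fun x _ => sum_le_sum fun x' _ => ?_
          rw [← abs_mul, ← abs_mul]
          exact le_abs_self _
      _ ≤ D * S := h
  have hS : S ^ 2 ≤ F * (D * S) := by
    calc S ^ 2 ≤ F * ∑ y ∈ Y, (∑ x ∈ X, u x * Φ x y) ^ 2 := by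
          rw [hadjoint]; exact sum_mul_sq_le_sq_mul_sq _ _ _
      _ ≤ F * (D * S) := by gcongr
  rcases (show 0 ≤ S by positivity).eq_or_lt with h0 | h0
  · rw [← h0]
    positivity
  · nlinarith

section CorrelationMax

theorem dvdWeight_neg (n : ℤ) (d : ℕ) : dvdWeight (-n) d = dvdWeight n d := by
  simp [dvdWeight_apply]

theorem dvdWeight_one (n : ℤ) : dvdWeight n 1 = 1 := by simp [dvdWeight_apply]

/-- The sum of the backward and the forward maximal averages along progressions of step `d`. -/
def twoSidedMaxAvg (L : ℕ) (d : ℤ) (f : ℤ → ℝ≥0) (x : ℤ) : ℝ≥0 :=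
  maxAvg (· - d) L f x + maxAvg (· + d) L f x

theorem exists_strongType_twoSidedMaxAvg {p : ℝ} (hp : 1 < p) :
    ∃ C : ℝ≥0, ∀ L d, StrongType (twoSidedMaxAvg L d) p C := by
  obtain ⟨C, hC⟩ := exists_strongType_maxAvg ℤ hp
  refine ⟨2 * C, fun L d f hf => ?_⟩
  calc ellNorm p (twoSidedMaxAvg L d f)
      ≤ C * ellNorm p f + C * ellNorm p f := (ellNorm_add_le hp.le _ _).trans (add_le_add
        (hC _ sub_left_injective L f hf) (hC _ (add_left_injective d) L f hf))
    _ = _ := by push_cast; ring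

theorem sum_filter_abs_sub_lt_le {g : ℤ → ℝ} (hg : ∀ x, 0 ≤ g x) (M : ℕ) (x : ℤ) (X : Finset ℤ) :
    ∑ x' ∈ X with |x' - x| < M, g x' ≤
      ∑ m ∈ range M, g (x - m) + ∑ m ∈ range M, g (x + m) := by
  have hcover : {x' ∈ X | |x' - x| < M} ⊆
      (range M).image (fun m : ℕ => x - (m : ℤ)) ∪ (range M).image fun m : ℕ => x + (m : ℤ) := by
    intro x' hx'
    have h := abs_lt.1 (mem_filter.1 hx').2
    rw [mem_union, mem_image, mem_image]
    rcases le_total x' x with hle | hle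
    · exact .inl ⟨(x - x').toNat, by rw [mem_range]; omega, by omega⟩
    · exact .inr ⟨(x' - x).toNat, by rw [mem_range]; omega, by omega⟩
  calc ∑ x' ∈ X with |x' - x| < M, g x'
      ≤ ∑ x' ∈ (range M).image (fun m : ℕ => x - (m : ℤ)) ∪
          (range M).image fun m : ℕ => x + (m : ℤ), g x' :=
        sum_le_sum_of_subset_of_nonneg hcover fun x' _ _ => hg x'
    _ ≤ ∑ x' ∈ (range M).image (fun m : ℕ => x - (m : ℤ)), g x' +
          ∑ x' ∈ (range M).image (fun m : ℕ => x + (m : ℤ)), g x' := by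
        rw [← sum_union_inter]
        exact le_add_of_nonneg_right (sum_nonneg fun x' _ => hg x')
    _ = _ := by rw [sum_image (by simp), sum_image (by simp)]

theorem sum_filter_dvdWeight_mul_le {L M d : ℕ} (hd : 0 < d) (hdM : d ≤ M) (hL : M < L) (x : ℤ)
    (f : ℤ → ℝ≥0) (X : Finset ℤ) :
    ∑ x' ∈ X with |x' - x| < M, dvdWeight (x' - x) d * (f x' : ℝ) ≤
      2 * M * twoSidedMaxAvg L d f x := by
  have hback := sum_dvdWeight_mul_le hd hdM hL 0 1 x f
  have hforw := sum_dvdWeight_mul_le hd hdM hL 0 (-1) x f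
  simp only [add_zero, one_mul, neg_zero, Int.zero_emod, mul_zero, sub_zero, neg_mul,
    sub_neg_eq_add] at hback hforw
  have hsplit := sum_filter_abs_sub_lt_le
    (g := fun x' => dvdWeight (x' - x) d * (f x' : ℝ))
    (fun x' => mul_nonneg (dvdWeight_nonneg _ _) (f x').coe_nonneg) M x X
  simp only [sub_sub_cancel_left, dvdWeight_neg, add_sub_cancel_left] at hsplit
  rw [twoSidedMaxAvg, NNReal.coe_add]
  linarith

/-- The maximal function dominating convolution with `correlationMajorant s k` for all `k`. -/
def correlationMax (s L : ℕ) (f : ℤ → ℝ≥0) (x : ℤ) : ℝ≥0 :=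
  ∑ q ∈ dyadicBlock s, ∑ d ∈ q.divisors, 2 * coeffMajorant q ^ 2 * twoSidedMaxAvg L d f x +
    2 * (orthogonalityError s).toNNReal * twoSidedMaxAvg L 1 f x

theorem le_scale_of_mem_dyadicBlock {s k q : ℕ} (hs : 2 ^ s ≤ 4 ^ k) (hq : q ∈ dyadicBlock s) :
    q ≤ scale k := by
  have hlt := (mem_Ico.1 hq).2
  rcases s.eq_zero_or_pos with rfl | hs0
  · have := scale_pos k
    omega
  · exact hlt.le.trans ((Nat.pow_le_pow_right two_pos (by omega)).trans (two_pow_mul_le_scale hs))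

theorem mul_correlationMajorant_eq {s k : ℕ} (hs : 2 ^ s ≤ 4 ^ k) (h : ℤ) (c : ℝ) :
    correlationMajorant s k h * c =
      if |h| < scale k then
        (∑ q ∈ dyadicBlock s, ∑ d ∈ q.divisors,
            (coeffMajorant q : ℝ) ^ 2 * (dvdWeight h d * c) +
          orthogonalityError s * (dvdWeight h 1 * c)) / scale k
      else 0 := by
  simp only [correlationMajorant, hs, and_true, ite_mul, zero_mul, dvdWeight_one, one_mul,
    div_mul_eq_mul_div, add_mul, blockCorrelation, sum_mul, mul_assoc]

theorem sum_correlationMajorant_mul_eq {s k : ℕ} (hs : 2 ^ s ≤ 4 ^ k) (X : Finset ℤ)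
    (f : ℤ → ℝ≥0) (x : ℤ) :
    ∑ x' ∈ X, correlationMajorant s k (x' - x) * (f x' : ℝ) =
      (∑ q ∈ dyadicBlock s, ∑ d ∈ q.divisors, (coeffMajorant q : ℝ) ^ 2 *
          ∑ x' ∈ X with |x' - x| < scale k, dvdWeight (x' - x) d * (f x' : ℝ) +
        orthogonalityError s *
          ∑ x' ∈ X with |x' - x| < scale k, dvdWeight (x' - x) 1 * (f x' : ℝ)) / scale k := by
  simp only [mul_correlationMajorant_eq hs]
  rw [← sum_filter, ← sum_div, sum_add_distrib, sum_comm, ← mul_sum]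
  congr 2
  refine sum_congr rfl fun q _ => ?_
  rw [sum_comm]
  simp only [mul_sum]

theorem sum_correlationMajorant_mul_le {s k L : ℕ} (hL : scale k < L) (X : Finset ℤ)
    (f : ℤ → ℝ≥0) (x : ℤ) :
    ∑ x' ∈ X, correlationMajorant s k (x' - x) * (f x' : ℝ) ≤ correlationMax s L f x := by
  by_cases hs : 2 ^ s ≤ 4 ^ k
  swap
  · simp [correlationMajorant, hs]
  rw [sum_correlationMajorant_mul_eq hs, div_le_iff₀ (cast_scale_pos k), correlationMax]
  push_cast
  rw [Real.coe_toNNReal _ (orthogonalityError_nonneg s), add_mul, sum_mul]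
  refine add_le_add (sum_le_sum fun q hq => ?_) ?_
  · rw [sum_mul]
    refine sum_le_sum fun d hd => ?_
    calc (coeffMajorant q : ℝ) ^ 2 *
          ∑ x' ∈ X with |x' - x| < scale k, dvdWeight (x' - x) d * (f x' : ℝ)
        ≤ (coeffMajorant q : ℝ) ^ 2 * (2 * scale k * twoSidedMaxAvg L d f x) := by
          gcongr
          exact sum_filter_dvdWeight_mul_le (Nat.pos_of_mem_divisors hd)
            ((Nat.divisor_le hd).trans (le_scale_of_mem_dyadicBlock hs hq)) hL x f X
      _ = _ := by ring
  · calc orthogonalityError s *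
          ∑ x' ∈ X with |x' - x| < scale k, dvdWeight (x' - x) 1 * (f x' : ℝ)
        ≤ orthogonalityError s * (2 * scale k * twoSidedMaxAvg L (1 : ℕ) f x) :=
          mul_le_mul_of_nonneg_left (sum_filter_dvdWeight_mul_le one_pos (scale_pos k) hL x f X)
            (orthogonalityError_nonneg s)
      _ = _ := by rw [Nat.cast_one]; ring

theorem coeffMajorant_sq_mul_card_le {q : ℕ} (hq : 0 < q) :
    (coeffMajorant q : ℝ) ^ 2 * #q.divisors ≤ coeffBound q ^ 2 := by
  have hcard : (1 : ℝ) ≤ #q.divisors := by exact_mod_cast card_divisors_pos hq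
  calc (coeffMajorant q : ℝ) ^ 2 * #q.divisors
      ≤ (coeffMajorant q : ℝ) ^ 2 * (#q.divisors : ℝ) ^ 2 := by
        gcongr
        exact le_self_pow₀ hcard two_ne_zero
    _ = coeffBound q ^ 2 := by rw [← mul_pow, coeffMajorant_mul_card hq]

theorem exists_strongType_correlationMax : ∃ C : ℝ, 0 ≤ C ∧ ∀ s L,
    StrongType (correlationMax s L) 2
      (ENNReal.ofReal (C * (∑ q ∈ dyadicBlock s, coeffBound q ^ 2 + orthogonalityError s))) := by
  obtain ⟨C, hC⟩ := exists_strongType_twoSidedMaxAvg (p := 2) one_lt_two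
  refine ⟨2 * C, by positivity, fun s L f hf => ?_⟩
  have hterm (c : ℝ≥0) (d : ℤ) :
      ellNorm 2 (fun x => c * twoSidedMaxAvg L d f x) ≤ ((c * C : ℝ≥0) : ℝ≥0∞) * ellNorm 2 f := by
    rw [ellNorm_const_mul two_pos, ENNReal.coe_mul, mul_assoc]
    gcongr
    exact hC L d f hf
  calc ellNorm 2 (correlationMax s L f)
      ≤ ∑ q ∈ dyadicBlock s, ∑ _ ∈ q.divisors,
            ((2 * coeffMajorant q ^ 2 * C : ℝ≥0) : ℝ≥0∞) * ellNorm 2 f +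
          ((2 * (orthogonalityError s).toNNReal * C : ℝ≥0) : ℝ≥0∞) * ellNorm 2 f := by
        refine (ellNorm_add_le one_le_two _ _).trans (add_le_add ?_ (hterm _ _))
        refine (ellNorm_sum_le one_le_two _ _).trans (sum_le_sum fun q _ => ?_)
        exact (ellNorm_sum_le one_le_two _ _).trans (sum_le_sum fun d _ => hterm _ _)
    _ = ((2 * C * (∑ q ∈ dyadicBlock s, coeffMajorant q ^ 2 * #q.divisors +
          (orthogonalityError s).toNNReal) : ℝ≥0) : ℝ≥0∞) * ellNorm 2 f := by
        simp only [sum_const, nsmul_eq_mul]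
        push_cast
        rw [mul_add, add_mul, mul_sum, sum_mul]
        congr 1
        · exact sum_congr rfl fun q _ => by ring
        · ring
    _ ≤ _ := by
        gcongr
        rw [← ENNReal.ofReal_coe_nnreal]
        refine ENNReal.ofReal_le_ofReal ?_
        push_cast
        rw [Real.coe_toNNReal _ (orthogonalityError_nonneg s)]
        gcongr with q hq
        exact coeffMajorant_sq_mul_card_le (pos_of_mem_dyadicBlock hq)

end CorrelationMax

section StrongTypeTwo

variable {α : Type*} {T : (α → ℝ≥0) → α → ℝ≥0}

theorem StrongType.sum_sq_le {D : ℝ} (hD : 0 ≤ D) (hT : StrongType T 2 (ENNReal.ofReal D))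
    {X : Finset α} {f : α → ℝ≥0} (hf : ∀ x ∉ X, f x = 0) :
    ∑ x ∈ X, (T f x : ℝ) ^ 2 ≤ D ^ 2 * ∑ x ∈ X, (f x : ℝ) ^ 2 := by
  have hfin : f.support.Finite := X.finite_toSet.subset fun x hx => not_imp_comm.1 (hf x) hx
  have h := ENNReal.rpow_le_rpow (hT f hfin) (z := 2) zero_le_two
  rw [ENNReal.mul_rpow_of_nonneg _ _ zero_le_two, ellNorm_rpow two_pos, ellNorm_rpow two_pos,
    tsum_eq_sum (s := X) (f := fun x => (f x : ℝ≥0∞) ^ (2 : ℝ)) fun x hx => by simp [hf x hx]] at h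
  have hX := (ENNReal.sum_le_tsum X).trans h
  simp only [ENNReal.rpow_two] at hX
  lift D to ℝ≥0 using hD
  rw [ENNReal.ofReal_coe_nnreal] at hX
  exact_mod_cast hX

theorem StrongType.sum_mul_le {D : ℝ} (hD : 0 ≤ D) (hT : StrongType T 2 (ENNReal.ofReal D))
    {X : Finset α} {f : α → ℝ≥0} (hf : ∀ x ∉ X, f x = 0) :
    ∑ x ∈ X, (f x : ℝ) * T f x ≤ D * ∑ x ∈ X, (f x : ℝ) ^ 2 := by
  refine le_of_sq_le_sq ?_ (by positivity)
  calc (∑ x ∈ X, (f x : ℝ) * T f x) ^ 2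
      ≤ (∑ x ∈ X, (f x : ℝ) ^ 2) * ∑ x ∈ X, (T f x : ℝ) ^ 2 := sum_mul_sq_le_sq_mul_sq _ _ _
    _ ≤ (∑ x ∈ X, (f x : ℝ) ^ 2) * (D ^ 2 * ∑ x ∈ X, (f x : ℝ) ^ 2) := by
        gcongr
        exact hT.sum_sq_le hD hf
    _ = _ := by ring

theorem strongType_two_of_sum_sq_le {D : ℝ} (hD : 0 ≤ D)
    (h : ∀ f : α → ℝ≥0, ∀ X : Finset α, ∃ Y : Finset α,
      ∑ x ∈ X, (T f x : ℝ) ^ 2 ≤ D ^ 2 * ∑ y ∈ Y, (f y : ℝ) ^ 2) :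
    StrongType T 2 (ENNReal.ofReal D) := by
  intro f _
  have hsq : ∑' x, (T f x : ℝ≥0∞) ^ (2 : ℝ) ≤
      ENNReal.ofReal D ^ (2 : ℝ) * ∑' x, (f x : ℝ≥0∞) ^ (2 : ℝ) := by
    rw [ENNReal.tsum_eq_iSup_sum]
    refine iSup_le fun X => ?_
    obtain ⟨Y, hY⟩ := h f X
    refine le_trans ?_ (mul_le_mul_right (ENNReal.sum_le_tsum Y) _)
    simp only [ENNReal.rpow_two]
    lift D to ℝ≥0 using hD
    rw [ENNReal.ofReal_coe_nnreal]
    exact_mod_cast hY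
  refine (ellNorm_le_of_tsum_rpow_le two_pos hsq).trans_eq ?_
  rw [← ENNReal.rpow_mul]
  norm_num

end StrongTypeTwo

section DyadicBlock

variable {w : ℕ → ℕ → ℝ}

theorem sum_mul_correlationMajorant_add_le {s L : ℕ} {D : ℝ} (hD : 0 ≤ D)
    (hmax : StrongType (correlationMax s L) 2 (ENNReal.ofReal D)) {κ : ℤ → ℕ}
    (hκ : ∀ x, scale (κ x) < L) {X : Finset ℤ} {v : ℤ → ℝ≥0} (hv : ∀ x ∉ X, v x = 0) :
    ∑ x ∈ X, ∑ x' ∈ X, (v x : ℝ) * v x' *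
        (correlationMajorant s (κ x) (x' - x) + correlationMajorant s (κ x') (x - x')) ≤
      2 * D * ∑ x ∈ X, (v x : ℝ) ^ 2 := by
  have hhalf : ∑ x ∈ X, ∑ x' ∈ X, (v x : ℝ) * v x' * correlationMajorant s (κ x) (x' - x) ≤
      D * ∑ x ∈ X, (v x : ℝ) ^ 2 := by
    refine (sum_le_sum fun x _ => ?_).trans (hmax.sum_mul_le hD hv)
    calc ∑ x' ∈ X, (v x : ℝ) * v x' * correlationMajorant s (κ x) (x' - x)
        = v x * ∑ x' ∈ X, correlationMajorant s (κ x) (x' - x) * (v x' : ℝ) := by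
          rw [mul_sum]
          exact sum_congr rfl fun x' _ => by ring
      _ ≤ v x * correlationMax s L v x := by
          gcongr
          exact sum_correlationMajorant_mul_le (hκ x) X v x
  have hswap : ∑ x ∈ X, ∑ x' ∈ X, (v x : ℝ) * v x' * correlationMajorant s (κ x') (x - x') =
      ∑ x ∈ X, ∑ x' ∈ X, (v x : ℝ) * v x' * correlationMajorant s (κ x) (x' - x) := by
    rw [sum_comm]
    exact sum_congr rfl fun x _ => sum_congr rfl fun x' _ => by ring
  simp only [mul_add, sum_add_distrib]
  rw [hswap]
  linarith

theorem exists_ramanujanMax_eq (w : ℕ → ℕ → ℝ) (β : ℤ) (B : Finset ℕ) {K : ℕ} (hK : 0 < K)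
    (f : ℤ → ℝ≥0) :
    ∃ κ : ℤ → ℕ, ∀ x, κ x < K ∧
      ramanujanMax w β B K f x = ‖ramanujanAvg (w (κ x)) β B (scale (κ x)) f x‖₊ := by
  choose κ hκ using fun x => exists_mem_eq_sup (range K) ⟨0, mem_range.2 hK⟩
    fun k => ‖ramanujanAvg (w k) β B (scale k) f x‖₊
  exact ⟨κ, fun x => ⟨mem_range.1 (hκ x).1, (hκ x).2⟩⟩

theorem Admissible.exists_sum_ramanujanMax_sq_le (hw : Admissible w) (β : ℤ) (K s : ℕ) {D : ℝ}
    (hD : 0 ≤ D) (hmax : ∀ L, StrongType (correlationMax s L) 2 (ENNReal.ofReal D))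
    (f : ℤ → ℝ≥0) (X : Finset ℤ) :
    ∃ Y : Finset ℤ, ∑ x ∈ X, (ramanujanMax w β (dyadicBlock s) K f x : ℝ) ^ 2 ≤
      2 * D * ∑ y ∈ Y, (f y : ℝ) ^ 2 := by
  rcases K.eq_zero_or_pos with rfl | hK
  · exact ⟨∅, by simp [ramanujanMax]⟩
  obtain ⟨κ, hκ⟩ := exists_ramanujanMax_eq w β (dyadicBlock s) hK f
  set Y : Finset ℤ := X.biUnion fun x => Ioc (x - scale (κ x)) x
  have hY : ∀ x ∈ X, Ioc (x - scale (κ x)) x ⊆ Y := fun x hx =>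
    subset_biUnion_of_mem (fun x : ℤ => Ioc (x - scale (κ x)) x) hx
  set v : ℤ → ℝ≥0 := fun x => if x ∈ X then ramanujanMax w β (dyadicBlock s) K f x else 0
  set Φ : ℤ → ℤ → ℝ := fun x y => avgKernel (w (κ x)) β (dyadicBlock s) (scale (κ x)) x y
  have hv : ∀ x ∈ X, (v x : ℝ) = ramanujanMax w β (dyadicBlock s) K f x :=
    fun x hx => congrArg _ (if_pos hx)
  have hu : ∀ x ∈ X, |∑ y ∈ Y, Φ x y * f y| = v x := fun x hx => by
    rw [← ramanujanAvg_eq_sum_avgKernel _ _ _ _ x f (hY x hx), hv x hx, (hκ x).2, coe_nnnorm,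
      Real.norm_eq_abs]
  have hsq : ∑ x ∈ X, (∑ y ∈ Y, Φ x y * f y) ^ 2 = ∑ x ∈ X, (v x : ℝ) ^ 2 :=
    sum_congr rfl fun x hx => by rw [← sq_abs, hu x hx]
  refine ⟨Y, ?_⟩
  calc ∑ x ∈ X, (ramanujanMax w β (dyadicBlock s) K f x : ℝ) ^ 2
      = ∑ x ∈ X, (∑ y ∈ Y, Φ x y * f y) ^ 2 := by
        rw [hsq]
        exact sum_congr rfl fun x hx => by rw [hv x hx]
    _ ≤ 2 * D * ∑ y ∈ Y, (f y : ℝ) ^ 2 := by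
        refine sum_sq_le_of_correlation X Y Φ (fun y => f y) (by positivity) ?_
        rw [hsq]
        refine (sum_le_sum fun x hx => sum_le_sum fun x' hx' => ?_).trans
          (sum_mul_correlationMajorant_add_le hD (hmax (scale K + 1))
            (fun x => Nat.lt_succ_of_le (scale_mono (hκ x).1.le)) fun x hx => if_neg hx)
        rw [hu x hx, hu x' hx']
        gcongr
        exact hw.abs_sum_avgKernel_mul_le β s _ _ (hY x hx) (hY x' hx')

theorem exists_strongType_two_ramanujanMax_dyadicBlock :
    ∃ C : ℝ, 0 ≤ C ∧ ∀ w, Admissible w → ∀ β K s,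
      StrongType (ramanujanMax w β (dyadicBlock s) K) 2
        (ENNReal.ofReal (C * 2 ^ (-(1 / 4) * s : ℝ))) := by
  obtain ⟨C₁, hC₁, hmax⟩ := exists_strongType_correlationMax
  obtain ⟨C₂, hC₂, hsum⟩ := exists_sum_coeffBound_sq_add_orthogonalityError_le
  refine ⟨√(2 * C₁ * C₂), by positivity, fun w hw β K s => ?_⟩
  refine strongType_two_of_sum_sq_le (by positivity) fun f X => ?_
  set D := C₁ * (C₂ * (2 : ℝ) ^ (-(1 / 2 : ℝ) * s))
  obtain ⟨Y, hY⟩ := hw.exists_sum_ramanujanMax_sq_le β K s (D := D) (by positivity)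
    (fun L f hf => (hmax s L f hf).trans
      (by gcongr; exact mul_le_mul_of_nonneg_left (hsum s) hC₁)) f X
  refine ⟨Y, hY.trans_eq ?_⟩
  rw [mul_pow, Real.sq_sqrt (by positivity), ← Real.rpow_mul_natCast zero_le_two]
  congr 1
  simp only [D]
  ring_nf

theorem exists_strongType_ramanujanMax_dyadicBlock {p ε : ℝ} (hp : 1 < p) (hε : 0 < ε) :
    ∃ C : ℝ, 0 ≤ C ∧ ∀ w, Admissible w → ∀ β K s,
      StrongType (ramanujanMax w β (dyadicBlock s) K) p
        (ENNReal.ofReal (C * 2 ^ (ε * s : ℝ))) := by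
  obtain ⟨C, hC, h⟩ := exists_strongType_ramanujanMax hp
  obtain ⟨C', hC', h'⟩ := exists_sum_coeffBound_le hε
  refine ⟨C * C', by positivity, fun w hw β K s f hf => ?_⟩
  refine (h w hw β K (dyadicBlock s) (fun q => pos_of_mem_dyadicBlock) f hf).trans ?_
  rw [mul_assoc]
  gcongr
  exact h' s

theorem exists_strongType_geometric_of_lt_two {r : ℝ} (hr : 1 < r) (hr2 : r < 2) :
    ∃ C c : ℝ, 0 ≤ C ∧ 0 < c ∧ ∀ w, Admissible w → ∀ β K s,
      StrongType (ramanujanMax w β (dyadicBlock s) K) r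
        (ENNReal.ofReal (C * 2 ^ (-c * s : ℝ))) := by
  have hgap := mul_pos (sub_pos.2 hr) (sub_pos.2 hr2)
  obtain ⟨C₁, hC₁, h₁⟩ := exists_strongType_ramanujanMax_dyadicBlock (p := (1 + r) / 2)
    (by linarith) (div_pos hgap (by norm_num : (0 : ℝ) < 100))
  obtain ⟨C₂, hC₂, h₂⟩ := exists_strongType_two_ramanujanMax_dyadicBlock
  obtain ⟨C, c, hC, hc, h⟩ := exists_geometric_interpolation ℤ (p₀ := (1 + r) / 2) (p₁ := 2)
    (e₀ := (r - 1) * (2 - r) / 100) (e₁ := -(1 / 4)) (η := (2 - r) / 10)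
    (by linarith) (by linarith) hr2 hC₁ hC₂ (by nlinarith) (by nlinarith)
  exact ⟨C, c, hC, hc, fun w hw β K s => h s _ (ramanujanMax_add_le w β _ K)
    (h₁ w hw β K s) (h₂ w hw β K s)⟩

theorem exists_strongType_geometric_of_two_lt {r : ℝ} (hr : 2 < r) :
    ∃ C c : ℝ, 0 ≤ C ∧ 0 < c ∧ ∀ w, Admissible w → ∀ β K s,
      StrongType (ramanujanMax w β (dyadicBlock s) K) r
        (ENNReal.ofReal (C * 2 ^ (-c * s : ℝ))) := by
  have hgap : 0 < r - 2 := sub_pos.2 hr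
  set δ : ℝ := 1 / (4 * (r - 2))
  have hδ : 0 < δ := by positivity
  have hδr : δ * (r - 2) = 1 / 4 := by simp only [δ]; field_simp
  obtain ⟨C₁, hC₁, h₁⟩ := exists_strongType_ramanujanMax_dyadicBlock (p := r + 1)
    (by linarith) (by positivity : 0 < δ / (2 * (r + 1)))
  obtain ⟨C₂, hC₂, h₂⟩ := exists_strongType_two_ramanujanMax_dyadicBlock
  have hend : δ / (2 * (r + 1)) * (r + 1) + -δ * (r + 1 - r) < 0 := by
    have : δ / (2 * (r + 1)) * (r + 1) = δ / 2 := by field_simp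
    linarith
  obtain ⟨C, c, hC, hc, h⟩ := exists_geometric_interpolation ℤ (e₀ := -(1 / 4)) two_pos hr
    (lt_add_one r) hC₂ hC₁ (by linarith) hend
  exact ⟨C, c, hC, hc, fun w hw β K s => h s _ (ramanujanMax_add_le w β _ K)
    (h₂ w hw β K s) (h₁ w hw β K s)⟩

theorem exists_strongType_geometric_ramanujanMax {r : ℝ} (hr : 1 < r) :
    ∃ C c : ℝ, 0 ≤ C ∧ 0 < c ∧ ∀ w, Admissible w → ∀ β K s,
      StrongType (ramanujanMax w β (dyadicBlock s) K) r
        (ENNReal.ofReal (C * 2 ^ (-c * s : ℝ))) := by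
  rcases lt_trichotomy r 2 with h | rfl | h
  · exact exists_strongType_geometric_of_lt_two hr h
  · obtain ⟨C, hC, h⟩ := exists_strongType_two_ramanujanMax_dyadicBlock
    exact ⟨C, 1 / 4, hC, by norm_num, h⟩
  · exact exists_strongType_geometric_of_two_lt h

theorem Ico_one_two_pow_eq_biUnion_dyadicBlock (S : ℕ) :
    Ico 1 (2 ^ S) = (range S).biUnion dyadicBlock := by
  induction S with
  | zero => simp
  | succ S ih =>
    rw [range_add_one, biUnion_insert, ← ih, union_comm, dyadicBlock,
      Ico_union_Ico_eq_Ico Nat.one_le_two_pow (Nat.pow_le_pow_right two_pos S.le_succ)]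

theorem pairwise_disjoint_dyadicBlock : Pairwise (Function.onFun Disjoint dyadicBlock) := by
  refine (pairwise_disjoint_on _).2 fun i j hij => disjoint_left.2 fun q hi hj => ?_
  exact ((mem_Ico.1 hi).2.trans_le
    ((Nat.pow_le_pow_right two_pos hij).trans (mem_Ico.1 hj).1)).false

theorem ramanujanAvg_biUnion {ι : Type*} (w : ℕ → ℝ) (β : ℤ) {S : Finset ι} {B : ι → Finset ℕ}
    (hB : (S : Set ι).PairwiseDisjoint B) (M : ℕ) (f : ℤ → ℝ≥0) (x : ℤ) :
    ramanujanAvg w β (S.biUnion B) M f x = ∑ i ∈ S, ramanujanAvg w β (B i) M f x := by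
  simp only [ramanujanAvg, ramanujanKernel, sum_biUnion hB, ← sum_div]
  rw [sum_comm]
  simp only [sum_mul]

theorem ramanujanMax_biUnion_le {ι : Type*} (w : ℕ → ℕ → ℝ) (β : ℤ) {S : Finset ι}
    {B : ι → Finset ℕ} (hB : (S : Set ι).PairwiseDisjoint B) (K : ℕ) (f : ℤ → ℝ≥0) (x : ℤ) :
    ramanujanMax w β (S.biUnion B) K f x ≤ ∑ i ∈ S, ramanujanMax w β (B i) K f x :=
  Finset.sup_le fun k hk => by
    rw [ramanujanAvg_biUnion _ _ hB]
    exact (nnnorm_sum_le _ _).trans (sum_le_sum fun i _ =>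
      nnnorm_ramanujanAvg_le_ramanujanMax w β (B i) (mem_range.1 hk) f x)

theorem exists_strongType_ramanujanMax_Ico {r : ℝ} (hr : 1 < r) :
    ∃ C : ℝ≥0, ∀ w, Admissible w → ∀ β K,
      StrongType (ramanujanMax w β (Ico 1 (4 ^ K)) K) r C := by
  obtain ⟨C, c, hC, hc, h⟩ := exists_strongType_geometric_ramanujanMax hr
  have hρ0 : (0 : ℝ) ≤ 2 ^ (-c) := by positivity
  have hρ1 : (2 : ℝ) ^ (-c) < 1 := Real.rpow_lt_one_of_one_lt_of_neg one_lt_two (by linarith)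
  refine ⟨(C * (1 - (2 : ℝ) ^ (-c))⁻¹).toNNReal, fun w hw β K f hf => ?_⟩
  have hpow : 4 ^ K = 2 ^ (2 * K) := by rw [pow_mul]; norm_num
  calc ellNorm r (ramanujanMax w β (Ico 1 (4 ^ K)) K f)
      ≤ ellNorm r fun x => ∑ s ∈ range (2 * K), ramanujanMax w β (dyadicBlock s) K f x := by
        rw [hpow, Ico_one_two_pow_eq_biUnion_dyadicBlock]
        exact ellNorm_mono (by linarith) (ramanujanMax_biUnion_le w β
          (pairwise_disjoint_dyadicBlock.set_pairwise _) K f)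
    _ ≤ ∑ s ∈ range (2 * K), ENNReal.ofReal (C * 2 ^ (-c * s : ℝ)) * ellNorm r f :=
        (ellNorm_sum_le hr.le _ _).trans (sum_le_sum fun s _ => h w hw β K s f hf)
    _ = ENNReal.ofReal (C * ∑ s ∈ range (2 * K), ((2 : ℝ) ^ (-c)) ^ s) * ellNorm r f := by
        rw [← sum_mul, ← ENNReal.ofReal_sum_of_nonneg fun _ _ => by positivity, mul_sum]
        simp only [Real.rpow_mul zero_le_two, Real.rpow_natCast]
    _ ≤ ENNReal.ofReal (C * (1 - (2 : ℝ) ^ (-c))⁻¹) * ellNorm r f := by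
        rw [← tsum_geometric_of_lt_one hρ0 hρ1]
        gcongr
        exact (summable_geometric_of_lt_one hρ0 hρ1).sum_le_tsum _ fun _ _ => by positivity

end DyadicBlock

/-! ### Selberg's sieve -/

section SelbergWeight

open scoped symmDiff

/-- The sets of primes in `P` whose product is at most the sieve level `R`; they index the
squarefree integers over which the Selberg sieve sums. -/
def sieveSupport (P : Finset ℕ) (R : ℕ) : Finset (Finset ℕ) := {S ∈ P.powerset | ∏ p ∈ S, p ≤ R}

/-- The weight `1 / φ(∏ S)` of a set `S` of primes, as the product of `1 / (p - 1)`. -/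
def invTotient (S : Finset ℕ) : ℝ := ∏ p ∈ S, ((p : ℝ) - 1)⁻¹

/-- The normalizing constant `∑_{d ≤ R} μ²(d) / φ(d)` of the Selberg sieve, over the `d` composed
of primes of `P`. -/
def sieveMass (P : Finset ℕ) (R : ℕ) : ℝ := ∑ S ∈ sieveSupport P R, invTotient S

/-- The Selberg sieve sum `∑_{d ≤ R} μ(d) / φ(d) c_d(n)`, diagonalized through Ramanujan sums, over
the `d` composed of primes of `P`. -/
def sieveSum (P : Finset ℕ) (R : ℕ) (n : ℤ) : ℝ :=
  ∑ S ∈ sieveSupport P R, ∏ p ∈ S, (-((p : ℝ) - 1)⁻¹ * ramanujanSum n p)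

/-- The coefficient of `∏_{p ∈ Q} c_p(n)` in the product of the terms of the sieve sum indexed by
`S` and `S'`. -/
def crossCoeff (Q S S' : Finset ℕ) : ℝ :=
  (∏ p ∈ Q, if p ∈ S ∩ S' then ((p : ℝ) - 2) * ((p : ℝ) - 1)⁻¹ ^ 2 else -((p : ℝ) - 1)⁻¹) *
    invTotient ((S ∩ S') \ Q)

/-- The coefficient of `∏_{p ∈ Q} c_p(n)` in the normalized square of the sieve sum. -/
def squareCoeff (P : Finset ℕ) (R : ℕ) (Q : Finset ℕ) : ℝ :=
  (∑ z ∈ sieveSupport P R ×ˢ sieveSupport P R with Q ∈ Icc (z.1 ∆ z.2) (z.1 ∪ z.2),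
    crossCoeff Q z.1 z.2) / sieveMass P R

/-- The coefficient of the Ramanujan sum `c_q(n)` in the normalized square of the sieve sum. -/
def sieveWeight (P : Finset ℕ) (R q : ℕ) : ℝ :=
  if Squarefree q then squareCoeff P R q.primeFactors else 0

theorem cast_sub_one_pos {p : ℕ} (hp : p.Prime) : (0 : ℝ) < (p : ℝ) - 1 :=
  sub_pos.2 (by exact_mod_cast hp.one_lt)

theorem invTotient_nonneg {S : Finset ℕ} (hS : ∀ p ∈ S, p.Prime) : 0 ≤ invTotient S :=
  prod_nonneg fun p hp => (inv_pos.2 (cast_sub_one_pos (hS p hp))).le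

theorem invTotient_le {S : Finset ℕ} (hS : ∀ p ∈ S, p.Prime) :
    invTotient S ≤ 2 ^ #S / ∏ p ∈ S, (p : ℝ) := by
  rw [invTotient, ← prod_const, ← prod_div_distrib]
  refine prod_le_prod (fun p hp => (inv_pos.2 (cast_sub_one_pos (hS p hp))).le) fun p hp => ?_
  have h2 : (2 : ℝ) ≤ p := by exact_mod_cast (hS p hp).two_le
  rw [inv_eq_one_div, div_le_div_iff₀ (by linarith) (by linarith)]
  linarith

theorem ramanujanSum_sq (n : ℤ) {p : ℕ} (hp : p.Prime) :
    ramanujanSum n p ^ 2 = ((p : ℝ) - 2) * ramanujanSum n p + ((p : ℝ) - 1) := by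
  rw [ramanujanSum_prime n hp]
  split_ifs <;> ring

theorem prod_mul_prod_eq_symmDiff {M : Type*} [CommMonoid M] (f : ℕ → M) (S S' : Finset ℕ) :
    (∏ p ∈ S, f p) * ∏ p ∈ S', f p = (∏ p ∈ S ∆ S', f p) * ∏ p ∈ S ∩ S', f p ^ 2 := by
  have hunion : S ∆ S' ∪ S ∩ S' = S ∪ S' := symmDiff_sup_inf S S'
  have hdisj : Disjoint (S ∆ S') (S ∩ S') := disjoint_symmDiff_inf S S'
  rw [← prod_union_inter, ← hunion, prod_union hdisj, prod_pow, mul_assoc, sq]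

theorem sum_Icc_symmDiff_union {M : Type*} [AddCommMonoid M] (S S' : Finset ℕ)
    (F : Finset ℕ → M) :
    ∑ Q ∈ Icc (S ∆ S') (S ∪ S'), F Q = ∑ T ∈ (S ∩ S').powerset, F (S ∆ S' ∪ T) := by
  have hdiff : (S ∪ S') \ S ∆ S' = S ∩ S' := by ext; simp [mem_symmDiff]; tauto
  rw [Icc_eq_image_powerset symmDiff_le_sup, hdiff, sum_image]
  intro T hT T' hT' h
  have hdisj : ∀ {U}, U ∈ (S ∩ S').powerset → Disjoint (S ∆ S') U := fun hU =>
    (disjoint_symmDiff_inf S S').mono_right (mem_powerset.1 hU)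
  rw [← union_sdiff_cancel_left (hdisj hT), ← union_sdiff_cancel_left (hdisj hT')]
  exact congrArg (· \ S ∆ S') h

theorem crossCoeff_symmDiff_union {S S' T : Finset ℕ} (hT : T ⊆ S ∩ S') :
    crossCoeff (S ∆ S' ∪ T) S S' = (∏ p ∈ S ∆ S', -((p : ℝ) - 1)⁻¹) *
      (∏ p ∈ T, ((p : ℝ) - 2) * ((p : ℝ) - 1)⁻¹ ^ 2) * invTotient ((S ∩ S') \ T) := by
  have hdisj : Disjoint (S ∆ S') (S ∩ S') := disjoint_symmDiff_inf S S'
  have hsdiff : (S ∩ S') \ (S ∆ S' ∪ T) = (S ∩ S') \ T := by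
    rw [← sup_eq_union, ← sdiff_sdiff_left, sdiff_eq_self_of_disjoint hdisj.symm]
  rw [crossCoeff, hsdiff, prod_union (hdisj.mono_right hT)]
  congr 2
  · exact prod_congr rfl fun p hp => if_neg (disjoint_left.1 hdisj hp)
  · exact prod_congr rfl fun p hp => if_pos (hT hp)

theorem prod_mul_prod_eq_sum_crossCoeff (n : ℤ) {S S' : Finset ℕ} (hS : ∀ p ∈ S, p.Prime) :
    (∏ p ∈ S, (-((p : ℝ) - 1)⁻¹ * ramanujanSum n p)) *
        ∏ p ∈ S', (-((p : ℝ) - 1)⁻¹ * ramanujanSum n p) =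
      ∑ Q ∈ Icc (S ∆ S') (S ∪ S'), crossCoeff Q S S' * ∏ p ∈ Q, ramanujanSum n p := by
  have hsq : ∀ p ∈ S ∩ S', (-((p : ℝ) - 1)⁻¹ * ramanujanSum n p) ^ 2 =
      ((p : ℝ) - 2) * ((p : ℝ) - 1)⁻¹ ^ 2 * ramanujanSum n p + ((p : ℝ) - 1)⁻¹ := fun p hp => by
    have hpS := hS p (mem_inter.1 hp).1
    have h0 := (cast_sub_one_pos hpS).ne'
    rw [mul_pow, ramanujanSum_sq n hpS]
    field_simp
  rw [prod_mul_prod_eq_symmDiff, prod_congr rfl hsq, prod_add, sum_Icc_symmDiff_union, mul_sum]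
  refine sum_congr rfl fun T hT => ?_
  have hT := mem_powerset.1 hT
  rw [crossCoeff_symmDiff_union hT, prod_union ((disjoint_symmDiff_inf S S').mono_right hT),
    prod_mul_distrib, prod_mul_distrib, invTotient]
  ring

theorem abs_crossCoeff_le {Q S S' : Finset ℕ} (hQ : ∀ p ∈ Q, p.Prime) (hS : ∀ p ∈ S, p.Prime) :
    |crossCoeff Q S S'| ≤ invTotient Q * invTotient ((S ∩ S') \ Q) := by
  have hnonneg : 0 ≤ invTotient ((S ∩ S') \ Q) := invTotient_nonneg fun p hp =>
    hS p (mem_inter.1 (mem_sdiff.1 hp).1).1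
  rw [crossCoeff, abs_mul, abs_of_nonneg hnonneg, abs_prod]
  refine mul_le_mul_of_nonneg_right (prod_le_prod (fun _ _ => abs_nonneg _) fun p hp => ?_) hnonneg
  have hpos := cast_sub_one_pos (hQ p hp)
  have h2 : (2 : ℝ) ≤ p := by exact_mod_cast (hQ p hp).two_le
  split_ifs
  · rw [abs_of_nonneg (mul_nonneg (by linarith) (by positivity)), sq, ← mul_assoc]
    refine mul_le_of_le_one_left (by positivity) ?_
    rw [← div_eq_mul_inv, div_le_one hpos]
    linarith
  · rw [abs_neg, abs_of_pos (inv_pos.2 hpos)]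

variable {P : Finset ℕ} {R : ℕ}

theorem mem_sieveSupport {S : Finset ℕ} : S ∈ sieveSupport P R ↔ S ⊆ P ∧ ∏ p ∈ S, p ≤ R := by
  simp [sieveSupport]

theorem mem_sieveSupport_of_subset (hP : ∀ p ∈ P, p.Prime) {S T : Finset ℕ}
    (hS : S ∈ sieveSupport P R) (hT : T ⊆ S) : T ∈ sieveSupport P R := by
  obtain ⟨hSP, hSR⟩ := mem_sieveSupport.1 hS
  exact mem_sieveSupport.2 ⟨hT.trans hSP, (prod_le_prod_of_subset_of_one_le' hT
    fun p hp _ => (hP p (hSP hp)).one_le).trans hSR⟩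

theorem one_le_sieveMass (hP : ∀ p ∈ P, p.Prime) (hR : 1 ≤ R) : 1 ≤ sieveMass P R := by
  have h := single_le_sum (f := invTotient)
    (fun S hS => invTotient_nonneg fun p hp => hP p ((mem_sieveSupport.1 hS).1 hp))
    (mem_sieveSupport.2 ⟨empty_subset P, by simpa⟩ : ∅ ∈ sieveSupport P R)
  rwa [invTotient, prod_empty] at h

theorem sieveSum_sq_div_sieveMass (hP : ∀ p ∈ P, p.Prime) (n : ℤ) :
    sieveSum P R n ^ 2 / sieveMass P R =
      ∑ Q ∈ P.powerset, squareCoeff P R Q * ∏ p ∈ Q, ramanujanSum n p := by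
  simp only [squareCoeff, div_mul_eq_mul_div, ← sum_div, sum_filter, sum_mul, sum_product]
  rw [sum_comm, sq, sieveSum, sum_mul_sum]
  congr 1
  refine sum_congr rfl fun S hS => ?_
  rw [sum_comm]
  refine sum_congr rfl fun S' hS' => ?_
  have hSP := (mem_sieveSupport.1 hS).1
  have hfilter : {Q ∈ P.powerset | Q ∈ Icc (S ∆ S') (S ∪ S')} = Icc (S ∆ S') (S ∪ S') := by
    refine filter_mem_eq_inter.trans (inter_eq_right.2 fun Q hQ => mem_powerset.2 ?_)
    exact (mem_Icc.1 hQ).2.trans (union_subset hSP (mem_sieveSupport.1 hS').1)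
  simp only [ite_mul, zero_mul]
  rw [prod_mul_prod_eq_sum_crossCoeff n fun p hp => hP p (hSP hp), ← sum_filter, hfilter]

theorem squareCoeff_ne_zero (hP : ∀ p ∈ P, p.Prime) {Q : Finset ℕ} (hQ : squareCoeff P R Q ≠ 0) :
    Q ⊆ P ∧ ∏ p ∈ Q, p ≤ R ^ 2 := by
  obtain ⟨⟨S, S'⟩, hz, -⟩ := exists_ne_zero_of_sum_ne_zero (left_ne_zero_of_mul hQ)
  obtain ⟨hz, hQ⟩ := mem_filter.1 hz
  obtain ⟨hS, hS'⟩ := mem_product.1 hz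
  have hSP : S ∪ S' ⊆ P := union_subset (mem_sieveSupport.1 hS).1 (mem_sieveSupport.1 hS').1
  have hone : ∀ p ∈ S ∪ S', 1 ≤ p := fun p hp => (hP p (hSP hp)).one_le
  refine ⟨(mem_Icc.1 hQ).2.trans hSP, ?_⟩
  calc ∏ p ∈ Q, p ≤ ∏ p ∈ S ∪ S', p :=
        prod_le_prod_of_subset_of_one_le' (mem_Icc.1 hQ).2 fun p hp _ => hone p hp
    _ ≤ (∏ p ∈ S ∪ S', p) * ∏ p ∈ S ∩ S', p := Nat.le_mul_of_pos_right _
        (prod_pos fun p hp => hone p (inter_subset_union hp))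
    _ = (∏ p ∈ S, p) * ∏ p ∈ S', p := prod_union_inter
    _ ≤ R ^ 2 := by
        rw [sq]
        exact Nat.mul_le_mul (mem_sieveSupport.1 hS).2 (mem_sieveSupport.1 hS').2

theorem sum_sieveWeight_mul_ramanujanSum (hP : ∀ p ∈ P, p.Prime) (n : ℤ) {Z : ℕ}
    (hZ : R ^ 2 < Z) :
    ∑ q ∈ Ico 1 Z, sieveWeight P R q * ramanujanSum n q =
      sieveSum P R n ^ 2 / sieveMass P R := by
  rw [sieveSum_sq_div_sieveMass hP]
  refine sum_bij_ne_zero (fun q _ _ => q.primeFactors) (fun q _ hq => ?_)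
    (fun q _ hq q' _ hq' h => ?_) (fun Q hQ h => ?_) fun q _ hq => ?_
  all_goals simp only [sieveWeight, ite_mul, zero_mul, ne_eq, ite_eq_right_iff,
    Classical.not_imp] at *
  · exact mem_powerset.2 (squareCoeff_ne_zero hP (left_ne_zero_of_mul hq.2)).1
  · rw [← Nat.prod_primeFactors_of_squarefree hq.1, h, Nat.prod_primeFactors_of_squarefree hq'.1]
  · have hprime : ∀ p ∈ Q, p.Prime := fun p hp => hP p (mem_powerset.1 hQ hp)
    have hle := (squareCoeff_ne_zero hP (left_ne_zero_of_mul h)).2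
    have hsq : Squarefree (∏ p ∈ Q, p) := by
      refine squarefree_prod_of_pairwise_isCoprime (fun p hp q hq hpq => ?_) fun p hp =>
        (hprime p hp).prime.squarefree
      exact Nat.coprime_iff_isRelPrime.1
        ((Nat.coprime_primes (hprime p hp) (hprime q hq)).2 hpq)
    refine ⟨∏ p ∈ Q, p, mem_Ico.2 ⟨prod_pos fun p hp => (hprime p hp).pos, hle.trans_lt hZ⟩, ?_⟩
    simpa only [Nat.primeFactors_prod hprime, hsq, true_and, exists_prop, and_true, mul_eq_zero,
      not_or, (isMultiplicative_ramanujanSum n).map_prod_of_prime Q hprime] using h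
  · rw [if_pos hq.1, ← (isMultiplicative_ramanujanSum n).map_prod_of_prime _ fun p =>
      Nat.prime_of_mem_primeFactors, Nat.prod_primeFactors_of_squarefree hq.1]

theorem injOn_inter_inter_sdiff (Q : Finset ℕ) :
    Set.InjOn (fun z : Finset ℕ × Finset ℕ => (z.1 ∩ Q, z.2 ∩ Q, (z.1 ∩ z.2) \ Q))
      {z | z.1 ∆ z.2 ⊆ Q} := by
  have hcover : ∀ {S S' : Finset ℕ}, S ∆ S' ⊆ Q → S = S ∩ Q ∪ (S ∩ S') \ Q := by
    intro S S' hQ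
    ext p
    have := @hQ p
    simp only [mem_symmDiff, mem_union, mem_inter, mem_sdiff] at *
    tauto
  rintro ⟨S, S'⟩ hS ⟨T, T'⟩ hT h
  simp only [Prod.mk.injEq] at h
  refine Prod.ext ?_ ?_
  · rw [hcover hS, hcover hT, h.1, h.2.2]
  · rw [hcover (S := S') (S' := S) (symmDiff_comm S S' ▸ hS),
      hcover (S := T') (S' := T) (symmDiff_comm T T' ▸ hT), inter_comm S' S, inter_comm T' T,
      h.2.1, h.2.2]

theorem abs_squareCoeff_le (hP : ∀ p ∈ P, p.Prime) (hR : 1 ≤ R) {Q : Finset ℕ}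
    (hQ : ∀ p ∈ Q, p.Prime) : |squareCoeff P R Q| ≤ 4 ^ #Q * invTotient Q := by
  have hmass : 0 < sieveMass P R := one_pos.trans_le (one_le_sieveMass hP hR)
  have hprime : ∀ {S}, S ∈ sieveSupport P R → ∀ p ∈ S, p.Prime := fun hS p hp =>
    hP p ((mem_sieveSupport.1 hS).1 hp)
  set I := {z ∈ sieveSupport P R ×ˢ sieveSupport P R | Q ∈ Icc (z.1 ∆ z.2) (z.1 ∪ z.2)}
  -- Since `S ∆ S' ⊆ Q`, the pair `(S, S')` is determined by `S ∩ Q`, `S' ∩ Q` and `(S ∩ S') \ Q`.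
  set code : Finset ℕ × Finset ℕ → Finset ℕ × Finset ℕ × Finset ℕ :=
    fun z => (z.1 ∩ Q, z.2 ∩ Q, (z.1 ∩ z.2) \ Q)
  have hcode : Set.InjOn code I := (injOn_inter_inter_sdiff Q).mono fun z hz =>
    (mem_Icc.1 (mem_filter.1 hz).2).1
  have hmaps : I.image code ⊆ Q.powerset ×ˢ Q.powerset ×ˢ sieveSupport P R := by
    intro c hc
    obtain ⟨z, hz, rfl⟩ := mem_image.1 hc
    have hS := (mem_product.1 (mem_filter.1 hz).1).1
    simp only [code, mem_product, mem_powerset, inter_subset_right, true_and]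
    exact mem_sieveSupport_of_subset hP hS (sdiff_subset.trans inter_subset_left)
  rw [squareCoeff, abs_div, abs_of_pos hmass, div_le_iff₀ hmass]
  calc |∑ z ∈ I, crossCoeff Q z.1 z.2|
      ≤ ∑ z ∈ I, invTotient Q * invTotient (code z).2.2 :=
        (abs_sum_le_sum_abs _ _).trans (sum_le_sum fun z hz =>
          abs_crossCoeff_le hQ (hprime (mem_product.1 (mem_filter.1 hz).1).1))
    _ ≤ ∑ c ∈ Q.powerset ×ˢ Q.powerset ×ˢ sieveSupport P R, invTotient Q * invTotient c.2.2 := by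
        rw [← sum_image (f := fun c => invTotient Q * invTotient c.2.2) hcode]
        refine sum_le_sum_of_subset_of_nonneg hmaps fun c hc _ => ?_
        exact mul_nonneg (invTotient_nonneg hQ)
          (invTotient_nonneg (hprime (mem_product.1 (mem_product.1 hc).2).2))
    _ = 4 ^ #Q * invTotient Q * sieveMass P R := by
        simp only [sum_product, sum_const, card_powerset, nsmul_eq_mul, sieveMass, ← mul_sum]
        rw [show (4 : ℝ) = 2 * 2 by norm_num, mul_pow]
        push_cast
        ring

theorem card_divisors_of_squarefree {q : ℕ} (hq : Squarefree q) :
    #q.divisors = 2 ^ #q.primeFactors := by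
  rw [Nat.card_divisors hq.ne_zero, ← prod_const]
  refine prod_congr rfl fun p hp => ?_
  rw [Nat.factorization_eq_one_of_squarefree hq (Nat.prime_of_mem_primeFactors hp)
    (Nat.dvd_of_mem_primeFactors hp)]

theorem abs_sieveWeight_mul_card_divisors_le (hP : ∀ p ∈ P, p.Prime) (hR : 1 ≤ R) (q : ℕ) :
    |sieveWeight P R q| * #q.divisors ≤ coeffBound q := by
  rw [sieveWeight]
  split_ifs with hq
  swap; · simpa using coeffBound_nonneg q
  have hprime : ∀ p ∈ q.primeFactors, p.Prime := fun p => Nat.prime_of_mem_primeFactors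
  have hprod : ∏ p ∈ q.primeFactors, (p : ℝ) = q := by
    rw [← Nat.cast_prod, Nat.prod_primeFactors_of_squarefree hq]
  calc |squareCoeff P R q.primeFactors| * #q.divisors
      ≤ 4 ^ #q.primeFactors * (2 ^ #q.primeFactors / q) * 2 ^ #q.primeFactors := by
        rw [card_divisors_of_squarefree hq, ← hprod]
        push_cast
        gcongr
        refine (abs_squareCoeff_le hP hR hprime).trans ?_
        gcongr
        exact invTotient_le hprime
    _ = coeffBound q := by
        rw [coeffBound, show (16 : ℝ) = 4 * 2 * 2 by norm_num, mul_pow, mul_pow]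
        ring

theorem le_sq_of_sieveWeight_ne_zero (hP : ∀ p ∈ P, p.Prime) {q : ℕ}
    (hq : sieveWeight P R q ≠ 0) : q ≤ R ^ 2 := by
  simp only [sieveWeight, ne_eq, ite_eq_right_iff, Classical.not_imp] at hq
  rw [← Nat.prod_primeFactors_of_squarefree hq.1]
  exact (squareCoeff_ne_zero hP hq.2).2

theorem sieveSum_eq_sieveMass (hP : ∀ p ∈ P, p.Prime) {n : ℤ} (hn : ∀ p ∈ P, ¬(p : ℤ) ∣ n) :
    sieveSum P R n = sieveMass P R := by
  refine sum_congr rfl fun S hS => prod_congr rfl fun p hp => ?_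
  have hpP := (mem_sieveSupport.1 hS).1 hp
  rw [ramanujanSum_prime n (hP p hpP), if_neg (hn p hpP)]
  ring

end SelbergWeight

section SieveMass

/-- The primes up to `R` that do not divide `y`. -/
def sievePrimes (y R : ℕ) : Finset ℕ := {p ∈ range (R + 1) | p.Prime ∧ ¬p ∣ y}

theorem mem_sievePrimes {y R p : ℕ} : p ∈ sievePrimes y R ↔ p ≤ R ∧ p.Prime ∧ ¬p ∣ y := by
  simp [sievePrimes]

theorem prime_of_mem_sievePrimes {y R p : ℕ} (hp : p ∈ sievePrimes y R) : p.Prime :=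
  (mem_sievePrimes.1 hp).2.1

theorem sievePrimes_mono {y R R' : ℕ} (h : R ≤ R') : sievePrimes y R ⊆ sievePrimes y R' :=
  fun _ hp => mem_sievePrimes.2 ((mem_sievePrimes.1 hp).imp_left h.trans')

theorem sum_inv_le_prod_of_mem_factoredNumbers {T : Finset ℕ} (hT : ∀ p ∈ T, p.Prime)
    {A : Finset ℕ} (hA : ∀ n ∈ A, n ∈ Nat.factoredNumbers T) :
    ∑ n ∈ A, (n : ℝ)⁻¹ ≤ ∏ p ∈ T, (1 - (p : ℝ)⁻¹)⁻¹ := by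
  let f : ℕ →* ℝ := (invMonoidHom : ℝ →* ℝ).comp (Nat.castRingHom ℝ : ℕ →* ℝ)
  have hf : ∀ n, f n = (n : ℝ)⁻¹ := fun n => rfl
  have hEuler := EulerProduct.summable_and_hasSum_factoredNumbers_prod_filter_prime_geometric
    (f := f) (fun {p} hp => by
      rw [hf, norm_inv, Real.norm_natCast]
      exact inv_lt_one_of_one_lt₀ (by exact_mod_cast hp.one_lt)) T
  rw [filter_true_of_mem hT] at hEuler
  calc ∑ n ∈ A, (n : ℝ)⁻¹ = ∑ n ∈ A.subtype (· ∈ Nat.factoredNumbers T), f n :=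
        (sum_subtype_of_mem (fun n : ℕ => (n : ℝ)⁻¹) hA).symm
    _ ≤ _ := sum_le_hasSum _ (fun n _ => by rw [hf]; positivity) hEuler.2

theorem prod_primeFactors_one_sub_inv_inv {y : ℕ} (hy : 0 < y) :
    ∏ p ∈ y.primeFactors, (1 - (p : ℝ)⁻¹)⁻¹ = y / y.totient := by
  have h := congrArg (Rat.cast (K := ℝ)) (Nat.totient_eq_mul_prod_factors y)
  push_cast at h
  have hy0 : (y : ℝ) ≠ 0 := by exact_mod_cast hy.ne'
  rw [prod_inv_distrib, h, div_mul_cancel_left₀ hy0]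

theorem sum_inv_eq_inv_mul_sum_image_div {A : Finset ℕ} {d : ℕ} (hA : ∀ n ∈ A, d ∣ n) :
    ∑ n ∈ A, (n : ℝ)⁻¹ = (d : ℝ)⁻¹ * ∑ m ∈ A.image (· / d), (m : ℝ)⁻¹ := by
  rw [sum_image fun n hn m hm h => (Nat.div_left_inj (hA n hn) (hA m hm)).1 h, mul_sum]
  refine sum_congr rfl fun n hn => ?_
  rw [← mul_inv, ← Nat.cast_mul, Nat.mul_div_cancel' (hA n hn)]

theorem invTotient_eq_inv_prod_mul {S : Finset ℕ} (hS : ∀ p ∈ S, p.Prime) :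
    invTotient S = ((∏ p ∈ S, p : ℕ) : ℝ)⁻¹ * ∏ p ∈ S, (1 - (p : ℝ)⁻¹)⁻¹ := by
  rw [Nat.cast_prod, ← prod_inv_distrib, ← prod_mul_distrib, invTotient]
  refine prod_congr rfl fun p hp => ?_
  have h0 : (p : ℝ) ≠ 0 := by exact_mod_cast (hS p hp).ne_zero
  rw [← mul_inv, mul_sub, mul_one, mul_inv_cancel₀ h0]

theorem prod_filter_primeFactors_dvd (n : ℕ) (P : ℕ → Prop) [DecidablePred P] :
    ∏ p ∈ n.primeFactors with P p, p ∣ n :=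
  (prod_dvd_prod_of_subset _ _ _ (filter_subset _ _)).trans (Nat.prod_primeFactors_dvd n)

theorem sum_inv_le_invTotient_mul {y : ℕ} (hy : 0 < y) {S A : Finset ℕ}
    (hS : ∀ p ∈ S, p.Prime ∧ ¬p ∣ y)
    (hA : ∀ n ∈ A, n ≠ 0 ∧ {p ∈ n.primeFactors | ¬p ∣ y} = S) :
    ∑ n ∈ A, (n : ℝ)⁻¹ ≤ invTotient S * (y / y.totient) := by
  have hdvd : ∀ n ∈ A, ∏ p ∈ S, p ∣ n := fun n hn =>
    (hA n hn).2 ▸ prod_filter_primeFactors_dvd n (¬· ∣ y)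
  have hprime : ∀ p ∈ S ∪ y.primeFactors, p.Prime := fun p hp =>
    (mem_union.1 hp).elim (fun h => (hS p h).1) Nat.prime_of_mem_primeFactors
  have hdisj : Disjoint S y.primeFactors := disjoint_left.2 fun p hp hpy =>
    (hS p hp).2 (Nat.dvd_of_mem_primeFactors hpy)
  have hfactored : ∀ m ∈ A.image (· / ∏ p ∈ S, p),
      m ∈ Nat.factoredNumbers (S ∪ y.primeFactors) := by
    intro m hm
    obtain ⟨n, hn, rfl⟩ := mem_image.1 hm
    rw [Nat.mem_factoredNumbers_iff_primeFactors_subset]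
    refine ⟨((Nat.div_ne_zero_iff_of_dvd (hdvd n hn)).2 ⟨(hA n hn).1, ?_⟩), fun p hp => ?_⟩
    · exact (prod_pos fun p hp => (hS p hp).1.pos).ne'
    have hpn := Nat.primeFactors_mono (Nat.div_dvd_of_dvd (hdvd n hn)) (hA n hn).1 hp
    rw [mem_union]
    by_cases hpy : p ∣ y
    · exact .inr (Nat.mem_primeFactors.2 ⟨Nat.prime_of_mem_primeFactors hp, hpy, hy.ne'⟩)
    · exact .inl ((hA n hn).2 ▸ mem_filter.2 ⟨hpn, hpy⟩)
  rw [sum_inv_eq_inv_mul_sum_image_div hdvd, invTotient_eq_inv_prod_mul fun p hp => (hS p hp).1,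
    mul_assoc, ← prod_primeFactors_one_sub_inv_inv hy, ← prod_union hdisj]
  gcongr
  exact sum_inv_le_prod_of_mem_factoredNumbers hprime hfactored

theorem log_le_sum_inv (R : ℕ) : Real.log R ≤ ∑ n ∈ Icc 1 R, (n : ℝ)⁻¹ := by
  rcases R.eq_zero_or_pos with rfl | hR
  · simp
  have h := log_add_one_le_harmonic R
  rw [harmonic_eq_sum_Icc] at h
  push_cast at h
  exact (Real.log_le_log (by exact_mod_cast hR) (by linarith)).trans h

-- Every `n ≤ R` is counted by the squarefree part of its `y`-free part, whence the Euler product.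
theorem log_le_sieveMass {y : ℕ} (hy : 0 < y) (R : ℕ) :
    (y.totient / y : ℝ) * Real.log R ≤ sieveMass (sievePrimes y R) R := by
  have hmaps : ∀ n ∈ Icc 1 R,
      {p ∈ n.primeFactors | ¬p ∣ y} ∈ sieveSupport (sievePrimes y R) R := by
    intro n hn
    obtain ⟨hn1, hnR⟩ := mem_Icc.1 hn
    refine mem_sieveSupport.2 ⟨fun p hp => ?_, ?_⟩
    · obtain ⟨hpn, hpy⟩ := mem_filter.1 hp
      exact mem_sievePrimes.2 ⟨(Nat.le_of_mem_primeFactors hpn).trans hnR,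
        Nat.prime_of_mem_primeFactors hpn, hpy⟩
    · exact (Nat.le_of_dvd hn1 (prod_filter_primeFactors_dvd n _)).trans hnR
  have hsum : ∑ n ∈ Icc 1 R, (n : ℝ)⁻¹ ≤ sieveMass (sievePrimes y R) R * (y / y.totient) := by
    rw [← sum_fiberwise_of_maps_to hmaps, sieveMass, sum_mul]
    refine sum_le_sum fun S hS => sum_inv_le_invTotient_mul hy (fun p hp => ?_) fun n hn => ?_
    · exact (mem_sievePrimes.1 ((mem_sieveSupport.1 hS).1 hp)).2
    · obtain ⟨hn, hnS⟩ := mem_filter.1 hn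
      exact ⟨Nat.one_le_iff_ne_zero.1 (mem_Icc.1 hn).1, hnS⟩
  calc (y.totient / y : ℝ) * Real.log R
      ≤ (y.totient / y : ℝ) * (sieveMass (sievePrimes y R) R * (y / y.totient)) := by
        gcongr
        exact (log_le_sum_inv R).trans hsum
    _ = sieveMass (sievePrimes y R) R := by
        have := Nat.totient_pos.2 hy
        field_simp

end SieveMass

/-! ### Averages over primes -/

section ExceptionalIntegers

open ArithmeticFunction (vonMangoldt vonMangoldt_nonneg vonMangoldt_le_log)

/-- The integers below `2 ^ (17 * k)` that are not primes exceeding `2 ^ k`; the sieve of level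
`2 ^ k` gives no information on them. -/
def exceptionalSet (k : ℕ) : Finset ℕ := {n ∈ range (2 ^ (17 * k)) | n.Prime → n ≤ 2 ^ k}

/-- The convolution of `g` with the von Mangoldt function restricted to `exceptionalSet k`. -/
def exceptionalConv (k : ℕ) (g : ℤ → ℝ≥0) (x : ℤ) : ℝ≥0 :=
  ∑ n ∈ exceptionalSet k, (vonMangoldt n).toNNReal * g (x - n)

theorem sum_vonMangoldt_not_prime_le (k : ℕ) :
    ∑ n ∈ Ioc 0 (2 ^ (17 * k)) with ¬n.Prime, vonMangoldt n ≤ 34 * (2 : ℝ) ^ (10 * k) := by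
  set X : ℝ := (2 : ℝ) ^ (17 * k) with hX
  have hX1 : 1 ≤ X := one_le_pow₀ one_le_two
  have hfloor : ⌊X⌋₊ = 2 ^ (17 * k) := by
    rw [hX]
    exact_mod_cast Nat.floor_natCast (R := ℝ) (2 ^ (17 * k))
  have hsqrt : √X ≤ 2 ^ (9 * k) := by
    rw [Real.sqrt_le_left (by positivity), hX, ← pow_mul]
    exact pow_le_pow_right₀ one_le_two (by lia)
  have hlog : Real.log X ≤ 17 * 2 ^ k := by
    have hk : (k : ℝ) ≤ 2 ^ k := by exact_mod_cast Nat.lt_two_pow_self.le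
    rw [hX, Real.log_pow]
    calc ((17 * k : ℕ) : ℝ) * Real.log 2 ≤ ((17 * k : ℕ) : ℝ) * 1 := by
          gcongr
          exact Real.log_two_lt_d9.le.trans (by norm_num)
      _ ≤ 17 * 2 ^ k := by
          push_cast
          linarith
  rw [← hfloor, ← Chebyshev.psi_sub_theta_eq_sum_not_prime]
  calc Chebyshev.psi X - Chebyshev.theta X ≤ 2 * √X * Real.log X := Chebyshev.psi_sub_theta_le hX1
    _ ≤ 2 * 2 ^ (9 * k) * (17 * 2 ^ k) := by
        have := Real.log_nonneg hX1
        gcongr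
    _ = 34 * (2 : ℝ) ^ (10 * k) := by
        rw [show 10 * k = 9 * k + k by ring, pow_add]
        ring

theorem sum_vonMangoldt_Ioc_two_pow_le (k : ℕ) :
    ∑ n ∈ Ioc 0 (2 ^ k), vonMangoldt n ≤ 6 * (2 : ℝ) ^ (10 * k) := by
  have hpsi : ∑ n ∈ Ioc 0 (2 ^ k), vonMangoldt n = Chebyshev.psi ((2 ^ k : ℕ) : ℝ) := by
    rw [Chebyshev.psi, Nat.floor_natCast]
  have hlog : Real.log 4 + 4 ≤ 6 := by
    rw [show (4 : ℝ) = 2 ^ 2 by norm_num, Real.log_pow]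
    have := Real.log_two_lt_d9
    push_cast
    linarith
  rw [hpsi]
  refine (Chebyshev.psi_le_const_mul_self (by positivity)).trans ?_
  push_cast
  gcongr
  · exact one_le_two
  · lia

theorem sum_vonMangoldt_exceptionalSet_le (k : ℕ) :
    ∑ n ∈ exceptionalSet k, vonMangoldt n ≤ 40 * (2 : ℝ) ^ (10 * k) := by
  have hsub : exceptionalSet k ⊆
      insert 0 (Ioc 0 (2 ^ k) ∪ {n ∈ Ioc 0 (2 ^ (17 * k)) | ¬n.Prime}) := by
    intro n hn
    simp only [exceptionalSet, mem_filter, mem_range] at hn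
    simp only [mem_insert, mem_union, mem_filter, mem_Ioc]
    have := hn.1.le
    have := n.eq_zero_or_pos
    tauto
  calc ∑ n ∈ exceptionalSet k, vonMangoldt n
      ≤ ∑ n ∈ insert 0 (Ioc 0 (2 ^ k) ∪ {n ∈ Ioc 0 (2 ^ (17 * k)) | ¬n.Prime}), vonMangoldt n :=
        sum_le_sum_of_subset_of_nonneg hsub fun _ _ _ => vonMangoldt_nonneg
    _ = ∑ n ∈ Ioc 0 (2 ^ k) ∪ {n ∈ Ioc 0 (2 ^ (17 * k)) | ¬n.Prime}, vonMangoldt n :=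
        sum_insert_zero (by simp)
    _ ≤ ∑ n ∈ Ioc 0 (2 ^ k), vonMangoldt n +
          ∑ n ∈ Ioc 0 (2 ^ (17 * k)) with ¬n.Prime, vonMangoldt n := by
        rw [← sum_union_inter]
        exact le_add_of_nonneg_right (sum_nonneg fun _ _ => vonMangoldt_nonneg)
    _ ≤ 40 * 2 ^ (10 * k) := by
        linarith [sum_vonMangoldt_Ioc_two_pow_le k, sum_vonMangoldt_not_prime_le k]

theorem ellNorm_exceptionalConv_le {r : ℝ} (hr : 1 ≤ r) (k : ℕ) (g : ℤ → ℝ≥0) :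
    ellNorm r (exceptionalConv k g) ≤ ((40 * 2 ^ (10 * k) : ℝ≥0) : ℝ≥0∞) * ellNorm r g := by
  have hmass : ∑ n ∈ exceptionalSet k, (vonMangoldt n).toNNReal ≤ 40 * 2 ^ (10 * k) := by
    rw [← NNReal.coe_le_coe]
    push_cast
    simpa only [Real.coe_toNNReal _ vonMangoldt_nonneg] using sum_vonMangoldt_exceptionalSet_le k
  have hshift : ∀ n : ℕ, ellNorm r (fun x => g (x - n)) = ellNorm r g := fun n =>
    ellNorm_comp_equiv r (Equiv.subRight (n : ℤ)) g
  refine (ellNorm_sum_le hr _ _).trans ?_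
  simp_rw [ellNorm_const_mul (zero_lt_one.trans_le hr), hshift]
  rw [← sum_mul, ← ENNReal.ofNNReal_finsetSum]
  gcongr

end ExceptionalIntegers

section SieveKernel

variable {y k K : ℕ}

/-- The Selberg weights of level `2 ^ k`, sifting by the primes that do not divide `y`. -/
def progressionWeight (y k : ℕ) : ℕ → ℝ := sieveWeight (sievePrimes y (2 ^ k)) (2 ^ k)

theorem admissible_progressionWeight (y : ℕ) : Admissible (progressionWeight y) where
  abs_mul_card_divisors_le _ := abs_sieveWeight_mul_card_divisors_le
    (fun _ => prime_of_mem_sievePrimes) Nat.one_le_two_pow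
  le_four_pow {k _} hq := by
    have h := le_sq_of_sieveWeight_ne_zero (fun _ => prime_of_mem_sievePrimes) hq
    rwa [← pow_mul, mul_comm, pow_mul] at h

theorem ramanujanKernel_progressionWeight (hk : k < K) (β n : ℤ) :
    ramanujanKernel (progressionWeight y k) β (Ico 1 (4 ^ K)) n =
      sieveSum (sievePrimes y (2 ^ k)) (2 ^ k) (n + β) ^ 2 /
        sieveMass (sievePrimes y (2 ^ k)) (2 ^ k) := by
  refine sum_sieveWeight_mul_ramanujanSum (fun _ => prime_of_mem_sievePrimes) _ ?_
  rw [← pow_mul, mul_comm, pow_mul]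
  exact Nat.pow_lt_pow_right (by norm_num) hk

theorem sieveMass_sievePrimes_pos (y k : ℕ) :
    0 < sieveMass (sievePrimes y (2 ^ k)) (2 ^ k) :=
  one_pos.trans_le (one_le_sieveMass (fun _ => prime_of_mem_sievePrimes) Nat.one_le_two_pow)

theorem ramanujanKernel_progressionWeight_nonneg (hk : k < K) (β n : ℤ) :
    0 ≤ ramanujanKernel (progressionWeight y k) β (Ico 1 (4 ^ K)) n := by
  rw [ramanujanKernel_progressionWeight hk]
  exact div_nonneg (sq_nonneg _) (sieveMass_sievePrimes_pos y k).le

theorem mul_log_two_le_ramanujanKernel (hy : 0 < y) (hk : k < K) {β n : ℤ}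
    (hn : ∀ p ∈ sievePrimes y (2 ^ k), ¬(p : ℤ) ∣ n + β) :
    (y.totient / y : ℝ) * (k * Real.log 2) ≤
      ramanujanKernel (progressionWeight y k) β (Ico 1 (4 ^ K)) n := by
  rw [ramanujanKernel_progressionWeight hk,
    sieveSum_eq_sieveMass (fun _ => prime_of_mem_sievePrimes) hn, sq,
    mul_div_cancel_right₀ _ (sieveMass_sievePrimes_pos y k).ne']
  simpa only [Nat.cast_pow, Nat.cast_ofNat, Real.log_pow] using log_le_sieveMass hy (2 ^ k)

end SieveKernel

section PrimeAvg

open ArithmeticFunction (vonMangoldt vonMangoldt_nonneg vonMangoldt_le_log)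

/-- The shift `β` turns divisibility of `m + β` by the primes up to `R` prime to `y` into
divisibility of the term `c + y * m` of the progression. -/
def IsSieveShift (y R : ℕ) (c β : ℤ) : Prop :=
  ∀ p ∈ sievePrimes y R, ∀ m : ℤ, (p : ℤ) ∣ m + β → (p : ℤ) ∣ c + y * m

/-- The integers of `[0, N)` in the residue class `c` modulo `y`, where `c` is taken in `[0, y)`. -/
def progression (N y : ℕ) (c : ℤ) : Finset ℕ := (range N).filter fun n : ℕ => (n : ℤ) % y = c

theorem mem_progression {N y n : ℕ} {c : ℤ} :
    n ∈ progression N y c ↔ n < N ∧ (n : ℤ) % y = c := by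
  rw [progression, mem_filter, mem_range]

/-- The average of `g ≥ 0` along the primes in the residue class `c` modulo `y`, the nonnegative
counterpart of `pavg`. -/
def primeAvg (N y : ℕ) (c : ℤ) (g : ℤ → ℝ≥0) (x : ℤ) : ℝ≥0 :=
  y.totient / N * ∑ n ∈ progression N y c, (vonMangoldt n).toNNReal * g (x - n)

/-- The maximal function of `primeAvg` over the lengths `N₀ < N < N₁`. -/
def primeMax (N₀ N₁ y : ℕ) (c : ℤ) (g : ℤ → ℝ≥0) (x : ℤ) : ℝ≥0 :=
  (Ioo N₀ N₁).sup fun N => primeAvg N y c g x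

/-- The maximal function `ramanujanMax` of the sieve weights, applied on each residue class modulo
`y` to the function shifted by `c`. -/
def progressionMax (y K : ℕ) (c β : ℤ) (g : ℤ → ℝ≥0) (x : ℤ) : ℝ≥0 :=
  ramanujanMax (progressionWeight y) β (Ico 1 (4 ^ K)) K (fun z => g (x % y - c + y * z)) (x / y)

theorem exists_isSieveShift (y R : ℕ) (c : ℤ) : ∃ β, IsSieveShift y R c β := by
  have hcoprime : IsCoprime (y : ℤ) ((∏ p ∈ sievePrimes y R, p : ℕ) : ℤ) := by
    rw [Nat.isCoprime_iff_coprime]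
    refine Nat.Coprime.prod_right fun p hp => ?_
    obtain ⟨-, hprime, hpy⟩ := mem_sievePrimes.1 hp
    exact (hprime.coprime_iff_not_dvd.2 hpy).symm
  obtain ⟨u, v, huv⟩ := hcoprime
  refine ⟨u * c, fun p hp m hm => ?_⟩
  have hdvd : (p : ℤ) ∣ ((∏ p ∈ sievePrimes y R, p : ℕ) : ℤ) :=
    Int.natCast_dvd_natCast.2 (dvd_prod_of_mem _ hp)
  have hcomb : c + y * m = y * (m + u * c) + c * v * ((∏ p ∈ sievePrimes y R, p : ℕ) : ℤ) := by
    linear_combination -c * huv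
  rw [hcomb]
  exact dvd_add (hm.mul_left _) (hdvd.mul_left _)

theorem coe_primeAvg (N y : ℕ) (c : ℤ) (g : ℤ → ℝ≥0) (x : ℤ) :
    (primeAvg N y c g x : ℝ) =
      y.totient / N * ∑ n ∈ progression N y c, vonMangoldt n * (g (x - n) : ℝ) := by
  simp [primeAvg, vonMangoldt_nonneg]

theorem coe_exceptionalConv (k : ℕ) (g : ℤ → ℝ≥0) (x : ℤ) :
    (exceptionalConv k g x : ℝ) =
      ∑ n ∈ exceptionalSet k, vonMangoldt n * (g (x - n) : ℝ) := by
  simp [exceptionalConv, vonMangoldt_nonneg]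

theorem sum_comp_div_le {y M : ℕ} {c : ℤ} {t : Finset ℕ}
    (ht : ∀ n ∈ t, n < y * M ∧ (n : ℤ) % y = c) {F : ℕ → ℝ} (hF : ∀ m, 0 ≤ F m) :
    ∑ n ∈ t, F (n / y) ≤ ∑ m ∈ range M, F m := by
  have hinj : Set.InjOn (fun n => n / y) (t : Set ℕ) := by
    intro n hn n' hn' h
    have hmod : n % y = n' % y := by exact_mod_cast (ht n hn).2.trans (ht n' hn').2.symm
    rw [← Nat.div_add_mod n y, ← Nat.div_add_mod n' y, hmod, show n / y = n' / y from h]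
  rw [← sum_image hinj]
  refine sum_le_sum_of_subset_of_nonneg (fun m hm => ?_) fun m _ _ => hF m
  obtain ⟨n, hn, rfl⟩ := mem_image.1 hm
  exact mem_range.2 (Nat.div_lt_of_lt_mul (ht n hn).1)

variable {y k K N : ℕ} {c β : ℤ}

theorem mul_vonMangoldt_le_ramanujanKernel (hy : 0 < y) (hk : k < K)
    (hβ : IsSieveShift y (2 ^ K) c β) {n : ℕ} (hn : n.Prime) (hkn : 2 ^ k < n)
    (hnk : n ≤ 2 ^ (17 * k)) {m : ℤ} (hm : (n : ℤ) = c + y * m) :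
    (y.totient / y : ℝ) * vonMangoldt n ≤
      17 * ramanujanKernel (progressionWeight y k) β (Ico 1 (4 ^ K)) m := by
  have hlog : vonMangoldt n ≤ 17 * (k * Real.log 2) := by
    have hnk : (n : ℝ) ≤ 2 ^ (17 * k) := by exact_mod_cast hnk
    calc vonMangoldt n ≤ Real.log n := vonMangoldt_le_log
      _ ≤ Real.log (2 ^ (17 * k)) := Real.log_le_log (by exact_mod_cast hn.pos) hnk
      _ = 17 * (k * Real.log 2) := by
        rw [Real.log_pow]
        push_cast
        ring
  have hsifted : ∀ p ∈ sievePrimes y (2 ^ k), ¬(p : ℤ) ∣ m + β := by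
    intro p hp hdvd
    have hpn := hβ p (sievePrimes_mono (Nat.pow_le_pow_right two_pos hk.le) hp) m hdvd
    rw [← hm, Int.natCast_dvd_natCast,
      Nat.prime_dvd_prime_iff_eq (prime_of_mem_sievePrimes hp) hn] at hpn
    exact hkn.not_ge (hpn ▸ (mem_sievePrimes.1 hp).1)
  calc (y.totient / y : ℝ) * vonMangoldt n
      ≤ (y.totient / y : ℝ) * (17 * (k * Real.log 2)) := by gcongr
    _ = 17 * ((y.totient / y : ℝ) * (k * Real.log 2)) := by ring
    _ ≤ _ := by
        gcongr
        exact mul_log_two_le_ramanujanKernel hy hk hsifted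

theorem mul_sum_primes_le_ramanujanAvg (hy : 0 < y) (hk : k < K) (hyk : y ≤ 2 ^ k)
    (hβ : IsSieveShift y (2 ^ K) c β) (hN : N ≤ y * scale k) (g : ℤ → ℝ≥0) (a z : ℤ) :
    (y.totient / y : ℝ) * ∑ n ∈ progression N y c with ¬(n.Prime → n ≤ 2 ^ k),
        vonMangoldt n * (g (a + y * z - n) : ℝ) ≤
      17 * scale k * ramanujanAvg (progressionWeight y k) β (Ico 1 (4 ^ K)) (scale k)
        (fun z => g (a - c + y * z)) z := by
  set ker : ℤ → ℝ := ramanujanKernel (progressionWeight y k) β (Ico 1 (4 ^ K))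
  set F : ℕ → ℝ := fun m => 17 * ker m * g (a - c + y * (z - m))
  have hF : ∀ m, 0 ≤ F m := fun m => by
    have : 0 ≤ ker m := ramanujanKernel_progressionWeight_nonneg hk β m
    positivity
  have hterm : ∀ n ∈ progression N y c, ¬(n.Prime → n ≤ 2 ^ k) →
      (y.totient / y : ℝ) * (vonMangoldt n * (g (a + y * z - n) : ℝ)) ≤ F (n / y) := by
    intro n hmem hn
    obtain ⟨hnN, hnc⟩ := mem_progression.1 hmem
    obtain ⟨hprime, hkn⟩ := Classical.not_imp.1 hn
    have hm : (n : ℤ) = c + y * (n / y : ℕ) := by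
      rw [← hnc]
      exact_mod_cast (Nat.mod_add_div n y).symm
    have hnk : n ≤ 2 ^ (17 * k) :=
      calc n ≤ y * scale k := hnN.le.trans hN
        _ ≤ 2 ^ k * scale k := Nat.mul_le_mul_right _ hyk
        _ = 2 ^ (17 * k) := by rw [scale, ← pow_add]; ring
    have harg : a + y * z - n = a - c + y * (z - (n / y : ℕ)) := by rw [hm]; push_cast; ring
    rw [← mul_assoc, harg]
    exact mul_le_mul_of_nonneg_right
      (mul_vonMangoldt_le_ramanujanKernel hy hk hβ hprime (not_le.1 hkn) hnk hm) NNReal.zero_le_coe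
  rw [mul_sum]
  calc ∑ n ∈ progression N y c with ¬(n.Prime → n ≤ 2 ^ k),
        (y.totient / y : ℝ) * (vonMangoldt n * (g (a + y * z - n) : ℝ))
      ≤ ∑ n ∈ progression N y c with ¬(n.Prime → n ≤ 2 ^ k), F (n / y) :=
        sum_le_sum fun n hn => hterm n (mem_filter.1 hn).1 (mem_filter.1 hn).2
    _ ≤ ∑ m ∈ range (scale k), F m := sum_comp_div_le (c := c) (fun n hn =>
        (mem_progression.1 (mem_filter.1 hn).1).imp_left (·.trans_le hN)) hF
    _ = _ := by
        have := (cast_scale_pos k).ne'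
        simp only [ramanujanAvg, F, ker, mul_assoc, ← mul_sum]
        field_simp

theorem mul_sum_exceptional_le_exceptionalConv (hyk : y ≤ 2 ^ k) (hN : N ≤ y * scale k)
    (g : ℤ → ℝ≥0) (x : ℤ) :
    (y.totient / y : ℝ) * ∑ n ∈ progression N y c with n.Prime → n ≤ 2 ^ k,
        vonMangoldt n * (g (x - n) : ℝ) ≤ exceptionalConv k g x := by
  have hterm : ∀ n : ℕ, 0 ≤ vonMangoldt n * (g (x - n) : ℝ) := fun n =>
    mul_nonneg vonMangoldt_nonneg NNReal.zero_le_coe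
  have hN17 : N ≤ 2 ^ (17 * k) :=
    calc N ≤ y * scale k := hN
      _ ≤ 2 ^ k * scale k := Nat.mul_le_mul_right _ hyk
      _ = 2 ^ (17 * k) := by rw [scale, ← pow_add]; ring
  have hφ : (y.totient / y : ℝ) ≤ 1 :=
    div_le_one_of_le₀ (by exact_mod_cast y.totient_le) (Nat.cast_nonneg y)
  rw [coe_exceptionalConv]
  refine (mul_le_of_le_one_left (sum_nonneg fun n _ => hterm n) hφ).trans
    (sum_le_sum_of_subset_of_nonneg (fun n hn => ?_) fun n _ _ => hterm n)
  obtain ⟨hmem, hn⟩ := mem_filter.1 hn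
  exact mem_filter.2 ⟨mem_range.2 ((mem_progression.1 hmem).1.trans_le hN17), hn⟩

theorem cast_scale_succ (k : ℕ) : (scale (k + 1) : ℝ) = 2 ^ 16 * scale k := by
  rw [scale, scale, mul_add, pow_add]
  push_cast
  ring

theorem primeAvg_le (hy : 0 < y) (hk : k + 1 < K) (hyk : y ≤ 2 ^ (k + 1))
    (hβ : IsSieveShift y (2 ^ K) c β) (hN : y * scale k < N) (hN' : N ≤ y * scale (k + 1))
    (g : ℤ → ℝ≥0) (x : ℤ) :
    primeAvg N y c g x ≤ 17 * 2 ^ 16 * progressionMax y K c β g x +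
      (scale k : ℝ≥0)⁻¹ * exceptionalConv (k + 1) g x := by
  have hs := cast_scale_pos k
  have hN0 : (0 : ℝ) < N := by exact_mod_cast (Nat.zero_le _).trans_lt hN
  have hyN : (y : ℝ) / N ≤ (scale k : ℝ)⁻¹ := by
    rw [inv_eq_one_div, div_le_div_iff₀ hN0 hs, one_mul]
    exact_mod_cast hN.le
  have hx : x % y + y * (x / y) = x := Int.emod_add_mul_ediv _ _
  have hprimes := mul_sum_primes_le_ramanujanAvg hy hk hyk hβ hN' g (x % y) (x / y)
  have hexc := mul_sum_exceptional_le_exceptionalConv (c := c) hyk hN' g x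
  have hmax : ramanujanAvg (progressionWeight y (k + 1)) β (Ico 1 (4 ^ K)) (scale (k + 1))
      (fun z => g (x % y - c + y * z)) (x / y) ≤ progressionMax y K c β g x :=
    (Real.le_norm_self _).trans (nnnorm_ramanujanAvg_le_ramanujanMax _ β _ hk _ _)
  rw [hx, cast_scale_succ] at hprimes
  have hsum : (y.totient / y : ℝ) * ∑ n ∈ progression N y c, vonMangoldt n * (g (x - n) : ℝ) ≤
      17 * (2 ^ 16 * scale k) * progressionMax y K c β g x + exceptionalConv (k + 1) g x := by
    rw [← sum_filter_add_sum_filter_not (progression N y c)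
      (fun n => n.Prime → n ≤ 2 ^ (k + 1)), mul_add, add_comm]
    exact add_le_add (hprimes.trans (mul_le_mul_of_nonneg_left hmax
      (mul_nonneg (by norm_num) (mul_nonneg (by norm_num) hs.le)))) hexc
  have hsum0 : 0 ≤ ∑ n ∈ progression N y c, vonMangoldt n * (g (x - n) : ℝ) :=
    sum_nonneg fun n _ => mul_nonneg vonMangoldt_nonneg NNReal.zero_le_coe
  rw [← NNReal.coe_le_coe, coe_primeAvg]
  push_cast
  calc (y.totient / N : ℝ) * ∑ n ∈ progression N y c, vonMangoldt n * (g (x - n) : ℝ)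
      = y / N * ((y.totient / y : ℝ) *
          ∑ n ∈ progression N y c, vonMangoldt n * (g (x - n) : ℝ)) := by
        rw [← mul_assoc, mul_comm (y / N : ℝ), div_mul_div_cancel₀ (by exact_mod_cast hy.ne')]
    _ ≤ (scale k : ℝ)⁻¹ * (17 * (2 ^ 16 * scale k) * progressionMax y K c β g x +
          exceptionalConv (k + 1) g x) :=
        mul_le_mul hyN hsum (mul_nonneg (by positivity) hsum0) (inv_nonneg.2 hs.le)
    _ = _ := by field_simp

theorem exists_scale_lt_le {k₀ : ℕ} (hy : 0 < y) (hN : y * scale k₀ < N) :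
    ∃ k, k₀ ≤ k ∧ k < N ∧ y * scale k < N ∧ N ≤ y * scale (k + 1) := by
  have hmono : StrictMono fun k => y * scale k := fun j k hjk =>
    Nat.mul_lt_mul_of_pos_left (Nat.pow_lt_pow_right one_lt_two (by lia)) hy
  obtain ⟨k, hlt, hle⟩ := hmono.exists_between_of_tendsto_atTop hmono.tendsto_atTop
    ((hmono.monotone k₀.zero_le).trans_lt hN)
  exact ⟨k, Nat.lt_succ_iff.1 (hmono.lt_iff_lt.1 (hN.trans_le hle)), (hmono.id_le k).trans_lt hlt,
    hlt, hle⟩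

theorem primeMax_le (hy : 0 < y) (hβ : IsSieveShift y (2 ^ K) c β) (g : ℤ → ℝ≥0) (x : ℤ) :
    primeMax (y * scale y) K y c g x ≤ 17 * 2 ^ 16 * progressionMax y K c β g x +
      ∑ k ∈ range K, (scale k : ℝ≥0)⁻¹ * exceptionalConv (k + 1) g x := by
  refine Finset.sup_le fun N hN => ?_
  obtain ⟨hN₀, hNK⟩ := mem_Ioo.1 hN
  obtain ⟨k, hyk, hkN, hlt, hle⟩ := exists_scale_lt_le hy hN₀
  have hy2 : y ≤ 2 ^ (k + 1) := (hyk.trans k.le_succ).trans Nat.lt_two_pow_self.le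
  refine (primeAvg_le hy (by lia) hy2 hβ hlt hle g x).trans (add_le_add_right ?_ _)
  exact single_le_sum (f := fun k => (scale k : ℝ≥0)⁻¹ * exceptionalConv (k + 1) g x)
    (fun _ _ => zero_le) (mem_range.2 (hkN.trans hNK))

end PrimeAvg

section PrimeMax

theorem ellNorm_le_of_residues {r : ℝ} (hr : 0 < r) {y : ℕ} (hy : 0 < y) {C : ℝ≥0∞}
    {u v : ℤ → ℝ≥0} (h : ∀ a : ℤ, 0 ≤ a → a < y →
      ellNorm r (fun z => u (a + y * z)) ≤ C * ellNorm r (fun z => v (a + y * z))) :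
    ellNorm r u ≤ C * ellNorm r v := by
  have : NeZero y := ⟨hy.ne'⟩
  have hsplit : ∀ w : ℤ → ℝ≥0,
      ellNorm r w ^ r = ∑' i : Fin y, ellNorm r (fun z => w (i + y * z)) ^ r := by
    intro w
    rw [ellNorm_rpow hr, ← ((Equiv.prodComm _ _).trans (Int.divModEquiv y).symm).tsum_eq,
      ENNReal.tsum_prod']
    simp [ellNorm_rpow hr, Int.divModEquiv, mul_comm, add_comm]
  rw [← ENNReal.rpow_le_rpow_iff hr, ENNReal.mul_rpow_of_nonneg _ _ hr.le, hsplit u, hsplit v,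
    ← ENNReal.tsum_mul_left]
  refine ENNReal.tsum_le_tsum fun i => ?_
  rw [← ENNReal.mul_rpow_of_nonneg _ _ hr.le]
  exact ENNReal.rpow_le_rpow (h i (by lia) (by exact_mod_cast i.2)) hr.le

theorem exists_strongType_progressionMax {r : ℝ} (hr : 1 < r) :
    ∃ C : ℝ≥0, ∀ y : ℕ, 0 < y → ∀ K c β, StrongType (progressionMax y K c β) r C := by
  obtain ⟨C, hC⟩ := exists_strongType_ramanujanMax_Ico hr
  refine ⟨C, fun y hy K c β g hg => ?_⟩
  have hy0 : (y : ℤ) ≠ 0 := by exact_mod_cast hy.ne'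
  rw [← ellNorm_comp_equiv r (Equiv.subRight c) g]
  refine ellNorm_le_of_residues (zero_lt_one.trans hr) hy fun a ha hay => ?_
  have hmod : ∀ z : ℤ, (a + y * z) % y = a := fun z => by
    rw [Int.add_mul_emod_self_left, Int.emod_eq_of_lt ha hay]
  have hdiv : ∀ z : ℤ, (a + y * z) / y = z := fun z => by
    rw [Int.add_mul_ediv_left _ _ hy0, Int.ediv_eq_zero_of_lt ha hay, zero_add]
  simp only [progressionMax, hmod, hdiv, Function.comp_apply, Equiv.subRight_apply,
    add_sub_right_comm a]
  have hinj : Function.Injective fun z : ℤ => a - c + y * z := fun z z' h => by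
    simpa [hy.ne'] using h
  exact hC _ (admissible_progressionWeight y) β K _ (hg.preimage hinj.injOn)

theorem sum_inv_scale_mul_le (K : ℕ) :
    ∑ k ∈ range K, (scale k : ℝ≥0)⁻¹ * (40 * 2 ^ (10 * (k + 1))) ≤ 40 * 2 ^ 11 := by
  have hterm : ∀ k, ((scale k : ℝ)⁻¹ * (40 * 2 ^ (10 * (k + 1)))) ≤ 40 * 2 ^ 10 * (1 / 2) ^ k := by
    intro k
    rw [inv_mul_le_iff₀ (cast_scale_pos k), one_div, inv_pow]
    calc (40 : ℝ) * 2 ^ (10 * (k + 1)) ≤ 40 * 2 ^ 10 * 2 ^ (15 * k) := by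
          rw [mul_assoc, ← pow_add]
          gcongr
          · exact one_le_two
          · lia
      _ = scale k * (40 * 2 ^ 10 * (2 ^ k)⁻¹) := by
          have hscale : (scale k : ℝ) = 2 ^ (15 * k) * 2 ^ k := by
            rw [scale, ← pow_add]
            push_cast
            ring
          rw [hscale]
          field_simp
  rw [← NNReal.coe_le_coe]
  push_cast
  calc ∑ k ∈ range K, (scale k : ℝ)⁻¹ * (40 * 2 ^ (10 * (k + 1)))
      ≤ ∑ k ∈ range K, 40 * 2 ^ 10 * (1 / 2 : ℝ) ^ k := sum_le_sum fun k _ => hterm k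
    _ = 40 * 2 ^ 10 * ∑ k ∈ range K, (1 / 2 : ℝ) ^ k := (mul_sum ..).symm
    _ ≤ 40 * 2 ^ 10 * 2 := by
        gcongr
        exact sum_geometric_two_le K
    _ = 40 * 2 ^ 11 := by norm_num

theorem ellNorm_sum_exceptionalConv_le {r : ℝ} (hr : 1 ≤ r) (K : ℕ) (g : ℤ → ℝ≥0) :
    ellNorm r (fun x => ∑ k ∈ range K, (scale k : ℝ≥0)⁻¹ * exceptionalConv (k + 1) g x) ≤
      ((40 * 2 ^ 11 : ℝ≥0) : ℝ≥0∞) * ellNorm r g := by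
  refine (ellNorm_sum_le hr _ _).trans ?_
  simp_rw [ellNorm_const_mul (zero_lt_one.trans_le hr)]
  calc ∑ k ∈ range K, (((scale k : ℝ≥0)⁻¹ : ℝ≥0) : ℝ≥0∞) * ellNorm r (exceptionalConv (k + 1) g)
      ≤ ∑ k ∈ range K, (((scale k : ℝ≥0)⁻¹ : ℝ≥0) : ℝ≥0∞) *
          (((40 * 2 ^ (10 * (k + 1)) : ℝ≥0) : ℝ≥0∞) * ellNorm r g) := by
        gcongr with k
        exact ellNorm_exceptionalConv_le hr (k + 1) g
    _ = ((∑ k ∈ range K, (scale k : ℝ≥0)⁻¹ * (40 * 2 ^ (10 * (k + 1))) : ℝ≥0) : ℝ≥0∞) *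
          ellNorm r g := by
        rw [ENNReal.ofNNReal_finsetSum, sum_mul]
        simp_rw [ENNReal.coe_mul (_⁻¹), mul_assoc]
    _ ≤ _ := by
        gcongr
        exact sum_inv_scale_mul_le K

theorem exists_strongType_primeMax {r : ℝ} (hr : 1 < r) :
    ∃ C : ℝ≥0, ∀ y : ℕ, 0 < y → ∀ c N₁, StrongType (primeMax (y * scale y) N₁ y c) r C := by
  have hr0 : 0 < r := zero_lt_one.trans hr
  obtain ⟨C, hC⟩ := exists_strongType_progressionMax hr
  refine ⟨17 * 2 ^ 16 * C + 40 * 2 ^ 11, fun y hy c K g hg => ?_⟩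
  obtain ⟨β, hβ⟩ := exists_isSieveShift y (2 ^ K) c
  refine (ellNorm_mono hr0 (primeMax_le hy hβ g)).trans ((ellNorm_add_le hr.le _ _).trans ?_)
  rw [ellNorm_const_mul hr0, ENNReal.coe_add, ENNReal.coe_mul _ C, add_mul, mul_assoc]
  gcongr
  · exact hC y hy K c β g hg
  · exact ellNorm_sum_exceptionalConv_le hr.le K g

end PrimeMax

section Transference

variable {N₀ N₁ y : ℕ} {b : ℤ} {r : ℝ} {C : ℝ≥0}

theorem nnnorm_pavg_le_primeAvg {N : ℕ} {f : ℤ → ℂ} {g : ℤ → ℝ≥0} {x : ℤ}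
    (h : ∀ n < N, ‖f (x - n)‖₊ ≤ g (x - n)) : ‖pavg N y b f x‖₊ ≤ primeAvg N y (b % y) g x := by
  rw [← NNReal.coe_le_coe, coe_nnnorm, coe_primeAvg, pavg, norm_mul, norm_div,
    Complex.norm_natCast, Complex.norm_natCast]
  gcongr
  refine (norm_sum_le _ _).trans (sum_le_sum fun n hn => ?_)
  rw [norm_mul, Complex.norm_real, Real.norm_of_nonneg ArithmeticFunction.vonMangoldt_nonneg]
  exact mul_le_mul_of_nonneg_left (h n (mem_progression.1 hn).1)
    ArithmeticFunction.vonMangoldt_nonneg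

-- A maximal function over lengths below `N₁` only sees `f` on a finite set when `x` runs over one.
theorem sum_sup_nnnorm_pavg_le (hr : 0 < r)
    (h : ∀ N₁, StrongType (primeMax N₀ N₁ y (b % y)) r C) (f : ℤ → ℂ) (X : Finset ℤ) (N₁ : ℕ) :
    ∑ x ∈ X, (((Ioo N₀ N₁).sup fun N => ‖pavg N y b f x‖₊ : ℝ≥0) : ℝ≥0∞) ^ r ≤
      (C * ellNorm r fun x => ‖f x‖₊) ^ r := by
  set F : Finset ℤ := (X ×ˢ range N₁).image fun p => p.1 - p.2
  set g : ℤ → ℝ≥0 := (F : Set ℤ).indicator fun x => ‖f x‖₊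
  have hdom : ∀ x ∈ X, ((Ioo N₀ N₁).sup fun N => ‖pavg N y b f x‖₊) ≤
      primeMax N₀ N₁ y (b % y) g x := by
    refine fun x hx => sup_mono_fun fun N hN => nnnorm_pavg_le_primeAvg fun n hn => ?_
    have hxn : x - n ∈ F := mem_image.2
      ⟨(x, n), mem_product.2 ⟨hx, mem_range.2 (hn.trans (mem_Ioo.1 hN).2)⟩, rfl⟩
    exact (Set.indicator_of_mem (mem_coe.2 hxn) fun x => ‖f x‖₊).ge
  calc ∑ x ∈ X, (((Ioo N₀ N₁).sup fun N => ‖pavg N y b f x‖₊ : ℝ≥0) : ℝ≥0∞) ^ r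
      ≤ ∑ x ∈ X, (primeMax N₀ N₁ y (b % y) g x : ℝ≥0∞) ^ r := by
        gcongr with x hx
        exact hdom x hx
    _ ≤ ∑' x, (primeMax N₀ N₁ y (b % y) g x : ℝ≥0∞) ^ r := ENNReal.sum_le_tsum _
    _ = ellNorm r (primeMax N₀ N₁ y (b % y) g) ^ r := (ellNorm_rpow hr _).symm
    _ ≤ (C * ellNorm r fun x => ‖f x‖₊) ^ r := by
        have hsupp : g.support.Finite := F.finite_toSet.subset Set.support_indicator_subset
        refine ENNReal.rpow_le_rpow ((h N₁ g hsupp).trans ?_) hr.le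
        gcongr
        exact ellNorm_mono hr fun x => Set.indicator_le_self _ _ x

theorem iSup_nnnorm_eq_iSup_sup_Ioo (N₀ : ℕ) (a : ℕ → ℂ) :
    (⨆ (N : ℕ) (_ : N₀ < N), (‖a N‖₊ : ℝ≥0∞)) =
      ⨆ N₁ : ℕ, (((Ioo N₀ N₁).sup fun N => ‖a N‖₊ : ℝ≥0) : ℝ≥0∞) := by
  refine le_antisymm (iSup₂_le fun N hN => ?_) (iSup_le fun N₁ => ?_)
  · exact le_iSup_of_le (N + 1) (ENNReal.coe_le_coe.2
      (le_sup (f := fun N => ‖a N‖₊) (mem_Ioo.2 ⟨hN, N.lt_succ_self⟩)))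
  · rw [ENNReal.coe_finset_sup]
    exact Finset.sup_le fun N hN =>
      le_iSup₂_of_le (f := fun N (_ : N₀ < N) => (‖a N‖₊ : ℝ≥0∞)) N (mem_Ioo.1 hN).1 le_rfl

theorem tsum_iSup_nnnorm_pavg_le (hr : 0 < r)
    (h : ∀ N₁, StrongType (primeMax N₀ N₁ y (b % y)) r C) (f : ℤ → ℂ) :
    ∑' x : ℤ, (⨆ (N : ℕ) (_ : N₀ < N), (‖pavg N y b f x‖₊ : ℝ≥0∞)) ^ r ≤
      (C * ellNorm r fun x => ‖f x‖₊) ^ r := by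
  rw [ENNReal.tsum_eq_iSup_sum]
  refine iSup_le fun X => ?_
  have hpow : ∀ x, (⨆ (N : ℕ) (_ : N₀ < N), (‖pavg N y b f x‖₊ : ℝ≥0∞)) ^ r =
      ⨆ N₁ : ℕ, (((Ioo N₀ N₁).sup fun N => ‖pavg N y b f x‖₊ : ℝ≥0) : ℝ≥0∞) ^ r := by
    intro x
    rw [iSup_nnnorm_eq_iSup_sup_Ioo]
    exact (ENNReal.orderIsoRpow r hr).map_iSup _
  simp_rw [hpow]
  rw [ENNReal.finsetSum_iSup_of_monotone]
  · exact iSup_le fun N₁ => sum_sup_nnnorm_pavg_le hr h f X N₁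
  · intro x m n hmn
    exact ENNReal.rpow_le_rpow (ENNReal.coe_le_coe.2 (sup_mono (Ioo_subset_Ioo_right hmn))) hr.le

end Transference

end PrimeAverage

theorem maximal_inequality_general {r : ℝ} (hr : 1 < r) :
    ∃ C : ℝ, 0 < C ∧ ∀ y : ℕ, 1 ≤ y → ∀ (b : ℤ) (f : ℤ → ℂ),
      (∑' x : ℤ,
          (⨆ (N : ℕ) (_ : y * 2 ^ (16 * y) < N), (‖pavg N y b f x‖₊ : ℝ≥0∞)) ^ r) ^ (1 / r) ≤
        ENNReal.ofReal C * (∑' x : ℤ, (‖f x‖₊ : ℝ≥0∞) ^ r) ^ (1 / r) := by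
  have hr0 : 0 < r := zero_lt_one.trans hr
  obtain ⟨C, hC⟩ := PrimeAverage.exists_strongType_primeMax hr
  refine ⟨C + 1, by positivity, fun y hy b f => ?_⟩
  have hle := PrimeAverage.tsum_iSup_nnnorm_pavg_le hr0 (hC y hy (b % y)) f
  refine (ENNReal.rpow_le_rpow hle (by positivity)).trans ?_
  rw [← ENNReal.rpow_mul, mul_one_div_cancel hr0.ne', ENNReal.rpow_one]
  refine mul_le_mul_left ?_ _
  rw [← ENNReal.ofReal_coe_nnreal]
  exact ENNReal.ofReal_le_ofReal (by linarith)

theorem maximal_inequality :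
    ∀ r : ℝ, 1 < r →
      ∃ C : ℝ, 0 < C ∧
        ∀ y : ℕ, 1 ≤ y →
          ∃ N0 : ℕ, 0 < N0 ∧
            ∀ b : ℤ, Int.gcd b y = 1 →
              ∀ f : ℤ → ℂ,
                (∑' x : ℤ,
                    (⨆ (N : ℕ) (_ : N0 < N), (‖pavg N y b f x‖₊ : ℝ≥0∞)) ^ r) ^ (1 / r) ≤
                  ENNReal.ofReal C * (∑' x : ℤ, (‖f x‖₊ : ℝ≥0∞) ^ r) ^ (1 / r) := by
  intro r hr
  obtain ⟨C, hC, h⟩ := maximal_inequality_general hr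
  exact ⟨C, hC, fun y hy => ⟨y * 2 ^ (16 * y), by positivity, fun b _ => h y hy b⟩⟩

end
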